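/- arXiv:2005.00243 — 2 statements merged into one kernel-verified Lean document; each statement's English description precedes it below -/
import Mathlib

section
/- Let K ∈ ℝ, N > 1, let (X,d,m) be an essentially non-branching metric measure space with m(X) = 1 and supp m = X satisfying CD₁(K,N), let u : X → ℝ be 1-Lipschitz, and assume given a quotient map, disintegration and ray map for R_u^b as in the ray-map setting, with each density h_α continuous and strictly positive in the interior of its domain interval. Then for q-a.e. α ∈ Q the one-dimensional metric measure space (X_α, d, m_α) satisfies CD(K,N); equivalently, identifying X_α with the interval [0,L_α] of the same length via g(α,·), for q-a.e. α the density h_α satisfies h_α((1−t)R0 + tR1)^{1/(N−1)} ≥ σ^{(1−t)}_{K,N−1}(R1−R0)·h_α(R0)^{1/(N−1)} + σ^{(t)}_{K,N−1}(R1−R0)·h_α(R1)^{1/(N−1)} for all 0 ≤ R0 ≤ R1 ≤ L_α and all t ∈ [0,1]. -/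
/-!
The proof localises the `CD₁(K,N)` inequality to the rays of `u`.

*From `CD₁` to rays.* Along a ray the function `-u` is an arclength coordinate. Given two intervals
of values of `-u`, the second one to the right of the first, and a Borel set `B` of quotient points,
unit mass is distributed evenly over the rays of `B`, and on each ray according to the conditional
measure restricted to the slab over the respective interval. Since `u` is a Kantorovich potential for
the resulting pair, the geodesics of the plan provided by `CD₁` have endpoints in `Γ_u`, and as these
endpoints lie in `T_u^b` each geodesic stays in a single ray. The intermediate measure thus sits on
the interpolated slab and has the same mass on each ray as the marginals, so Hölder's inequality
bounds its Rényi entropy by the conditional measure of the interpolated slab (`transport_ineq`).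
As `B` is arbitrary, almost every conditional measure satisfies a distorted Brunn–Minkowski
inequality for intervals with rational parameters (`IntervalIneq`, `ae_intervalIneq`).

*On one ray.* Shrinking the two intervals to points `x₀`, `x₁`, with lengths in a prescribed ratio
`d₀ : d₁`, gives
`τ^{(1-t)} (h(x₀) d₀)^{1/N'} + τ^{(t)} (h(x₁) d₁)^{1/N'} ≤ (h(x_t) ((1-t) d₀ + t d₁))^{1/N'}`
(`key_of_intervalIneq`, `key_full`). Choosing `d₀`, `d₁` optimally yields the `σ`-concavity of the
density in the interior (`density_interior`), and continuity extends it to the endpoints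
(`density_full`). Applying the same inequality along the monotone rearrangement, with `d₀`, `d₁` the
derivatives of the quantile functions of the marginals, and integrating yields `CD(K,N)` on the ray
(`cd_of_key`); the monotone rearrangement is optimal for the quadratic cost by a layer-cake
computation (`wcost_comonotone`).

Neither `T_u^b` nor `Q` is assumed measurable. Both are handled through universal measurability of
analytic sets, and the conditional measures are replaced by a Markov kernel (`exists_kernel`).
-/

open MeasureTheory Set ENNReal

noncomputable section

namespace CDNote

section Sets
variable {X : Type*} [MetricSpace X]

/-- A constant speed geodesic, as a continuous map from `[0,1]`. -/
def IsCSG (γ : C(unitInterval, X)) : Prop :=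
  ∀ s t : unitInterval, dist (γ s) (γ t) = |(s : ℝ) - (t : ℝ)| * dist (γ 0) (γ 1)

/-- The set `Γ_u` associated to a `1`-Lipschitz function `u`. -/
def Gamma (u : X → ℝ) : Set (X × X) := {p | u p.1 - u p.2 = dist p.1 p.2}

/-- The set `Γ_u⁻¹`. -/
def GammaInv (u : X → ℝ) : Set (X × X) := {p | (p.2, p.1) ∈ Gamma u}

/-- The transport relation `R_u = Γ_u ∪ Γ_u⁻¹`. -/
def Ru (u : X → ℝ) : Set (X × X) := Gamma u ∪ GammaInv u

/-- The transport set `T_u = P₁(R_u \ {x = y})`. -/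
def Tu (u : X → ℝ) : Set X := {x | ∃ y, (x, y) ∈ Ru u ∧ y ≠ x}

/-- The set of forward branching points `A_{+,u}`. -/
def Aplus (u : X → ℝ) : Set X :=
  {x | x ∈ Tu u ∧ ∃ z w, (x, z) ∈ Gamma u ∧ (x, w) ∈ Gamma u ∧ (z, w) ∉ Ru u}

/-- The set of backward branching points `A_{-,u}`. -/
def Aminus (u : X → ℝ) : Set X :=
  {x | x ∈ Tu u ∧ ∃ z w, (z, x) ∈ Gamma u ∧ (w, x) ∈ Gamma u ∧ (z, w) ∉ Ru u}

/-- The non-branched transport set `T_u^b = T_u \ (A_{+,u} ∪ A_{-,u})`. -/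
def Tub (u : X → ℝ) : Set X := Tu u \ (Aplus u ∪ Aminus u)

/-- The non-branched transport relation `R_u^b = R_u ∩ (T_u^b × T_u^b)`. -/
def Rub (u : X → ℝ) : Set (X × X) := Ru u ∩ (Tub u) ×ˢ (Tub u)

/-- A closed non-null ray for `u`: the image of a curve parametrized by arclength on a closed
nondegenerate interval, along which `u` is affine with slope `-1`. -/
def IsRay (u : X → ℝ) (S : Set X) : Prop :=
  ∃ (I : Set ℝ) (γ : ℝ → X),
    IsClosed I ∧ I.OrdConnected ∧ (∃ a ∈ I, ∃ b ∈ I, a < b) ∧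
    S = γ '' I ∧
    (∀ s ∈ I, ∀ t ∈ I, dist (γ s) (γ t) = |s - t|) ∧
    (∀ s ∈ I, ∀ t ∈ I, u (γ s) - u (γ t) = t - s)

/-- A transport ray of `Γ_u`: a ray that is maximal with respect to inclusion. -/
def IsTransportRay (u : X → ℝ) (S : Set X) : Prop :=
  IsRay u S ∧ ∀ S' : Set X, IsRay u S' → S ⊆ S' → S' = S

end Sets

section MMS
variable {X : Type*} [MetricSpace X] [MeasurableSpace X]

/-- `π` is a coupling of `μ` and `ν`. -/
def IsCoupling (π : Measure (X × X)) (μ ν : Measure X) : Prop :=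
  π.map Prod.fst = μ ∧ π.map Prod.snd = ν

/-- The infimal `p`-th power transport cost between two measures. -/
def Wcost (p : ℝ) (μ ν : Measure X) : ℝ≥0∞ :=
  ⨅ (π : Measure (X × X)) (_ : IsCoupling π μ ν), ∫⁻ z, edist z.1 z.2 ^ p ∂π

/-- The `p`-Wasserstein distance, with values in `[0,∞]`. -/
def Wp (p : ℝ) (μ ν : Measure X) : ℝ≥0∞ := Wcost p μ ν ^ (1 / p)

/-- `μ` has finite `p`-th moment. -/
def FiniteMoment (p : ℝ) (μ : Measure X) : Prop :=
  ∃ x₀ : X, ∫⁻ x, edist x x₀ ^ p ∂μ ≠ ∞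

end MMS

/-- The distortion coefficient `σ_{K,N}^{(t)}(θ)`, valued in `[0,∞]`. -/
def sigmaCoef (K N t θ : ℝ) : ℝ≥0∞ :=
  if N * Real.pi ^ 2 ≤ K * θ ^ 2 then ∞
  else if 0 < K * θ ^ 2 then
    ENNReal.ofReal (Real.sin (t * θ * Real.sqrt (K / N)) / Real.sin (θ * Real.sqrt (K / N)))
  else if K * θ ^ 2 = 0 then ENNReal.ofReal t
  else ENNReal.ofReal (Real.sinh (t * θ * Real.sqrt (-K / N)) / Real.sinh (θ * Real.sqrt (-K / N)))

/-- The distortion coefficient `τ_{K,N}^{(t)}(θ) = t^{1/N} · σ_{K,N-1}^{(t)}(θ)^{1-1/N}` (`N > 1`). -/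
def tauCoef (K N t θ : ℝ) : ℝ≥0∞ :=
  ENNReal.ofReal (t ^ (1 / N)) * sigmaCoef K (N - 1) t θ ^ (1 - 1 / N)

section CD
variable {X : Type*} [MetricSpace X] [MeasurableSpace X]

/-- The convexity inequality for the `N'`-Rényi entropy at time `t` along a coupling `π`:
`S_{N'}(μ_t|m) ≤ -∫ [τ^{(1-t)}(d(x,y)) ρ₀(x)^{-1/N'} + τ^{(t)}(d(x,y)) ρ₁(y)^{-1/N'}] dπ`,
written with both sides negated (densities are the Radon–Nikodym derivatives of the
absolutely continuous parts). -/
def EntIneqCoupling (K N' t : ℝ) (m μ0 μ1 μt : Measure X) (π : Measure (X × X)) : Prop :=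
  ∫⁻ z, (tauCoef K N' (1 - t) (dist z.1 z.2) * (μ0.rnDeriv m z.1) ^ (-(1 / N'))
      + tauCoef K N' t (dist z.1 z.2) * (μ1.rnDeriv m z.2) ^ (-(1 / N'))) ∂π
    ≤ ∫⁻ x, (μt.rnDeriv m x) ^ (1 - 1 / N') ∂m

/-- The curvature-dimension condition `CD(K,N)` of Lott–Sturm–Villani, formulated via
displacement convexity of the Rényi entropies along `W₂`-geodesics. -/
def CD (K N : ℝ) (m : Measure X) : Prop :=
  ∀ μ0 μ1 : Measure X,
    IsProbabilityMeasure μ0 → IsProbabilityMeasure μ1 → μ0 ≪ m → μ1 ≪ m →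
    FiniteMoment 2 μ0 → FiniteMoment 2 μ1 →
    ∃ (π : Measure (X × X)) (μ : ℝ → Measure X),
      IsCoupling π μ0 μ1 ∧
      (∫⁻ z, edist z.1 z.2 ^ (2 : ℝ) ∂π) = Wcost 2 μ0 μ1 ∧
      μ 0 = μ0 ∧ μ 1 = μ1 ∧
      (∀ s ∈ Icc (0:ℝ) 1, ∀ t ∈ Icc (0:ℝ) 1,
        Wp 2 (μ s) (μ t) = ENNReal.ofReal |s - t| * Wp 2 μ0 μ1) ∧
      (∀ t ∈ Icc (0:ℝ) 1, ∀ N', N ≤ N' → EntIneqCoupling K N' t m μ0 μ1 (μ t) π)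

end CD

section Dyn
variable {X : Type*} [MetricSpace X] [MeasurableSpace X] [MeasurableSpace C(unitInterval, X)]

/-- Evaluation map `e_t`. -/
def eval (t : unitInterval) : C(unitInterval, X) → X := fun γ => γ t

/-- A set of non-branching geodesics. -/
def IsNonBranchingSet (A : Set C(unitInterval, X)) : Prop :=
  ∀ γ₁ ∈ A, ∀ γ₂ ∈ A,
    (∃ tb : ℝ, 0 < tb ∧ tb < 1 ∧ ∀ s : unitInterval, (s : ℝ) ≤ tb → γ₁ s = γ₂ s) → γ₁ = γ₂

/-- `(X,d,m)` is essentially non-branching: every optimal dynamical plan between absolutely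
continuous marginals in `P₂` is concentrated on a set of non-branching geodesics. -/
def EssentiallyNonBranching (m : Measure X) : Prop :=
  ∀ μ0 μ1 : Measure X,
    IsProbabilityMeasure μ0 → IsProbabilityMeasure μ1 → μ0 ≪ m → μ1 ≪ m →
    FiniteMoment 2 μ0 → FiniteMoment 2 μ1 →
    ∀ ν : Measure C(unitInterval, X), IsProbabilityMeasure ν →
      ν {γ | ¬ IsCSG γ} = 0 →
      ν.map (eval 0) = μ0 → ν.map (eval 1) = μ1 →
      (∀ s t : unitInterval,
        Wp 2 (ν.map (eval s)) (ν.map (eval t))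
          = ENNReal.ofReal |(s : ℝ) - (t : ℝ)| * Wp 2 μ0 μ1) →
      (∫⁻ γ, edist (γ 0) (γ 1) ^ (2 : ℝ) ∂ν) = Wcost 2 μ0 μ1 →
      ∃ A : Set C(unitInterval, X), IsNonBranchingSet A ∧ ν Aᶜ = 0

/-- The condition `CD₁(K,N)`: displacement convexity of the Rényi entropies along dynamical
plans concentrated on constant speed geodesics realizing the `W₁`-distance. -/
def CDone (K N : ℝ) (m : Measure X) : Prop :=
  ∀ μ0 μ1 : Measure X,
    IsProbabilityMeasure μ0 → IsProbabilityMeasure μ1 → μ0 ≪ m → μ1 ≪ m →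
    FiniteMoment 1 μ0 → FiniteMoment 1 μ1 →
    ∃ π : Measure C(unitInterval, X), IsProbabilityMeasure π ∧
      π {γ | ¬ IsCSG γ} = 0 ∧
      (∫⁻ γ, edist (γ 0) (γ 1) ∂π) = Wp 1 μ0 μ1 ∧
      π.map (eval 0) = μ0 ∧ π.map (eval 1) = μ1 ∧
      (∀ t : unitInterval, π.map (eval t) ≪ m) ∧
      (∀ t : unitInterval, ∀ N', N ≤ N' →
        ∫⁻ γ, (tauCoef K N' (1 - (t : ℝ)) (dist (γ 0) (γ 1)) * (μ0.rnDeriv m (γ 0)) ^ (-(1 / N'))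
            + tauCoef K N' (t : ℝ) (dist (γ 0) (γ 1)) * (μ1.rnDeriv m (γ 1)) ^ (-(1 / N'))) ∂π
          ≤ ∫⁻ x, ((π.map (eval t)).rnDeriv m x) ^ (1 - 1 / N') ∂m)

end Dyn

/-- The ray-map setting: an `m`-measurable quotient map `f` for the equivalence relation
`R_u^b` with quotient set `Q ⊆ T_u^b` and quotient measure `q = f_♯(m⌞T_u^b)`, a
disintegration `m⌞T_u^b = ∫_Q m_α q(dα)` with `m_α` concentrated on the ray
`X_α = R_u^b(α)`, and a Borel ray map `g(α,·)` identifying each ray with a real interval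
along which `m_α` has density `h_α` with respect to Lebesgue measure. -/
structure RaySetting {X : Type*} [MetricSpace X] [MeasurableSpace X]
    (m : Measure X) (u : X → ℝ) where
  /-- the quotient map -/
  f : X → X
  /-- the quotient set `Q ⊆ T_u^b` -/
  Q : Set X
  /-- the quotient measure -/
  q : Measure X
  /-- the ray map -/
  g : X → ℝ → X
  /-- the domain interval of the ray through `α` -/
  dom : X → Set ℝ
  /-- the densities of the conditional measures -/
  h : X → ℝ → ℝ
  /-- the conditional measures -/
  mα : X → Measure X
  hfmeas : Measurable f
  hQsub : Q ⊆ Tub u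
  hfQ : ∀ x ∈ Tub u, f x ∈ Q
  hfid : ∀ α ∈ Q, f α = α
  hfquot : ∀ x ∈ Tub u, ∀ y ∈ Tub u, (f x = f y ↔ (x, y) ∈ Rub u)
  hq : q = (m.restrict (Tub u)).map f
  hdisint : ∀ s : Set X, MeasurableSet s → m.restrict (Tub u) s = ∫⁻ α, mα α s ∂q
  hprob : ∀ᵐ α ∂q, IsProbabilityMeasure (mα α)
  hdomconn : ∀ α ∈ Q, (dom α).OrdConnected
  hgmeas : ∀ α ∈ Q, Measurable (g α)
  hgisom : ∀ α ∈ Q, ∀ s ∈ dom α, ∀ t ∈ dom α, dist (g α s) (g α t) = |s - t|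
  hggamma : ∀ α ∈ Q, ∀ s ∈ dom α, ∀ t ∈ dom α, s ≤ t → (g α s, g α t) ∈ Gamma u
  hgonto : ∀ α ∈ Q, g α '' dom α = {y | (α, y) ∈ Rub u}
  hmα : ∀ α ∈ Q, mα α =
    ((volume.restrict (dom α)).withDensity (fun r => ENNReal.ofReal (h α r))).map (g α)

/-! ### Comonotone couplings and the quadratic cost -/

/-- The layer-cake formula behind the quadratic cost: `|x - y|²` is the area of the square with
side the interval between `x` and `y`. -/
theorem ofReal_abs_sub_sq_eq (x y : ℝ) :
    ENNReal.ofReal |x - y| ^ (2 : ℝ) =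
      ∫⁻ p : ℝ × ℝ, (({p : ℝ × ℝ | x ≤ min p.1 p.2 ∧ max p.1 p.2 < y}.indicator 1 p : ℝ≥0∞)
        + {p : ℝ × ℝ | y ≤ min p.1 p.2 ∧ max p.1 p.2 < x}.indicator 1 p) := by
  have hset : ∀ a b : ℝ, {p : ℝ × ℝ | a ≤ min p.1 p.2 ∧ max p.1 p.2 < b} = Ico a b ×ˢ Ico a b := by
    intro a b
    ext p
    simp only [mem_ofPred_eq, le_min_iff, max_lt_iff, mem_prod, mem_Ico]
    tauto
  rw [hset, hset, lintegral_add_left, lintegral_indicator_one, lintegral_indicator_one,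
    Measure.volume_eq_prod, Measure.prod_prod, Measure.prod_prod]
  · simp only [Real.volume_Ico]
    rw [show (2 : ℝ) = ((2 : ℕ) : ℝ) by norm_num, ENNReal.rpow_natCast]
    rcases le_total x y with h | h
    · rw [ENNReal.ofReal_of_nonpos (p := x - y) (by linarith), abs_sub_comm,
        abs_of_nonneg (by linarith)]
      ring
    · rw [ENNReal.ofReal_of_nonpos (p := y - x) (by linarith), abs_of_nonneg (by linarith)]
      ring
  · measurability
  · measurability
  · exact (measurable_one.indicator (measurableSet_Ico.prod measurableSet_Ico))

/-- The quadratic cost of a coupling depends only on the masses of the sets where one coordinate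
is below a level and the other above a level. -/
theorem lintegral_sq_eq {Z : Type*} [MeasurableSpace Z] (P : Measure Z) [SFinite P]
    {A B : Z → ℝ} (hA : Measurable A) (hB : Measurable B) :
    ∫⁻ z, ENNReal.ofReal |A z - B z| ^ (2 : ℝ) ∂P =
      ∫⁻ p : ℝ × ℝ, (P ({z | A z ≤ min p.1 p.2} \ {z | B z ≤ max p.1 p.2})
        + P ({z | B z ≤ min p.1 p.2} \ {z | A z ≤ max p.1 p.2})) := by
  have key : ∀ {C D : Z → ℝ}, Measurable C → Measurable D → MeasurableSet
      {q : Z × (ℝ × ℝ) | C q.1 ≤ min q.2.1 q.2.2 ∧ max q.2.1 q.2.2 < D q.1} := by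
    intro C D hC hD
    have h1 : MeasurableSet {q : Z × (ℝ × ℝ) | C q.1 ≤ min q.2.1 q.2.2} :=
      measurableSet_le (by fun_prop) (by fun_prop)
    have h2 : MeasurableSet {q : Z × (ℝ × ℝ) | max q.2.1 q.2.2 < D q.1} :=
      measurableSet_lt (by fun_prop) (by fun_prop)
    exact h1.inter h2
  simp_rw [ofReal_abs_sub_sq_eq]
  rw [lintegral_lintegral_swap]
  · refine lintegral_congr fun p => ?_
    have hs : ∀ {C D : Z → ℝ}, {z | C z ≤ min p.1 p.2} \ {z | D z ≤ max p.1 p.2}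
        = {z | C z ≤ min p.1 p.2 ∧ max p.1 p.2 < D z} := by
      intro C D; ext z; simp
    have hm : ∀ {C D : Z → ℝ}, Measurable C → Measurable D →
        MeasurableSet {z | C z ≤ min p.1 p.2 ∧ max p.1 p.2 < D z} := fun hC hD =>
      (key hC hD).preimage (by fun_prop : Measurable fun z : Z => (z, p))
    rw [hs, hs, ← lintegral_indicator_one (hm hA hB), ← lintegral_indicator_one (hm hB hA),
      ← lintegral_add_left (measurable_one.indicator (hm hA hB))]
    rfl
  · refine Measurable.aemeasurable ?_
    exact (measurable_one.indicator (key hA hB)).add (measurable_one.indicator (key hB hA))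

/-- Comonotone couplings minimise the quadratic cost: the joint laws of `A, B` under `P` are
compared with those of nondecreasing functions `a, b` on a linearly ordered probability space
having the same marginals. -/
theorem lintegral_sq_mono_le {Z : Type*} [MeasurableSpace Z] (P : Measure Z) [SFinite P]
    {A B : Z → ℝ} (hA : Measurable A) (hB : Measurable B)
    (l : Measure ℝ) [IsFiniteMeasure l] {a b : ℝ → ℝ} (ha : Measurable a) (hb : Measurable b)
    {I : Set ℝ} (hI : MeasurableSet I) (hlI : l Iᶜ = 0)
    (hma : MonotoneOn a I) (hmb : MonotoneOn b I)
    (hAa : P.map A = l.map a) (hBb : P.map B = l.map b) :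
    ∫⁻ s, ENNReal.ofReal |a s - b s| ^ (2 : ℝ) ∂l ≤
      ∫⁻ z, ENNReal.ofReal |A z - B z| ^ (2 : ℝ) ∂P := by
  rw [lintegral_sq_eq P hA hB, lintegral_sq_eq l ha hb]
  -- sublevel sets of two monotone functions are nested
  have key : ∀ {c d : ℝ → ℝ} {C D : Z → ℝ}, Measurable c → Measurable d → Measurable C →
      Measurable D → MonotoneOn c I → MonotoneOn d I → P.map C = l.map c → P.map D = l.map d →
      ∀ x y : ℝ, l ({s | c s ≤ x} \ {s | d s ≤ y}) ≤ P ({z | C z ≤ x} \ {z | D z ≤ y}) := by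
    intro c d C D hc hd hC hD hmc hmd h1 h2 x y
    have e1 : P {z | C z ≤ x} = l {s | c s ≤ x} := by
      have := congrArg (fun μ : Measure ℝ => μ (Iic x)) h1
      simp only [Measure.map_apply hC measurableSet_Iic,
        Measure.map_apply hc measurableSet_Iic] at this
      exact this
    have e2 : P {z | D z ≤ y} = l {s | d s ≤ y} := by
      have := congrArg (fun μ : Measure ℝ => μ (Iic y)) h2
      simp only [Measure.map_apply hD measurableSet_Iic,
        Measure.map_apply hd measurableSet_Iic] at this
      exact this
    refine le_trans ?_ le_measure_sdiff
    rw [e1, e2]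
    have hcm : MeasurableSet {s | c s ≤ x} := measurableSet_le hc measurable_const
    have hdm : MeasurableSet {s | d s ≤ y} := measurableSet_le hd measurable_const
    by_cases hsub : {s | c s ≤ x} ∩ I ⊆ {s | d s ≤ y}
    · refine le_of_eq_of_le (measure_mono_null ?_ hlI) zero_le
      intro s hs hsI
      exact hs.2 (hsub ⟨hs.1, hsI⟩)
    · have hsub' : {s | d s ≤ y} ∩ I ⊆ {s | c s ≤ x} := by
        obtain ⟨s0, ⟨hs0, hs0I⟩, hs0'⟩ := not_subset.1 hsub
        rintro s ⟨hs, hsI⟩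
        simp only [mem_ofPred_eq, not_le] at hs hs0 hs0' ⊢
        have : s ≤ s0 := by
          by_contra hlt
          have := hmd hs0I hsI (le_of_lt (not_le.1 hlt))
          linarith
        exact (hmc hsI hs0I this).trans hs0
      have e3 : l {s | d s ≤ y} = l ({s | d s ≤ y} ∩ I) :=
        (measure_inter_conull hlI).symm
      rw [e3, ← measure_sdiff hsub' (hdm.inter hI).nullMeasurableSet (measure_ne_top _ _)]
      refine measure_mono ?_
      intro s hs
      exact ⟨hs.1, fun h => hs.2 h.1⟩
  refine lintegral_mono fun p => add_le_add ?_ ?_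
  · exact key ha hb hA hB hma hmb hAa hBb _ _
  · exact key hb ha hB hA hmb hma hBb hAa _ _

/-! ### Quantile functions -/

/-- Lebesgue measure on the open unit interval. -/
def unitLeb : Measure ℝ := volume.restrict (Ioo (0 : ℝ) 1)

instance : IsProbabilityMeasure unitLeb := ⟨by simp [unitLeb]⟩

theorem unitLeb_compl : unitLeb (Ioo (0 : ℝ) 1)ᶜ = 0 := by
  simp [unitLeb, Measure.restrict_apply measurableSet_Ioo.compl]

theorem ae_unitLeb_mem : ∀ᵐ s ∂unitLeb, s ∈ Ioo (0 : ℝ) 1 :=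
  ae_restrict_mem measurableSet_Ioo

/-- The quantile function of a probability measure on `ℝ`, set to `0` outside `(0,1)`. -/
def quantile (ν : Measure ℝ) (s : ℝ) : ℝ :=
  open Classical in
  if s ∈ Ioo (0 : ℝ) 1 then sInf {x | s ≤ ProbabilityTheory.cdf ν x} else 0

theorem quantile_le_iff (ν : Measure ℝ) {s : ℝ} (hs : s ∈ Ioo (0 : ℝ) 1) (x : ℝ) :
    quantile ν s ≤ x ↔ s ≤ ProbabilityTheory.cdf ν x := by
  have hne : {x | s ≤ ProbabilityTheory.cdf ν x}.Nonempty := by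
    have := (ProbabilityTheory.tendsto_cdf_atTop ν).eventually (lt_mem_nhds hs.2)
    obtain ⟨x, hx⟩ := this.exists
    exact ⟨x, hx.le⟩
  have hbd : BddBelow {x | s ≤ ProbabilityTheory.cdf ν x} := by
    have := (ProbabilityTheory.tendsto_cdf_atBot ν).eventually (gt_mem_nhds hs.1)
    obtain ⟨y, hy⟩ := this.exists
    refine ⟨y, fun x hx => ?_⟩
    by_contra hlt
    have := (ProbabilityTheory.monotone_cdf ν) (not_le.1 hlt).le
    exact absurd (lt_of_le_of_lt (le_trans hx this) hy) (lt_irrefl _)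
  have hq : quantile ν s = sInf {x | s ≤ ProbabilityTheory.cdf ν x} := by
    simp only [quantile]; rw [if_pos hs]
  rw [hq]
  constructor
  · intro h
    -- right-continuity of the distribution function at `x`
    have hrc : Filter.Tendsto (ProbabilityTheory.cdf ν) (nhdsWithin x (Ioi x))
        (nhds (ProbabilityTheory.cdf ν x)) :=
      ((ProbabilityTheory.cdf ν).right_continuous x).mono_left
        (nhdsWithin_mono _ Ioi_subset_Ici_self)
    refine ge_of_tendsto hrc ?_
    filter_upwards [self_mem_nhdsWithin] with y hy
    obtain ⟨z, hz, hzy⟩ := exists_lt_of_csInf_lt hne (lt_of_le_of_lt h hy)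
    exact le_trans hz (ProbabilityTheory.monotone_cdf ν hzy.le)
  · intro h
    exact csInf_le hbd h

theorem monotoneOn_quantile (ν : Measure ℝ) : MonotoneOn (quantile ν) (Ioo (0 : ℝ) 1) := by
  intro s hs s' hs' hss
  rw [quantile_le_iff ν hs]
  exact hss.trans ((quantile_le_iff ν hs' _).1 le_rfl)

theorem measurable_quantile (ν : Measure ℝ) : Measurable (quantile ν) := by
  refine measurable_of_Iic fun x => ?_
  have : quantile ν ⁻¹' Iic x = (Ioo (0 : ℝ) 1 ∩ Iic (ProbabilityTheory.cdf ν x)) ∪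
      ((Ioo (0 : ℝ) 1)ᶜ ∩ {_s : ℝ | 0 ≤ x}) := by
    ext s
    by_cases hs : s ∈ Ioo (0 : ℝ) 1
    · simp [hs, quantile_le_iff ν hs]
    · have : quantile ν s = 0 := by simp only [quantile]; rw [if_neg hs]
      have h2 : s ∉ Ioo (0 : ℝ) 1 ∩ Iic (ProbabilityTheory.cdf ν x) := fun h => hs h.1
      rw [mem_union, mem_inter_iff _ (Ioo (0 : ℝ) 1)ᶜ, mem_compl_iff]
      simp only [hs, h2, mem_preimage, this, mem_Iic, mem_ofPred_eq, not_false_eq_true,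
        true_and, false_or]
  rw [this]
  exact (measurableSet_Ioo.inter measurableSet_Iic).union
    (measurableSet_Ioo.compl.inter (MeasurableSet.const _))

theorem map_quantile (ν : Measure ℝ) [IsProbabilityMeasure ν] :
    unitLeb.map (quantile ν) = ν := by
  have : IsProbabilityMeasure (unitLeb.map (quantile ν)) :=
    Measure.isProbabilityMeasure_map (measurable_quantile ν).aemeasurable
  refine Measure.ext_of_Iic _ _ fun x => ?_
  rw [Measure.map_apply (measurable_quantile ν) measurableSet_Iic, unitLeb,
    Measure.restrict_apply ((measurable_quantile ν) measurableSet_Iic)]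
  have h0 := ProbabilityTheory.cdf_nonneg ν x
  have h1 := ProbabilityTheory.cdf_le_one ν x
  have e : quantile ν ⁻¹' Iic x ∩ Ioo 0 1 = Ioo 0 1 ∩ Iic (ProbabilityTheory.cdf ν x) := by
    ext s
    constructor
    · rintro ⟨h, hs⟩; exact ⟨hs, (quantile_le_iff ν hs x).1 h⟩
    · rintro ⟨hs, h⟩; exact ⟨(quantile_le_iff ν hs x).2 h, hs⟩
  rw [e]
  have e2 : volume (Ioo (0:ℝ) 1 ∩ Iic (ProbabilityTheory.cdf ν x))
      = ENNReal.ofReal (ProbabilityTheory.cdf ν x) := by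
    apply le_antisymm
    · calc _ ≤ volume (Ioc (0:ℝ) (ProbabilityTheory.cdf ν x)) :=
            measure_mono fun s hs => ⟨hs.1.1, hs.2⟩
        _ = _ := by simp
    · calc _ = volume (Ioo (0:ℝ) (ProbabilityTheory.cdf ν x)) := by simp
        _ ≤ volume (Ioo (0:ℝ) 1 ∩ Iic (ProbabilityTheory.cdf ν x)) :=
            measure_mono fun s hs => ⟨⟨hs.1, hs.2.trans_le h1⟩, hs.2.le⟩
  rw [e2, ProbabilityTheory.ofReal_cdf]

/-- An interval of constancy would produce an atom of the push-forward. -/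
theorem strictMonoOn_of_map_ac {T : ℝ → ℝ} (hT : Measurable T)
    (hm : MonotoneOn T (Ioo (0 : ℝ) 1)) (hac : unitLeb.map T ≪ volume) :
    StrictMonoOn T (Ioo (0 : ℝ) 1) := by
  intro s hs s' hs' hss
  refine lt_of_le_of_ne (hm hs hs' hss.le) fun heq => ?_
  have h0 : unitLeb.map T {T s} = 0 := hac (by simp)
  rw [Measure.map_apply hT (measurableSet_singleton _), unitLeb,
    Measure.restrict_apply (hT (measurableSet_singleton _))] at h0
  have : volume (Icc s s') ≤ 0 := by
    rw [← h0]
    refine measure_mono fun r hr => ?_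
    have hr1 : r ∈ Ioo (0 : ℝ) 1 := ⟨hs.1.trans_le hr.1, hr.2.trans_lt hs'.2⟩
    exact ⟨le_antisymm (heq ▸ hm hr1 hs' hr.2) (hm hs hr1 hr.1), hr1⟩
  simp only [Real.volume_Icc, nonpos_iff_eq_zero, ENNReal.ofReal_eq_zero] at this
  linarith

/-- The one-dimensional Monge–Ampère equation for a monotone parametrization `T` of an
absolutely continuous law: the density at `T s` is the inverse of `T' s`. -/
theorem ae_deriv_mul_density {T : ℝ → ℝ} (hT : Measurable T)
    (hm : MonotoneOn T (Ioo (0 : ℝ) 1)) (hac : unitLeb.map T ≪ volume) :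
    ∀ᵐ s ∂unitLeb, ∃ d : ℝ, HasDerivAt T d s ∧
      ((unitLeb.map T).rnDeriv volume (T s)).toReal * d = 1 := by
  have hpr : IsProbabilityMeasure (unitLeb.map T) :=
    Measure.isProbabilityMeasure_map hT.aemeasurable
  have hst := strictMonoOn_of_map_ac hT hm hac
  have hcdf : ∀ s ∈ Ioo (0 : ℝ) 1, ProbabilityTheory.cdf (unitLeb.map T) (T s) = s := by
    intro s hs
    have h1 : (unitLeb.map T) (Iic (T s)) = ENNReal.ofReal s := by
      rw [Measure.map_apply hT measurableSet_Iic, unitLeb,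
        Measure.restrict_apply (hT measurableSet_Iic)]
      have : T ⁻¹' Iic (T s) ∩ Ioo 0 1 = Ioc 0 s := by
        ext r
        constructor
        · rintro ⟨h, hr⟩
          exact ⟨hr.1, (hst.le_iff_le hr hs).1 h⟩
        · rintro ⟨h, hr⟩
          have hr1 : r ∈ Ioo (0 : ℝ) 1 := ⟨h, hr.trans_lt hs.2⟩
          exact ⟨hm hr1 hs hr, hr1⟩
      rw [this]; simp
    rw [ProbabilityTheory.cdf_eq_real, Measure.real, h1, ENNReal.toReal_ofReal hs.1.le]
  have hd : ∀ᵐ s ∂unitLeb, DifferentiableAt ℝ T s := by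
    have := hm.ae_differentiableWithinAt measurableSet_Ioo
    filter_upwards [this, ae_unitLeb_mem] with s hs hs1
    exact hs.differentiableAt (Ioo_mem_nhds hs1.1 hs1.2)
  have hF : ∀ᵐ s ∂unitLeb, HasDerivAt (ProbabilityTheory.cdf (unitLeb.map T))
      ((unitLeb.map T).rnDeriv volume (T s)).toReal (T s) := by
    have h1 := (ProbabilityTheory.cdf (unitLeb.map T)).ae_hasDerivAt
    rw [ProbabilityTheory.measure_cdf] at h1
    exact ae_of_ae_map hT.aemeasurable (hac.ae_le h1)
  filter_upwards [hd, hF, ae_unitLeb_mem] with s h1 h2 h3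
  refine ⟨deriv T s, h1.hasDerivAt, ?_⟩
  have h4 := h2.comp s h1.hasDerivAt
  have h5 : HasDerivAt (ProbabilityTheory.cdf (unitLeb.map T) ∘ T) 1 s := by
    refine (hasDerivAt_id s).congr_of_eventuallyEq ?_
    filter_upwards [Ioo_mem_nhds h3.1 h3.2] with r hr
    exact hcdf r hr
  exact h4.unique h5

/-- By the area formula, the preimage of a null set under a map with almost everywhere positive
derivative is null. -/
theorem map_ac_of_deriv_pos {T : ℝ → ℝ} (hT : Measurable T)
    (hst : StrictMonoOn T (Ioo (0 : ℝ) 1))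
    (hd : ∀ᵐ s ∂unitLeb, ∃ d : ℝ, HasDerivAt T d s ∧ 0 < d) :
    unitLeb.map T ≪ volume := by
  refine Measure.AbsolutelyContinuous.mk fun B hB hB0 => ?_
  rw [Measure.map_apply hT hB]
  set G : Set ℝ := {s | DifferentiableAt ℝ T s} ∩ Ioo 0 1 ∩ T ⁻¹' B with hG
  have hGm : MeasurableSet G :=
    ((measurableSet_of_differentiableAt ℝ T).inter measurableSet_Ioo).inter (hT hB)
  have h1 := lintegral_image_eq_lintegral_abs_deriv_mul hGm
    (fun x hx => (hx.1.1 : DifferentiableAt ℝ T x).hasDerivAt.hasDerivWithinAt)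
    (hst.injOn.mono fun x hx => hx.1.2) 1
  have h2 : volume (T '' G) = 0 := by
    refine measure_mono_null ?_ hB0
    rintro _ ⟨s, hs, rfl⟩; exact hs.2
  simp only [Pi.one_apply, setLIntegral_one, mul_one, h2] at h1
  have h1 := (lintegral_eq_zero_iff (by fun_prop)).1 h1.symm
  have h3 : ∀ᵐ s ∂volume, s ∈ Ioo (0:ℝ) 1 → ∃ d : ℝ, HasDerivAt T d s ∧ 0 < d :=
    (ae_restrict_iff' measurableSet_Ioo).1 hd
  have h4 := (ae_restrict_iff' hGm).1 h1
  rw [unitLeb, Measure.restrict_apply (hT hB)]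
  have h5 : ∀ᵐ s ∂volume, s ∉ T ⁻¹' B ∩ Ioo 0 1 := by
    filter_upwards [h3, h4] with s h3 h4 hs
    obtain ⟨d, hd, hpos⟩ := h3 hs.2
    have := h4 ⟨⟨hd.differentiableAt, hs.2⟩, hs.1⟩
    rw [hd.deriv] at this
    simp at this
    linarith
  exact measure_eq_zero_iff_ae_notMem.2 h5

/-! ### `CD(K,N)` on one-dimensional spaces -/

section OneDim
variable {Y : Type*} [MetricSpace Y] [MeasurableSpace Y] [BorelSpace Y]

/-- Pointwise form of the change of variables on a one-dimensional space: `φ` is a coordinate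
with inverse `ψ`, the reference measure has density `w = h > 0` on `O`, and `T` is a monotone
parametrization of `μ`. -/
theorem ae_rnDeriv_eq_inv {mY : Measure Y} [IsFiniteMeasure mY] {φ : Y → ℝ} {ψ : ℝ → Y}
    (hφ : Measurable φ) (hψ : Measurable ψ) (hψφ : ∀ y, ψ (φ y) = y)
    {w : ℝ → ℝ≥0∞} (hw : Measurable w) (hmap : mY.map φ = volume.withDensity w)
    {O : Set ℝ} {h : ℝ → ℝ} (hwO : ∀ x ∈ O, w x = ENNReal.ofReal (h x)) (hpos : ∀ x ∈ O, 0 < h x)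
    {μ : Measure Y} [IsProbabilityMeasure μ] (hμ : μ ≪ mY) {T : ℝ → ℝ} (hT : Measurable T)
    (hTm : MonotoneOn T (Ioo (0 : ℝ) 1)) (hTμ : unitLeb.map T = μ.map φ)
    (hTO : ∀ᵐ s ∂unitLeb, T s ∈ O) :
    ∀ᵐ s ∂unitLeb, ∃ d : ℝ, 0 < d ∧ HasDerivAt T d s ∧
      μ.rnDeriv mY (ψ (T s)) = (ENNReal.ofReal (h (T s) * d))⁻¹ := by
  have hdens : μ.map φ = volume.withDensity (fun x => w x * μ.rnDeriv mY (ψ x)) := by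
    ext A hA
    rw [Measure.map_apply hφ hA, withDensity_apply _ hA]
    conv_lhs => rw [← Measure.withDensity_rnDeriv_eq μ mY hμ]
    rw [withDensity_apply _ (hφ hA)]
    have h1 : ∫⁻ y in φ ⁻¹' A, μ.rnDeriv mY y ∂mY
        = ∫⁻ y in φ ⁻¹' A, μ.rnDeriv mY (ψ (φ y)) ∂mY := by simp_rw [hψφ]
    have hm : Measurable fun x => μ.rnDeriv mY (ψ x) := (Measure.measurable_rnDeriv _ _).comp hψ
    rw [h1, ← setLIntegral_map hA hm hφ, hmap,
      setLIntegral_withDensity_eq_setLIntegral_mul _ hw hm hA]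
    rfl
  have hac : unitLeb.map T ≪ volume := by
    rw [hTμ, hdens]; exact withDensity_absolutelyContinuous _ _
  have hrn : (unitLeb.map T).rnDeriv volume =ᵐ[volume] fun x => w x * μ.rnDeriv mY (ψ x) := by
    rw [hTμ, hdens]
    exact Measure.rnDeriv_withDensity _ (hw.mul ((Measure.measurable_rnDeriv _ _).comp hψ))
  have hrn' := ae_of_ae_map hT.aemeasurable (hac.ae_le hrn)
  filter_upwards [ae_deriv_mul_density hT hTm hac, hrn', hTO] with s ⟨d, hd, hd1⟩ h2 h3
  rw [h2, hwO _ h3, ENNReal.toReal_mul, ENNReal.toReal_ofReal (hpos _ h3).le] at hd1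
  set r := μ.rnDeriv mY (ψ (T s)) with hr
  have hh := hpos _ h3
  have hr0 : 0 ≤ r.toReal := ENNReal.toReal_nonneg
  have hrne : r.toReal ≠ 0 := by
    intro h0; rw [h0] at hd1; simp at hd1
  have hrpos : 0 < r.toReal := lt_of_le_of_ne hr0 hrne.symm
  have hdpos : 0 < d := by
    by_contra hneg
    have : h (T s) * r.toReal * d ≤ 0 := mul_nonpos_of_nonneg_of_nonpos (by positivity) (by linarith)
    linarith
  refine ⟨d, hdpos, hd, ?_⟩
  rw [← ENNReal.ofReal_inv_of_pos (by positivity),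
    ← ENNReal.ofReal_toReal (show r ≠ ∞ from fun h => hrne (by simp [h]))]
  congr 1
  field_simp
  linarith

/-- The comonotone coupling is optimal for the quadratic cost on a space isometric to a subset of
the line. -/
theorem wcost_comonotone {φ : Y → ℝ} {ψ : ℝ → Y} (hφ : Isometry φ) (hψ : Measurable ψ)
    {O : Set ℝ} (hφψ : ∀ x ∈ O, φ (ψ x) = x)
    {S T : ℝ → ℝ} (hS : Measurable S) (hT : Measurable T)
    (hSm : MonotoneOn S (Ioo (0 : ℝ) 1)) (hTm : MonotoneOn T (Ioo (0 : ℝ) 1))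
    (hSO : ∀ᵐ s ∂unitLeb, S s ∈ O) (hTO : ∀ᵐ s ∂unitLeb, T s ∈ O) :
    (∫⁻ z, edist z.1 z.2 ^ (2 : ℝ) ∂(unitLeb.map fun s => (ψ (S s), ψ (T s))))
        = ∫⁻ s, ENNReal.ofReal |S s - T s| ^ (2 : ℝ) ∂unitLeb ∧
      Wcost 2 (unitLeb.map fun s => ψ (S s)) (unitLeb.map fun s => ψ (T s))
        = ∫⁻ s, ENNReal.ofReal |S s - T s| ^ (2 : ℝ) ∂unitLeb := by
  have hφm : Measurable φ := hφ.continuous.measurable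
  have hed : ∀ y z : Y, edist y z = ENNReal.ofReal |φ y - φ z| := by
    intro y z
    rw [← hφ.edist_eq, edist_dist, Real.dist_eq]
  have : SecondCountableTopology Y := hφ.isEmbedding.secondCountableTopology
  have h1 : (∫⁻ z, edist z.1 z.2 ^ (2 : ℝ) ∂(unitLeb.map fun s => (ψ (S s), ψ (T s))))
        = ∫⁻ s, ENNReal.ofReal |S s - T s| ^ (2 : ℝ) ∂unitLeb := by
    rw [lintegral_map (by fun_prop) (by fun_prop)]
    refine lintegral_congr_ae ?_
    filter_upwards [hSO, hTO] with s hs ht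
    simp only [hed, hφψ _ hs, hφψ _ ht]
  refine ⟨h1, le_antisymm ?_ ?_⟩
  · rw [← h1]
    refine iInf₂_le (unitLeb.map fun s => (ψ (S s), ψ (T s))) ⟨?_, ?_⟩
    · rw [Measure.map_map (by fun_prop) (by fun_prop)]; rfl
    · rw [Measure.map_map (by fun_prop) (by fun_prop)]; rfl
  · refine le_iInf₂ fun π hπ => ?_
    have hfin : IsFiniteMeasure π := by
      constructor
      have : π univ = (π.map Prod.fst) univ := by
        rw [Measure.map_apply measurable_fst MeasurableSet.univ, preimage_univ]
      rw [this, hπ.1]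
      have : IsProbabilityMeasure (unitLeb.map fun s => ψ (S s)) :=
        Measure.isProbabilityMeasure_map (by fun_prop)
      exact measure_lt_top _ _
    simp_rw [hed]
    refine lintegral_sq_mono_le π (A := fun z => φ z.1) (B := fun z => φ z.2) (by fun_prop)
      (by fun_prop) unitLeb hS hT measurableSet_Ioo unitLeb_compl hSm hTm ?_ ?_
    · have : π.map (fun z => φ z.1) = (π.map Prod.fst).map φ := by
        rw [Measure.map_map (by fun_prop) (by fun_prop)]; rfl
      rw [this, hπ.1, Measure.map_map (by fun_prop) (by fun_prop)]
      refine Measure.map_congr ?_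
      filter_upwards [hSO] with s hs using hφψ _ hs
    · have : π.map (fun z => φ z.2) = (π.map Prod.snd).map φ := by
        rw [Measure.map_map (by fun_prop) (by fun_prop)]; rfl
      rw [this, hπ.2, Measure.map_map (by fun_prop) (by fun_prop)]
      refine Measure.map_congr ?_
      filter_upwards [hTO] with s hs using hφψ _ hs

theorem rpow_mul_self_le (r : ℝ≥0∞) {a : ℝ} (ha : 0 < a) : r * r ^ (-a) ≤ r ^ (1 - a) := by
  rcases eq_or_ne r 0 with rfl | h0
  · simp
  rcases eq_or_ne r ∞ with rfl | h1
  · simp [ENNReal.top_rpow_of_neg (neg_lt_zero.2 ha)]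
  rw [sub_eq_add_neg, ENNReal.rpow_add _ _ h0 h1, ENNReal.rpow_one]

/-- Infinitesimal criterion for `CD(K,N)` on a one-dimensional space. The hypothesis `hkey` is
the inequality satisfied by lengths `d₀, d₁` transported from `x₀, x₁` to an intermediate point. -/
theorem cd_of_key {K N : ℝ} (hN : 1 < N) {mY : Measure Y} [IsFiniteMeasure mY] {φ : Y → ℝ}
    (hφ : Isometry φ) (hrange : MeasurableSet (range φ))
    {w : ℝ → ℝ≥0∞} (hw : Measurable w) (hmap : mY.map φ = volume.withDensity w)
    {O : Set ℝ} (hO : Convex ℝ O) (hOm : MeasurableSet O) (hOr : O ⊆ range φ)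
    (hO0 : volume.withDensity w Oᶜ = 0) {h : ℝ → ℝ}
    (hwO : ∀ x ∈ O, w x = ENNReal.ofReal (h x)) (hpos : ∀ x ∈ O, 0 < h x)
    (hkey : ∀ x₀ ∈ O, ∀ x₁ ∈ O, ∀ t ∈ Icc (0 : ℝ) 1, ∀ N', N ≤ N' → ∀ d₀ d₁ : ℝ,
      0 < d₀ → 0 < d₁ →
      tauCoef K N' (1 - t) |x₀ - x₁| * ENNReal.ofReal (h x₀ * d₀) ^ (1 / N')
        + tauCoef K N' t |x₀ - x₁| * ENNReal.ofReal (h x₁ * d₁) ^ (1 / N')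
        ≤ ENNReal.ofReal (h ((1 - t) * x₀ + t * x₁) * ((1 - t) * d₀ + t * d₁)) ^ (1 / N')) :
    CD K N mY := by
  intro μ0 μ1 hp0 hp1 hac0 hac1 _ _
  have hφm : Measurable φ := hφ.continuous.measurable
  have : SecondCountableTopology Y := hφ.isEmbedding.secondCountableTopology
  have hne : Nonempty Y := by
    by_contra hcon
    rw [not_nonempty_iff] at hcon
    have := measure_univ (μ := μ0)
    rw [univ_eq_empty_iff.2 hcon, measure_empty] at this
    exact zero_ne_one this
  have hemb : MeasurableEmbedding φ := hφ.isEmbedding.measurableEmbedding hrange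
  obtain ⟨ψ, hψ, hψφ⟩ : ∃ ψ : ℝ → Y, Measurable ψ ∧ ∀ y, ψ (φ y) = y :=
    ⟨hemb.invFun, hemb.measurable_invFun, hemb.leftInverse_invFun⟩
  have hφψ : ∀ x ∈ O, φ (ψ x) = x := by
    intro x hx
    obtain ⟨y, rfl⟩ := hOr hx
    rw [hψφ]
  have hback : ∀ μ : Measure Y, (μ.map φ).map ψ = μ := by
    intro μ
    rw [Measure.map_map hψ hφm]
    have : ψ ∘ φ = id := funext hψφ
    rw [this, Measure.map_id]
  set ν0 := μ0.map φ with hν0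
  set ν1 := μ1.map φ with hν1
  have hpν0 : IsProbabilityMeasure ν0 := Measure.isProbabilityMeasure_map hφm.aemeasurable
  have hpν1 : IsProbabilityMeasure ν1 := Measure.isProbabilityMeasure_map hφm.aemeasurable
  have hν0ac : ν0 ≪ volume.withDensity w := by rw [← hmap]; exact hac0.map hφm
  have hν1ac : ν1 ≪ volume.withDensity w := by rw [← hmap]; exact hac1.map hφm
  set Q0 := quantile ν0 with hQ0
  set Q1 := quantile ν1 with hQ1
  have hQ0m : Measurable Q0 := measurable_quantile _
  have hQ1m : Measurable Q1 := measurable_quantile _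
  have hQ0O : ∀ᵐ s ∂unitLeb, Q0 s ∈ O := by
    have h1 : ∀ᵐ x ∂(unitLeb.map Q0), x ∈ O := by
      rw [hQ0, map_quantile]; exact mem_ae_iff.2 (hν0ac hO0)
    exact ae_of_ae_map hQ0m.aemeasurable h1
  have hQ1O : ∀ᵐ s ∂unitLeb, Q1 s ∈ O := by
    have h1 : ∀ᵐ x ∂(unitLeb.map Q1), x ∈ O := by
      rw [hQ1, map_quantile]; exact mem_ae_iff.2 (hν1ac hO0)
    exact ae_of_ae_map hQ1m.aemeasurable h1
  let Qt : ℝ → ℝ → ℝ := fun t s => (1 - t) * Q0 s + t * Q1 s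
  have hQtm : ∀ t, Measurable (Qt t) := fun t => by fun_prop
  have hQtmono : ∀ t ∈ Icc (0 : ℝ) 1, MonotoneOn (Qt t) (Ioo (0 : ℝ) 1) := by
    intro t ht s hs s' hs' hss
    have h0 := monotoneOn_quantile ν0 hs hs' hss
    have h1 := monotoneOn_quantile ν1 hs hs' hss
    exact add_le_add (mul_le_mul_of_nonneg_left h0 (by linarith [ht.2]))
      (mul_le_mul_of_nonneg_left h1 ht.1)
  have hQtO : ∀ t ∈ Icc (0 : ℝ) 1, ∀ᵐ s ∂unitLeb, Qt t s ∈ O := by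
    intro t ht
    filter_upwards [hQ0O, hQ1O] with s h0 h1
    exact hO h0 h1 (by linarith [ht.2]) ht.1 (by ring)
  have hQt0 : Qt 0 = Q0 := by funext s; simp [Qt]
  have hQt1 : Qt 1 = Q1 := by funext s; simp [Qt]
  have e0 : (unitLeb.map fun s => ψ (Q0 s)) = μ0 := by
    have : (unitLeb.map fun s => ψ (Q0 s)) = (unitLeb.map Q0).map ψ := by
      rw [Measure.map_map hψ hQ0m]; rfl
    rw [this, hQ0, map_quantile, hν0, hback]
  have e1 : (unitLeb.map fun s => ψ (Q1 s)) = μ1 := by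
    have : (unitLeb.map fun s => ψ (Q1 s)) = (unitLeb.map Q1).map ψ := by
      rw [Measure.map_map hψ hQ1m]; rfl
    rw [this, hQ1, map_quantile, hν1, hback]
  have hW01 := wcost_comonotone hφ hψ hφψ hQ0m hQ1m (monotoneOn_quantile ν0)
    (monotoneOn_quantile ν1) hQ0O hQ1O
  rw [e0, e1] at hW01
  refine ⟨unitLeb.map fun s => (ψ (Q0 s), ψ (Q1 s)), fun t => unitLeb.map fun s => ψ (Qt t s),
    ⟨?_, ?_⟩, hW01.1.trans hW01.2.symm, ?_, ?_, ?_, ?_⟩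
  · rw [Measure.map_map (by fun_prop) (by fun_prop)]; exact e0
  · rw [Measure.map_map (by fun_prop) (by fun_prop)]; exact e1
  · simp only [hQt0]; exact e0
  · simp only [hQt1]; exact e1
  · intro s hs t ht
    have hst := (wcost_comonotone hφ hψ hφψ (hQtm s) (hQtm t) (hQtmono s hs) (hQtmono t ht)
      (hQtO s hs) (hQtO t ht)).2
    have hfac : ∫⁻ r, ENNReal.ofReal |Qt s r - Qt t r| ^ (2 : ℝ) ∂unitLeb
        = ENNReal.ofReal |s - t| ^ (2 : ℝ) * ∫⁻ r, ENNReal.ofReal |Q0 r - Q1 r| ^ (2 : ℝ) ∂unitLeb := by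
      rw [← lintegral_const_mul _ (by fun_prop)]
      refine lintegral_congr fun r => ?_
      rw [← ENNReal.mul_rpow_of_nonneg _ _ (by norm_num), ← ENNReal.ofReal_mul (abs_nonneg _),
        ← abs_mul]
      congr 2
      rw [← abs_neg]
      congr 1
      simp only [Qt]; ring
    simp only [Wp]
    rw [hst, hfac, hW01.2, ENNReal.mul_rpow_of_nonneg _ _ (by norm_num), ← ENNReal.rpow_mul]
    norm_num
  · intro t ht N' hN'
    have hN'0 : 0 < N' := by linarith
    have ha : 0 < 1 / N' := by positivity
    have A0 := ae_rnDeriv_eq_inv hφm hψ hψφ hw hmap hwO hpos hac0 hQ0m (monotoneOn_quantile ν0)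
      (map_quantile ν0) hQ0O
    have A1 := ae_rnDeriv_eq_inv hφm hψ hψφ hw hmap hwO hpos hac1 hQ1m (monotoneOn_quantile ν1)
      (map_quantile ν1) hQ1O
    have hst0 : StrictMonoOn Q0 (Ioo 0 1) := strictMonoOn_of_map_ac hQ0m (monotoneOn_quantile ν0) (by
      rw [hQ0, map_quantile]; exact hν0ac.trans (withDensity_absolutelyContinuous _ _))
    have hst1 : StrictMonoOn Q1 (Ioo 0 1) := strictMonoOn_of_map_ac hQ1m (monotoneOn_quantile ν1) (by
      rw [hQ1, map_quantile]; exact hν1ac.trans (withDensity_absolutelyContinuous _ _))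
    have hcomb : ∀ {a b : ℝ}, 0 < a → 0 < b → 0 < (1 - t) * a + t * b := by
      intro a b ha hb
      rcases eq_or_lt_of_le ht.1 with h | h
      · rw [← h]; simpa using ha
      · have : 0 ≤ (1 - t) * a := mul_nonneg (by linarith [ht.2]) ha.le
        have := mul_pos h hb
        linarith
    have hstt : StrictMonoOn (Qt t) (Ioo 0 1) := by
      intro s hs s' hs' hss
      have := hcomb (sub_pos.2 (hst0 hs hs' hss)) (sub_pos.2 (hst1 hs hs' hss))
      simp only [Qt]
      linarith
    have hact : unitLeb.map (Qt t) ≪ volume := by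
      refine map_ac_of_deriv_pos (hQtm t) hstt ?_
      filter_upwards [A0, A1] with s ⟨d0, hd0, hd0', _⟩ ⟨d1, hd1, hd1', _⟩
      exact ⟨(1 - t) * d0 + t * d1, (hd0'.const_mul _).add (hd1'.const_mul _), hcomb hd0 hd1⟩
    have hactw : unitLeb.map (Qt t) ≪ volume.withDensity w := by
      refine Measure.AbsolutelyContinuous.mk fun B hB hB0 => ?_
      rw [withDensity_apply _ hB, lintegral_eq_zero_iff hw] at hB0
      have h1 := (ae_restrict_iff' hB).1 hB0
      have h2 : volume (B ∩ O) = 0 := by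
        refine measure_eq_zero_iff_ae_notMem.2 ?_
        filter_upwards [h1] with x hx hxB
        have := hx hxB.1
        rw [hwO x hxB.2] at this
        simp at this
        exact absurd (hpos x hxB.2) (not_lt.2 this)
      have h3 : unitLeb.map (Qt t) Oᶜ = 0 := by
        rw [Measure.map_apply (hQtm t) hOm.compl]
        exact mem_ae_iff.1 (hQtO t ht)
      rw [← measure_inter_conull h3]
      exact hact h2
    set μt := unitLeb.map fun s => ψ (Qt t s) with hμt
    have hpμt : IsProbabilityMeasure μt :=
      Measure.isProbabilityMeasure_map (hψ.comp (hQtm t)).aemeasurable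
    have hμt' : μt = (unitLeb.map (Qt t)).map ψ := by rw [Measure.map_map hψ (hQtm t)]; rfl
    have hμtac : μt ≪ mY := by
      rw [hμt', ← hback mY, hmap]; exact hactw.map hψ
    have hμtφ : unitLeb.map (Qt t) = μt.map φ := by
      rw [hμt, Measure.map_map hφm (show Measurable fun s => ψ (Qt t s) from hψ.comp (hQtm t))]
      refine Measure.map_congr ?_
      filter_upwards [hQtO t ht] with s hs using (hφψ _ hs).symm
    have At := ae_rnDeriv_eq_inv hφm hψ hψφ hw hmap hwO hpos hμtac (hQtm t) (hQtmono t ht)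
      hμtφ (hQtO t ht)
    have hRHS : ∫⁻ s, (μt.rnDeriv mY (ψ (Qt t s))) ^ (-(1 / N')) ∂unitLeb
        ≤ ∫⁻ y, (μt.rnDeriv mY y) ^ (1 - 1 / N') ∂mY := by
      have hmm : Measurable fun y => (μt.rnDeriv mY y) ^ (-(1 / N')) :=
        (Measure.measurable_rnDeriv _ _).pow_const _
      calc ∫⁻ s, (μt.rnDeriv mY (ψ (Qt t s))) ^ (-(1 / N')) ∂unitLeb
          = ∫⁻ y, (μt.rnDeriv mY y) ^ (-(1 / N')) ∂μt :=
            (lintegral_map hmm (hψ.comp (hQtm t))).symm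
        _ = ∫⁻ y, μt.rnDeriv mY y * (μt.rnDeriv mY y) ^ (-(1 / N')) ∂mY :=
            (lintegral_rnDeriv_mul hμtac hmm.aemeasurable).symm
        _ ≤ _ := lintegral_mono fun y => rpow_mul_self_le _ ha
    refine le_trans (lintegral_map_le _ _) (le_trans (lintegral_mono_ae ?_) hRHS)
    filter_upwards [A0, A1, At, hQ0O, hQ1O] with s ⟨d0, hd0, hd0', hr0⟩ ⟨d1, hd1, hd1', hr1⟩
      ⟨d, hd, hd', hr⟩ hO0 hO1
    have hdd : d = (1 - t) * d0 + t * d1 :=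
      hd'.unique ((hd0'.const_mul _).add (hd1'.const_mul _))
    have hdist : dist (ψ (Q0 s)) (ψ (Q1 s)) = |Q0 s - Q1 s| := by
      rw [← hφ.dist_eq, Real.dist_eq, hφψ _ hO0, hφψ _ hO1]
    simp only [hdist, hr0, hr1, hr, ENNReal.inv_rpow, ENNReal.rpow_neg, inv_inv]
    rw [hdd]
    exact hkey _ hO0 _ hO1 t ht N' hN' d0 d1 hd0 hd1

end OneDim

/-! ### Universal measurability of the transport set -/

section Analytic

open Filter Topology

/-- The sequences bounded by `b` in their first `n` coordinates. -/
def boxUpTo (b : ℕ → ℕ) (n : ℕ) : Set (ℕ → ℕ) := {x | ∀ i < n, x i ≤ b i}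

/-- The core of the capacitability argument: a continuous image of Baire space contains
compact sets of almost full outer measure. -/
theorem exists_isCompact_of_lt {X : Type*} [TopologicalSpace X] [T2Space X] [MeasurableSpace X]
    (μ : Measure X) [μ.OuterRegular] {p : (ℕ → ℕ) → X} (hp : Continuous p)
    {r : ℝ≥0∞} (hr : r < μ (range p)) :
    ∃ C : Set X, IsCompact C ∧ C ⊆ range p ∧ r ≤ μ C := by
  have step : ∀ (n : ℕ) (b : ℕ → ℕ), r < μ (p '' boxUpTo b n) →
      ∃ k, r < μ (p '' boxUpTo (Function.update b n k) (n + 1)) := by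
    intro n b hb
    have hU : boxUpTo b n = ⋃ k, boxUpTo (Function.update b n k) (n + 1) := by
      ext x
      simp only [boxUpTo, mem_iUnion, mem_ofPred_eq]
      constructor
      · intro h
        refine ⟨x n, fun i hi => ?_⟩
        rcases Nat.lt_succ_iff_lt_or_eq.1 hi with h' | rfl
        · rw [Function.update_of_ne h'.ne]; exact h i h'
        · simp
      · rintro ⟨k, hk⟩ i hi
        have := hk i (by omega)
        rwa [Function.update_of_ne hi.ne] at this
    have hmono : Monotone fun k => p '' boxUpTo (Function.update b n k) (n + 1) := by
      intro k l hkl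
      refine image_mono fun x hx i hi => (hx i hi).trans ?_
      by_cases h : i = n
      · subst h; simpa using hkl
      · simp [Function.update_of_ne h]
    rw [hU, image_iUnion, hmono.measure_iUnion] at hb
    exact lt_iSup_iff.1 hb
  choose k hk using step
  have h0 : r < μ (p '' boxUpTo (fun _ => 0) 0) := by
    have : boxUpTo (fun _ => 0) 0 = univ := by ext; simp [boxUpTo]
    rwa [this, image_univ]
  let B : (n : ℕ) → {b : ℕ → ℕ // r < μ (p '' boxUpTo b n)} := fun n =>
    Nat.rec ⟨fun _ => 0, h0⟩ (fun n b => ⟨Function.update b.1 n (k n b.1 b.2), hk n b.1 b.2⟩) n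
  have hB : ∀ n, (B (n + 1)).1 = Function.update (B n).1 n (k n (B n).1 (B n).2) := fun n => rfl
  let b : ℕ → ℕ := fun n => (B (n + 1)).1 n
  have hstab : ∀ n i, i < n → (B n).1 i = b i := by
    intro n
    induction n with
    | zero => intro i hi; omega
    | succ n ih =>
      intro i hi
      rcases Nat.lt_succ_iff_lt_or_eq.1 hi with h' | rfl
      · rw [hB, Function.update_of_ne h'.ne]; exact ih i h'
      · rfl
  have hb : ∀ n, r < μ (p '' boxUpTo b n) := by
    intro n
    have : boxUpTo b n = boxUpTo (B n).1 n := by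
      ext x
      simp only [boxUpTo, mem_ofPred_eq]
      exact forall₂_congr fun i hi => by rw [hstab n i hi]
    rw [this]; exact (B n).2
  have hKc : IsCompact {x : ℕ → ℕ | ∀ i, x i ≤ b i} := by
    have : {x : ℕ → ℕ | ∀ i, x i ≤ b i} = pi univ fun i => Iic (b i) := by ext; simp [Pi.le_def]
    rw [this]
    exact isCompact_univ_pi fun i => (finite_Iic _).isCompact
  refine ⟨p '' {x | ∀ i, x i ≤ b i}, hKc.image hp, image_subset_range _ _, ?_⟩
  rw [Set.measure_eq_iInf_isOpen]
  refine le_iInf₂ fun U hU => le_iInf fun hUo => ?_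
  suffices h : ∃ n, p '' boxUpTo b n ⊆ U by
    obtain ⟨n, hn⟩ := h
    exact (hb n).le.trans (measure_mono hn)
  by_contra! hcon
  have : ∀ n, ∃ x ∈ boxUpTo b n, p x ∉ U := fun n => by
    obtain ⟨y, ⟨x, hx, rfl⟩, hy⟩ := not_subset.1 (hcon n)
    exact ⟨x, hx, hy⟩
  choose x hx hxU using this
  obtain ⟨y, hy, φ, hφ, hlim⟩ := hKc.tendsto_subseq (x := fun n i => min (x n i) (b i))
    (fun n i => min_le_right _ _)
  have hlim' : Tendsto (fun n => x (φ n)) atTop (𝓝 y) := by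
    rw [tendsto_pi_nhds] at hlim ⊢
    intro i
    refine (hlim i).congr' ?_
    filter_upwards [eventually_gt_atTop i] with n hn
    exact min_eq_left (hx (φ n) i (hn.trans_le (hφ.id_le n)))
  have hev := ((hp.tendsto y).comp hlim').eventually (hUo.mem_nhds (hU ⟨y, hy, rfl⟩))
  obtain ⟨n, hn⟩ := hev.exists
  exact hxU _ hn

/-- Analytic sets are universally measurable. -/
theorem nullMeasurableSet_of_analyticSet {X : Type*} [TopologicalSpace X] [T2Space X]
    [MeasurableSpace X] [OpensMeasurableSpace X] (μ : Measure X) [IsFiniteMeasure μ]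
    [μ.OuterRegular] {s : Set X} (hs : AnalyticSet s) : NullMeasurableSet s μ := by
  rw [AnalyticSet] at hs
  rcases hs with rfl | ⟨p, hp, rfl⟩
  · exact MeasurableSet.empty.nullMeasurableSet
  rcases eq_or_ne (μ (range p)) 0 with h0 | h0
  · exact NullMeasurableSet.of_null h0
  obtain ⟨r, -, hr, hlim⟩ := exists_seq_strictMono_tendsto' (pos_iff_ne_zero.2 h0)
  choose C hC hCs hCr using fun n => exists_isCompact_of_lt μ hp (hr n).2
  have hM : MeasurableSet (⋃ n, C n) := MeasurableSet.iUnion fun n => (hC n).measurableSet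
  have hsub : (⋃ n, C n) ⊆ range p := iUnion_subset hCs
  have hle : μ (range p) ≤ μ (⋃ n, C n) :=
    le_of_tendsto' hlim fun n => (hCr n).trans (measure_mono (subset_iUnion C n))
  have h2 : (⋃ n, C n) =ᵐ[μ] range p :=
    ae_eq_of_subset_of_measure_ge hsub hle hM.nullMeasurableSet (measure_ne_top _ _)
  exact hM.nullMeasurableSet.congr h2

end Analytic

section TubMeas
variable {X : Type*} [MetricSpace X]

theorem isClosed_Gamma {u : X → ℝ} (hu : Continuous u) : IsClosed (Gamma u) :=
  isClosed_eq (by fun_prop) (by fun_prop)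

theorem isClosed_Ru {u : X → ℝ} (hu : Continuous u) : IsClosed (Ru u) :=
  (isClosed_Gamma hu).union ((isClosed_Gamma hu).preimage continuous_swap)

variable [CompleteSpace X] [SecondCountableTopology X] [MeasurableSpace X] [BorelSpace X]

theorem analyticSet_Tu {u : X → ℝ} (hu : Continuous u) : AnalyticSet (Tu u) := by
  have : Tu u = Prod.fst '' (Ru u ∩ {p : X × X | p.2 ≠ p.1}) := by
    ext x; simp [Tu]
  rw [this]
  refine (MeasurableSet.analyticSet ?_).image_of_continuous continuous_fst
  exact (isClosed_Ru hu).measurableSet.inter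
    (isOpen_ne_fun continuous_snd continuous_fst).measurableSet

theorem nullMeasurableSet_Tub (m : Measure X) [IsFiniteMeasure m] {u : X → ℝ}
    (hu : Continuous u) : NullMeasurableSet (Tub u) m := by
  have hT := analyticSet_Tu hu
  have hTn := nullMeasurableSet_of_analyticSet m hT
  have hG := isClosed_Gamma hu
  have hR := isClosed_Ru hu
  refine hTn.diff (NullMeasurableSet.union ?_ ?_)
  · have : Aplus u = Tu u ∩ Prod.fst '' {p : X × X × X | (p.1, p.2.1) ∈ Gamma u ∧
        (p.1, p.2.2) ∈ Gamma u ∧ (p.2.1, p.2.2) ∉ Ru u} := by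
      ext x; simp [Aplus]
    rw [this]
    refine hTn.inter (nullMeasurableSet_of_analyticSet m ?_)
    refine (MeasurableSet.analyticSet ?_).image_of_continuous continuous_fst
    exact ((hG.preimage (f := fun p : X × X × X => (p.1, p.2.1)) (by fun_prop)).measurableSet).inter
      (((hG.preimage (f := fun p : X × X × X => (p.1, p.2.2)) (by fun_prop)).measurableSet).inter
      ((hR.preimage (f := fun p : X × X × X => (p.2.1, p.2.2)) (by fun_prop)).measurableSet).compl)
  · have : Aminus u = Tu u ∩ Prod.fst '' {p : X × X × X | (p.2.1, p.1) ∈ Gamma u ∧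
        (p.2.2, p.1) ∈ Gamma u ∧ (p.2.1, p.2.2) ∉ Ru u} := by
      ext x; simp [Aminus]
    rw [this]
    refine hTn.inter (nullMeasurableSet_of_analyticSet m ?_)
    refine (MeasurableSet.analyticSet ?_).image_of_continuous continuous_fst
    exact ((hG.preimage (f := fun p : X × X × X => (p.2.1, p.1)) (by fun_prop)).measurableSet).inter
      (((hG.preimage (f := fun p : X × X × X => (p.2.2, p.1)) (by fun_prop)).measurableSet).inter
      ((hR.preimage (f := fun p : X × X × X => (p.2.1, p.2.2)) (by fun_prop)).measurableSet).compl)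

end TubMeas

/-! ### The disintegration as a kernel -/

section

open ProbabilityTheory

/-- On a standard Borel space, a family of probability measures that agrees almost everywhere
with a Markov kernel on each fixed measurable set agrees with it almost everywhere. -/
theorem ae_eq_kernel_of_forall {A X : Type*} [MeasurableSpace A] [MeasurableSpace X]
    [StandardBorelSpace X] {q : Measure A} {κ : Kernel A X} [IsMarkovKernel κ] {ν : A → Measure X}
    (hν : ∀ᵐ α ∂q, IsProbabilityMeasure (ν α))
    (h : ∀ s, MeasurableSet s → ∀ᵐ α ∂q, ν α s = κ α s) : ∀ᵐ α ∂q, ν α = κ α := by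
  have he := measurableEmbedding_embeddingReal X
  have h1 : ∀ᵐ α ∂q, ∀ r : ℚ, ν α (embeddingReal X ⁻¹' Iic (r : ℝ)) =
      κ α (embeddingReal X ⁻¹' Iic (r : ℝ)) :=
    ae_all_iff.2 fun r => h _ (he.measurable measurableSet_Iic)
  filter_upwards [hν, h1] with α hp hα
  have : (ν α).map (embeddingReal X) = (κ α).map (embeddingReal X) := by
    have : IsProbabilityMeasure ((ν α).map (embeddingReal X)) :=
      Measure.isProbabilityMeasure_map he.measurable.aemeasurable
    have : IsProbabilityMeasure ((κ α).map (embeddingReal X)) :=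
      Measure.isProbabilityMeasure_map he.measurable.aemeasurable
    refine ext_of_generate_finite _ ?_ Real.isPiSystem_Iic_rat ?_ (by simp)
    · rw [← Real.borel_eq_generateFrom_Iic_rat]; exact BorelSpace.measurable_eq
    · rintro s hs
      simp only [mem_iUnion, mem_singleton_iff] at hs
      obtain ⟨r, rfl⟩ := hs
      rw [Measure.map_apply he.measurable measurableSet_Iic,
        Measure.map_apply he.measurable measurableSet_Iic]
      exact hα r
  rw [← he.comap_map (ν α), this, he.comap_map]

theorem RaySetting.f_eq {X : Type*} [MetricSpace X] [MeasurableSpace X] {m : Measure X}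
    {u : X → ℝ} (S : RaySetting m u) {α y : X} (hα : α ∈ S.Q) (hy : (α, y) ∈ Rub u) :
    y ∈ Tub u ∧ S.f y = α :=
  ⟨hy.2.2, by rw [← (S.hfquot α hy.2.1 y hy.2.2).2 hy, S.hfid α hα]⟩

section Ray
variable {X : Type*} [MetricSpace X] [CompleteSpace X] [SecondCountableTopology X]
    [MeasurableSpace X] [BorelSpace X] {m : Measure X} {u : X → ℝ}

theorem RaySetting.measurableSet_ray (S : RaySetting m u) {α : X} (hα : α ∈ S.Q) :
    MeasurableSet {y | (α, y) ∈ Rub u} := by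
  rw [← S.hgonto α hα]
  refine (S.hdomconn α hα).measurableSet.image_of_measurable_injOn (S.hgmeas α hα) ?_
  intro s hs t ht hst
  have := S.hgisom α hα s hs t ht
  rw [hst, dist_self] at this
  exact sub_eq_zero.1 (abs_eq_zero.1 this.symm)

theorem RaySetting.ae_mem_ray (S : RaySetting m u) {α : X} (hα : α ∈ S.Q) :
    ∀ᵐ y ∂(S.mα α), (α, y) ∈ Rub u := by
  have hm := S.measurableSet_ray hα
  rw [ae_iff]
  change S.mα α {y | (α, y) ∈ Rub u}ᶜ = 0
  rw [S.hmα α hα, Measure.map_apply (S.hgmeas α hα) hm.compl]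
  refine withDensity_absolutelyContinuous _ _ ?_
  rw [Measure.restrict_apply (S.hgmeas α hα hm.compl)]
  convert measure_empty (μ := volume)
  ext s
  simp only [mem_inter_iff, mem_preimage, mem_compl_iff, mem_empty_iff_false, iff_false, not_and]
  rintro h hs
  exact h (by rw [← S.hgonto α hα]; exact mem_image_of_mem _ hs)

/-- The quotient set is not assumed measurable, but it contains the image of a Borel set of full
measure in `T_u^b`, which is analytic and therefore universally measurable. -/
theorem RaySetting.ae_mem_Q [IsFiniteMeasure m] (S : RaySetting m u) (hu : Continuous u) :
    ∀ᵐ α ∂S.q, α ∈ S.Q := by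
  obtain ⟨T, hTsub, hT, hTeq⟩ := (nullMeasurableSet_Tub m hu).exists_measurable_subset_ae_eq
  have hr : m.restrict (Tub u) = m.restrict T := (Measure.restrict_congr_set hTeq).symm
  have hA : AnalyticSet (S.f '' T) := hT.analyticSet_image S.hfmeas
  have hq : S.q = (m.restrict T).map S.f := by rw [S.hq, hr]
  have : IsFiniteMeasure S.q := by rw [hq]; infer_instance
  have hAn := nullMeasurableSet_of_analyticSet S.q hA
  have h0 : S.q (S.f '' T)ᶜ = 0 := by
    have hc := hAn.compl
    rw [hq] at hc ⊢
    rw [Measure.map_apply₀ S.hfmeas.aemeasurable hc]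
    refine measure_mono_null (t := Tᶜ) ?_ ?_
    · intro x hx hxT
      exact hx ⟨x, hxT, rfl⟩
    · rw [Measure.restrict_apply hT.compl]; simp
  have h1 : ∀ᵐ α ∂S.q, α ∈ S.f '' T := by rw [ae_iff]; exact h0
  filter_upwards [h1]
  rintro _ ⟨x, hx, rfl⟩
  exact S.hfQ x (hTsub hx)

/-- The conditional measures agree almost everywhere with a Markov kernel disintegrating
`m⌞T_u^b`, although their measurability in `α` is not part of the ray-map setting. -/
theorem RaySetting.exists_kernel [IsProbabilityMeasure m] (S : RaySetting m u) (hu : Continuous u) :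
    ∃ κ : Kernel X X, IsMarkovKernel κ ∧ (∀ᵐ α ∂S.q, S.mα α = κ α) ∧
      (∀ φ : X → ℝ≥0∞, Measurable φ →
        ∫⁻ x in Tub u, φ x ∂m = ∫⁻ α, ∫⁻ y, φ y ∂(κ α) ∂S.q) ∧
      (∀ᵐ α ∂S.q, ∀ᵐ y ∂(κ α), y ∈ Tub u ∧ S.f y = α) := by
  have : Nonempty X := m.nonempty_of_neZero
  set μ := m.restrict (Tub u) with hμ
  have hq : S.q = μ.map S.f := S.hq
  have : IsFiniteMeasure S.q := by rw [hq]; infer_instance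
  -- the regular conditional distribution of the identity given the quotient map
  let κ : Kernel X X := condDistrib id S.f μ
  have hκM : IsMarkovKernel κ := by infer_instance
  have hcp : S.q ⊗ₘ κ = μ.map fun a => (S.f a, a) := by
    rw [hq]; exact compProd_map_condDistrib (Y := id) (X := S.f) (μ := μ) aemeasurable_id
  have hpair : Measurable fun a => (S.f a, a) := S.hfmeas.prodMk measurable_id
  have hset : ∀ s B : Set X, MeasurableSet s → MeasurableSet B →
      ∫⁻ α in B, κ α s ∂S.q = μ (S.f ⁻¹' B ∩ s) := by
    intro s B hs hB
    rw [← Measure.compProd_apply_prod hB hs, hcp,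
      Measure.map_apply hpair (hB.prod hs)]
    rfl
  have hmQ := S.ae_mem_Q hu
  have hle : ∀ s, MeasurableSet s → ∀ᵐ α ∂S.q, κ α s ≤ S.mα α s := by
    intro s hs
    refine ae_le_of_forall_setLIntegral_le_of_sigmaFinite₀ (κ.measurable_coe hs).aemeasurable ?_
    intro B hB _
    rw [hset s B hs hB, S.hdisint _ ((S.hfmeas hB).inter hs), ← lintegral_indicator hB]
    refine le_of_eq (lintegral_congr_ae ?_)
    filter_upwards [hmQ] with α hα
    have hray := S.ae_mem_ray hα
    by_cases hαB : α ∈ B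
    · rw [indicator_of_mem hαB]
      refine measure_congr ?_
      filter_upwards [hray] with y hy
      refine propext ⟨fun h => h.2, fun h => ⟨?_, h⟩⟩
      change S.f y ∈ B
      rw [(S.f_eq hα hy).2]; exact hαB
    · rw [indicator_of_notMem hαB]
      refine measure_eq_zero_iff_ae_notMem.2 ?_
      filter_upwards [hray] with y hy hy2
      apply hαB
      rw [← (S.f_eq hα hy).2]; exact hy2.1
  have heq : ∀ᵐ α ∂S.q, S.mα α = κ α := by
    refine ae_eq_kernel_of_forall S.hprob fun s hs => ?_
    filter_upwards [S.hprob, hle s hs, hle sᶜ hs.compl] with α hp h1 h2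
    refine le_antisymm ?_ h1
    rw [prob_compl_eq_one_sub hs, prob_compl_eq_one_sub hs] at h2
    exact (ENNReal.sub_le_sub_iff_left prob_le_one one_ne_top).1 h2
  refine ⟨κ, hκM, heq, ?_, ?_⟩
  · intro φ hφ
    have h1 : ∫⁻ z, φ z.2 ∂(S.q ⊗ₘ κ) = ∫⁻ α, ∫⁻ y, φ y ∂(κ α) ∂S.q :=
      Measure.lintegral_compProd (hφ.comp measurable_snd)
    rw [← h1, hcp, lintegral_map (show Measurable fun z : X × X => φ z.2 from hφ.comp measurable_snd) hpair]
  · filter_upwards [heq, hmQ] with α h1 h2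
    rw [← h1]
    filter_upwards [S.ae_mem_ray h2] with y hy using S.f_eq h2 hy

end Ray

end

/-! ### Marginals spread over rays -/

section

open ProbabilityTheory

section Geom
variable {X : Type*} [MetricSpace X]

theorem Gamma_trans {u : X → ℝ} (hu : LipschitzWith 1 u) {x y z : X} (h1 : (x, y) ∈ Gamma u)
    (h2 : (y, z) ∈ Gamma u) : (x, z) ∈ Gamma u := by
  have h3 := dist_triangle x y z
  have h4 := hu.dist_le_mul x z
  have h5 := le_abs_self (u x - u z)
  simp only [Gamma, mem_ofPred_eq, Real.dist_eq, NNReal.coe_one, one_mul] at *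
  linarith

/-- A geodesic along which `u` decreases at unit speed and whose endpoints are not branching
points stays inside the ray of its starting point. -/
theorem geodesic_mem_Tub {u : X → ℝ} (hu : LipschitzWith 1 u) {γ : C(unitInterval, X)}
    (hγ : IsCSG γ) (h01 : (γ 0, γ 1) ∈ Gamma u) (h0 : γ 0 ∈ Tub u) (h1 : γ 1 ∈ Tub u)
    (hne : u (γ 1) < u (γ 0)) {t : unitInterval} (ht : 0 < (t : ℝ)) :
    γ t ∈ Tub u ∧ (γ 0, γ t) ∈ Gamma u ∧
      u (γ t) = (1 - (t : ℝ)) * u (γ 0) + t * u (γ 1) := by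
  have e1 := hγ 0 t
  have e2 := hγ t 1
  have l1 := (le_abs_self _).trans (hu.dist_le_mul (γ 0) (γ t))
  have l2 := (le_abs_self _).trans (hu.dist_le_mul (γ t) (γ 1))
  have ht1 : (t : ℝ) ≤ 1 := t.2.2
  rw [show |((0 : unitInterval) : ℝ) - t| = t by simp [abs_of_pos ht]] at e1
  rw [show |(t : ℝ) - ((1 : unitInterval) : ℝ)| = 1 - t by
    rw [abs_sub_comm]; simp [abs_of_nonneg, ht1]] at e2
  have h01' : u (γ 0) - u (γ 1) = dist (γ 0) (γ 1) := h01
  rw [e1, NNReal.coe_one, one_mul] at l1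
  rw [e2, NNReal.coe_one, one_mul] at l2
  have k1 : u (γ 0) - u (γ t) = t * dist (γ 0) (γ 1) := by linarith
  have k2 : u (γ t) - u (γ 1) = (1 - t) * dist (γ 0) (γ 1) := by linarith
  have g1 : (γ 0, γ t) ∈ Gamma u := by
    change u (γ 0) - u (γ t) = dist (γ 0) (γ t); rw [e1, k1]
  have g2 : (γ t, γ 1) ∈ Gamma u := by
    change u (γ t) - u (γ 1) = dist (γ t) (γ 1); rw [e2, k2]
  have hlt : u (γ t) < u (γ 0) := by
    have : 0 < dist (γ 0) (γ 1) := by linarith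
    have := mul_pos ht this
    linarith
  refine ⟨⟨⟨γ 0, Or.inr g1, fun h => ?_⟩, ?_⟩, g1, ?_⟩
  · rw [h] at hlt; exact lt_irrefl _ hlt
  · rintro (⟨-, z, w, hz, hw, hzw⟩ | ⟨-, z, w, hz, hw, hzw⟩)
    · exact h0.2 (Or.inl ⟨h0.1, z, w, Gamma_trans hu g1 hz, Gamma_trans hu g1 hw, hzw⟩)
    · exact h1.2 (Or.inr ⟨h1.1, z, w, Gamma_trans hu hz g2, Gamma_trans hu hw g2, hzw⟩)
  · rw [← h01'] at k1; linarith

end Geom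

/-- `κ` is a Markov kernel disintegrating `m⌞T_u^b` along the quotient map `f`. -/
structure IsRayKernel {X : Type*} [MetricSpace X] [MeasurableSpace X] (m : Measure X)
    (u : X → ℝ) (f : X → X) (q : Measure X) (κ : Kernel X X) : Prop where
  markov : IsMarkovKernel κ
  finite : IsFiniteMeasure q
  hT : NullMeasurableSet (Tub u) m
  hf : Measurable f
  hquot : ∀ x ∈ Tub u, ∀ y ∈ Tub u, (f x = f y ↔ (x, y) ∈ Rub u)
  hfid : ∀ x ∈ Tub u, (x, f x) ∈ Rub u
  hdis : ∀ φ : X → ℝ≥0∞, Measurable φ →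
    ∫⁻ x in Tub u, φ x ∂m = ∫⁻ α, ∫⁻ y, φ y ∂(κ α) ∂q
  hae : ∀ᵐ α ∂q, ∀ᵐ y ∂(κ α), y ∈ Tub u ∧ f y = α

section Marg
variable {X : Type*} [MetricSpace X] [MeasurableSpace X]
  {m : Measure X} {u : X → ℝ} {f : X → X} {q : Measure X} {κ : Kernel X X}

theorem IsRayKernel.lintegral_mul (H : IsRayKernel m u f q κ) {ψ φ : X → ℝ≥0∞}
    (hψ : Measurable ψ) (hφ : Measurable φ) :
    ∫⁻ x in Tub u, ψ (f x) * φ x ∂m = ∫⁻ α, ψ α * ∫⁻ y, φ y ∂(κ α) ∂q := by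
  rw [H.hdis (fun x => ψ (f x) * φ x) ((hψ.comp H.hf).mul hφ)]
  refine lintegral_congr_ae ?_
  filter_upwards [H.hae] with α hα
  rw [← lintegral_const_mul _ hφ]
  refine lintegral_congr_ae ?_
  filter_upwards [hα] with y hy
  rw [hy.2]

/-- The weight normalising the mass of each ray inside `A` to `1 / q(B)`, for rays in `B`. -/
def rayWeight (q : Measure X) (κ : Kernel X X) (A B : Set X) : X → ℝ≥0∞ :=
  B.indicator fun α => (κ α A)⁻¹ * (q B)⁻¹

/-- The probability measure spread over the rays in `B`, proportionally to `κ_α⌞A` on each. -/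
def rayMarginal (m : Measure X) (u : X → ℝ) (f : X → X) (q : Measure X) (κ : Kernel X X)
    (A B : Set X) : Measure X :=
  (m.restrict (Tub u)).withDensity fun x => rayWeight q κ A B (f x) * A.indicator 1 x

theorem measurable_rayWeight {X : Type*} [MeasurableSpace X] {q : Measure X} {κ : Kernel X X}
    {A B : Set X} (hA : MeasurableSet A) (hB : MeasurableSet B) :
    Measurable (rayWeight q κ A B) :=
  ((κ.measurable_coe hA).inv.mul_const _).indicator hB

theorem measurable_rayDensity (H : IsRayKernel m u f q κ) {A B : Set X} (hA : MeasurableSet A)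
    (hB : MeasurableSet B) :
    Measurable fun x => rayWeight q κ A B (f x) * A.indicator 1 x :=
  ((measurable_rayWeight hA hB).comp H.hf).mul (measurable_one.indicator hA)

theorem lintegral_rayMarginal (H : IsRayKernel m u f q κ) {A B : Set X} (hA : MeasurableSet A)
    (hB : MeasurableSet B) {φ : X → ℝ≥0∞} (hφ : Measurable φ) :
    ∫⁻ x, φ x ∂(rayMarginal m u f q κ A B)
      = ∫⁻ α, rayWeight q κ A B α * ∫⁻ y in A, φ y ∂(κ α) ∂q := by
  rw [rayMarginal, lintegral_withDensity_eq_lintegral_mul _ (measurable_rayDensity H hA hB) hφ]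
  have := H.lintegral_mul (measurable_rayWeight (q := q) (κ := κ) hA hB) (hφ.indicator hA)
  simp only [lintegral_indicator hA] at this
  rw [← this]
  refine lintegral_congr fun x => ?_
  simp only [Pi.mul_apply, mul_assoc]
  by_cases hx : x ∈ A <;> simp [hx]

theorem rayWeight_mul_self (H : IsRayKernel m u f q κ) {A B : Set X}
    (hpos : ∀ α ∈ B, κ α A ≠ 0) (α : X) :
    rayWeight q κ A B α * κ α A = B.indicator (fun _ => (q B)⁻¹) α := by
  have := H.markov
  by_cases hα : α ∈ B
  · simp only [rayWeight, indicator_of_mem hα]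
    rw [mul_right_comm, ENNReal.inv_mul_cancel (hpos α hα) (measure_ne_top _ _), one_mul]
  · simp [rayWeight, hα]

/-- The quotient map sends `rayMarginal` to the uniform distribution on `B`. -/
theorem rayMarginal_preimage (H : IsRayKernel m u f q κ) {A B C : Set X} (hA : MeasurableSet A)
    (hB : MeasurableSet B) (hC : MeasurableSet C) (hpos : ∀ α ∈ B, κ α A ≠ 0) :
    rayMarginal m u f q κ A B (f ⁻¹' C) = (q B)⁻¹ * q (B ∩ C) := by
  rw [← lintegral_indicator_one (H.hf hC), lintegral_rayMarginal H hA hB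
    (measurable_one.indicator (H.hf hC))]
  have : ∀ᵐ α ∂q, rayWeight q κ A B α * ∫⁻ y in A, (f ⁻¹' C).indicator 1 y ∂(κ α)
      = (B ∩ C).indicator (fun _ => (q B)⁻¹) α := by
    filter_upwards [H.hae] with α hα
    have h1 : ∫⁻ y in A, (f ⁻¹' C).indicator 1 y ∂(κ α) = C.indicator (fun _ => κ α A) α := by
      have : ∀ᵐ y ∂(κ α).restrict A, (f ⁻¹' C).indicator (1 : X → ℝ≥0∞) y = C.indicator 1 α := by
        filter_upwards [ae_restrict_of_ae hα] with y hy
        by_cases hc : α ∈ C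
        · rw [indicator_of_mem hc, indicator_of_mem]; simp
          simpa [hy.2] using hc
        · rw [indicator_of_notMem hc, indicator_of_notMem]
          simpa [hy.2] using hc
      rw [lintegral_congr_ae this, lintegral_const]
      by_cases hc : α ∈ C <;> simp [hc]
    rw [h1]
    by_cases hc : α ∈ C
    · rw [indicator_of_mem hc, rayWeight_mul_self H hpos]
      by_cases hb : α ∈ B <;> simp [hb, hc]
    · simp [hc]
  rw [lintegral_congr_ae this, lintegral_indicator (hB.inter hC), setLIntegral_const]

theorem rayMarginal_prob (H : IsRayKernel m u f q κ) {A B : Set X} (hA : MeasurableSet A)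
    (hB : MeasurableSet B) (hpos : ∀ α ∈ B, κ α A ≠ 0) (hq : q B ≠ 0) :
    IsProbabilityMeasure (rayMarginal m u f q κ A B) := by
  have := H.finite
  constructor
  have := rayMarginal_preimage H hA hB MeasurableSet.univ hpos
  rw [preimage_univ, inter_univ, ENNReal.inv_mul_cancel hq (measure_ne_top _ _)] at this
  exact this

theorem rayMarginal_ac (A B : Set X) :
    rayMarginal m u f q κ A B ≪ m :=
  (withDensity_absolutelyContinuous _ _).trans Measure.restrict_le_self.absolutelyContinuous

theorem ae_rayMarginal (H : IsRayKernel m u f q κ) {A B : Set X} (hA : MeasurableSet A)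
    (hB : MeasurableSet B) :
    ∀ᵐ x ∂(rayMarginal m u f q κ A B), x ∈ Tub u ∧ f x ∈ B ∧ x ∈ A := by
  have h1 : ∀ᵐ x ∂(rayMarginal m u f q κ A B), x ∈ Tub u :=
    (withDensity_absolutelyContinuous _ _).ae_le (ae_restrict_mem₀ H.hT)
  have h2 : ∀ᵐ x ∂(rayMarginal m u f q κ A B),
      rayWeight q κ A B (f x) * A.indicator 1 x ≠ 0 := by
    rw [rayMarginal, ae_withDensity_iff (measurable_rayDensity H hA hB)]
    exact Filter.Eventually.of_forall fun x hx => hx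
  filter_upwards [h1, h2] with x hx hx2
  refine ⟨hx, ?_, ?_⟩
  · by_contra h; exact hx2 (by simp [rayWeight, h])
  · by_contra h; exact hx2 (by simp [h])

theorem rnDeriv_rayMarginal (H : IsRayKernel m u f q κ) [IsFiniteMeasure m] {A B : Set X}
    (hA : MeasurableSet A) (hB : MeasurableSet B) :
    ∀ᵐ x ∂(rayMarginal m u f q κ A B),
      (rayMarginal m u f q κ A B).rnDeriv m x = (κ (f x) A)⁻¹ * (q B)⁻¹ := by
  obtain ⟨T, hTsub, hT, hTeq⟩ := H.hT.exists_measurable_subset_ae_eq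
  have h0 : rayMarginal m u f q κ A B = m.withDensity
      (T.indicator fun x => rayWeight q κ A B (f x) * A.indicator 1 x) := by
    rw [withDensity_indicator hT, rayMarginal, Measure.restrict_congr_set hTeq]
  have h1 := Measure.rnDeriv_withDensity m ((measurable_rayDensity H hA hB).indicator hT)
  rw [← h0] at h1
  have h1' := (rayMarginal_ac (u := u) (f := f) (q := q) (κ := κ) A B).ae_le h1
  have h2 : ∀ᵐ x ∂(rayMarginal m u f q κ A B), x ∈ T ↔ x ∈ Tub u := by
    refine (rayMarginal_ac A B).ae_le ?_
    filter_upwards [hTeq] with x hx using iff_of_eq hx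
  filter_upwards [h1', h2, ae_rayMarginal H hA hB] with x hx hx2 ⟨a, b, c⟩
  rw [hx, indicator_of_mem (hx2.2 a), rayWeight, indicator_of_mem b, indicator_of_mem c]
  simp

/-- The Rényi entropy of `rayMarginal`. -/
theorem entropy_rayMarginal (H : IsRayKernel m u f q κ) [IsFiniteMeasure m] {A B : Set X}
    (hA : MeasurableSet A) (hB : MeasurableSet B) (hpos : ∀ α ∈ B, κ α A ≠ 0) (hq : q B ≠ 0)
    {a : ℝ} (ha : 0 < a) :
    ∫⁻ x, ((rayMarginal m u f q κ A B).rnDeriv m x) ^ (-a) ∂(rayMarginal m u f q κ A B)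
      = (q B) ^ (a - 1) * ∫⁻ α in B, (κ α A) ^ a ∂q := by
  have := H.finite
  have := H.markov
  have e1 : ∫⁻ x, ((rayMarginal m u f q κ A B).rnDeriv m x) ^ (-a) ∂(rayMarginal m u f q κ A B)
      = ∫⁻ x, (κ (f x) A) ^ a * (q B) ^ a ∂(rayMarginal m u f q κ A B) := by
    refine lintegral_congr_ae ?_
    filter_upwards [rnDeriv_rayMarginal H hA hB] with x hx
    rw [hx, ENNReal.rpow_neg, ENNReal.mul_rpow_of_nonneg _ _ ha.le, ENNReal.inv_rpow,
      ENNReal.inv_rpow, ENNReal.mul_inv, inv_inv, inv_inv]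
    · left; simp [ha, measure_ne_top, ENNReal.rpow_eq_top_iff, ha.not_gt]
    · right; simp [ha, measure_ne_top, ENNReal.rpow_eq_top_iff, ha.not_gt, hq]
  have hm : Measurable fun x => (κ (f x) A) ^ a * (q B) ^ a :=
    (((κ.measurable_coe hA).comp H.hf).pow_const _).mul_const _
  rw [e1, lintegral_rayMarginal H hA hB hm, ← lintegral_indicator hB, ← lintegral_const_mul]
  · refine lintegral_congr_ae ?_
    filter_upwards [H.hae] with α hα
    have : ∫⁻ y in A, (κ (f y) A) ^ a * (q B) ^ a ∂(κ α) = ((κ α A) ^ a * (q B) ^ a) * κ α A := by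
      rw [← setLIntegral_const]
      refine lintegral_congr_ae ?_
      filter_upwards [ae_restrict_of_ae hα] with y hy
      rw [hy.2]
    rw [this, mul_left_comm, rayWeight_mul_self H hpos]
    by_cases hb : α ∈ B
    · simp only [indicator_of_mem hb]
      rw [mul_assoc, ENNReal.rpow_sub _ _ hq (measure_ne_top _ _), ENNReal.rpow_one, mul_comm,
        ENNReal.div_eq_inv_mul, mul_comm (q B)⁻¹]
    · simp [hb]
  · exact ((κ.measurable_coe hA).pow_const _).indicator hB

end Marg

end

/-! ### Ray-wise couplings -/

section

open ProbabilityTheory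

section Coup
variable {X : Type*} [MetricSpace X] [MeasurableSpace X]
  {m : Measure X} {u : X → ℝ} {f : X → X} {q : Measure X} {κ : Kernel X X}

/-- The points at which `-u` lies strictly between `a` and `b`; the function `-u` is an arclength
coordinate on each ray. -/
def slab {X : Type*} (u : X → ℝ) (a b : ℝ) : Set X := {x | a < -u x ∧ -u x < b}

theorem measurableSet_slab {X : Type*} [MetricSpace X] [MeasurableSpace X] [BorelSpace X]
    {u : X → ℝ} (hu : Continuous u) (a b : ℝ) : MeasurableSet (slab u a b) :=
  ((isOpen_lt continuous_const hu.neg).inter (isOpen_lt hu.neg continuous_const)).measurableSet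

/-- The weight of the ray-wise product coupling of two `rayMarginal`s. -/
def pairWeight (q : Measure X) (κ : Kernel X X) (A₀ A₁ B : Set X) : X → ℝ≥0∞ :=
  B.indicator fun α => (κ α A₀)⁻¹ * (κ α A₁)⁻¹ * (q B)⁻¹

/-- The ray-wise product coupling of two `rayMarginal`s over the same set of rays. -/
def rayCoupling (f : X → X) (q : Measure X) (κ : Kernel X X) (A₀ A₁ B : Set X) : Measure (X × X) :=
  (q.bind (κ ×ₖ κ)).withDensity fun z =>
    pairWeight q κ A₀ A₁ B (f z.1) * (A₀ ×ˢ A₁).indicator 1 z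

theorem lintegral_rayCoupling (H : IsRayKernel m u f q κ) {A₀ A₁ B : Set X}
    (hA₀ : MeasurableSet A₀) (hA₁ : MeasurableSet A₁)
    (hB : MeasurableSet B) {Φ : X × X → ℝ≥0∞} (hΦ : Measurable Φ) :
    ∫⁻ z, Φ z ∂(rayCoupling f q κ A₀ A₁ B)
      = ∫⁻ α, pairWeight q κ A₀ A₁ B α * ∫⁻ x in A₀, ∫⁻ y in A₁, Φ (x, y) ∂(κ α) ∂(κ α) ∂q := by
  have := H.markov
  have hw : Measurable (pairWeight q κ A₀ A₁ B) :=
    (((κ.measurable_coe hA₀).inv.mul (κ.measurable_coe hA₁).inv).mul_const _).indicator hB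
  have hW : Measurable fun z : X × X =>
      pairWeight q κ A₀ A₁ B (f z.1) * (A₀ ×ˢ A₁).indicator 1 z :=
    (hw.comp (H.hf.comp measurable_fst)).mul (measurable_one.indicator (hA₀.prod hA₁))
  rw [rayCoupling, lintegral_withDensity_eq_lintegral_mul _ hW hΦ,
    Measure.lintegral_bind (κ ×ₖ κ).aemeasurable (hW.mul hΦ).aemeasurable]
  refine lintegral_congr_ae ?_
  filter_upwards [H.hae] with α hα
  rw [Kernel.prod_apply, lintegral_prod _ (hW.mul hΦ).aemeasurable, ← lintegral_indicator hA₀,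
    ← lintegral_const_mul _ ((hΦ.lintegral_prod_right'
      (ν := (κ α).restrict A₁)).indicator hA₀)]
  refine lintegral_congr_ae ?_
  filter_upwards [hα] with x hx
  by_cases hxA : x ∈ A₀
  · rw [indicator_of_mem hxA, ← lintegral_indicator hA₁, ← lintegral_const_mul _
      ((show Measurable fun y => Φ (x, y) from hΦ.comp measurable_prodMk_left).indicator hA₁)]
    refine lintegral_congr fun y => ?_
    simp only [Pi.mul_apply, hx.2]
    by_cases hy : y ∈ A₁ <;> simp [hy, hxA]
  · simp [hxA]

theorem isCoupling_rayCoupling (H : IsRayKernel m u f q κ) {A₀ A₁ B : Set X}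
    (hA₀ : MeasurableSet A₀) (hA₁ : MeasurableSet A₁) (hB : MeasurableSet B)
    (hpos₀ : ∀ α ∈ B, κ α A₀ ≠ 0) (hpos₁ : ∀ α ∈ B, κ α A₁ ≠ 0) :
    IsCoupling (rayCoupling f q κ A₀ A₁ B) (rayMarginal m u f q κ A₀ B)
      (rayMarginal m u f q κ A₁ B) := by
  have := H.markov
  constructor
  · refine Measure.ext_of_lintegral _ fun φ hφ => ?_
    rw [lintegral_map hφ measurable_fst, lintegral_rayCoupling H hA₀ hA₁ hB
      (Φ := fun z => φ z.1) (by fun_prop), lintegral_rayMarginal H hA₀ hB hφ]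
    refine lintegral_congr fun α => ?_
    simp only [lintegral_const, Measure.restrict_apply MeasurableSet.univ, univ_inter]
    rw [lintegral_mul_const _ hφ]
    by_cases hα : α ∈ B
    · simp only [pairWeight, rayWeight, indicator_of_mem hα]
      have := ENNReal.inv_mul_cancel (hpos₁ α hα) (measure_ne_top _ _)
      calc _ = (κ α A₀)⁻¹ * (q B)⁻¹ * (∫⁻ y in A₀, φ y ∂(κ α)) * ((κ α A₁)⁻¹ * κ α A₁) := by ring
        _ = _ := by rw [this, mul_one]
    · simp [pairWeight, rayWeight, hα]
  · refine Measure.ext_of_lintegral _ fun φ hφ => ?_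
    rw [lintegral_map hφ measurable_snd, lintegral_rayCoupling H hA₀ hA₁ hB
      (Φ := fun z => φ z.2) (by fun_prop), lintegral_rayMarginal H hA₁ hB hφ]
    refine lintegral_congr fun α => ?_
    simp only [lintegral_const, Measure.restrict_apply MeasurableSet.univ, univ_inter]
    by_cases hα : α ∈ B
    · simp only [pairWeight, rayWeight, indicator_of_mem hα]
      have := ENNReal.inv_mul_cancel (hpos₀ α hα) (measure_ne_top _ _)
      calc _ = (κ α A₁)⁻¹ * (q B)⁻¹ * (∫⁻ y in A₁, φ y ∂(κ α)) * ((κ α A₀)⁻¹ * κ α A₀) := by ring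
        _ = _ := by rw [this, mul_one]
    · simp [pairWeight, rayWeight, hα]

variable [SecondCountableTopology X] [BorelSpace X]

/-- The ray-wise coupling transports along `Γ_u`, so its cost is the difference of the
`u`-integrals, here written as a sum of nonnegative terms. -/
theorem wcost_rayMarginal_le (H : IsRayKernel m u f q κ) (hu : Continuous u) {a₀ b₀ a₁ b₁ : ℝ}
    (h01 : b₀ ≤ a₁) {B : Set X} (hB : MeasurableSet B)
    (hpos₀ : ∀ α ∈ B, κ α (slab u a₀ b₀) ≠ 0) (hpos₁ : ∀ α ∈ B, κ α (slab u a₁ b₁) ≠ 0)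
    (hqB : q B ≠ 0) :
    Wcost 1 (rayMarginal m u f q κ (slab u a₀ b₀) B) (rayMarginal m u f q κ (slab u a₁ b₁) B) ≤
      ∫⁻ x, ENNReal.ofReal (u x + b₀) ∂(rayMarginal m u f q κ (slab u a₀ b₀) B)
      + (∫⁻ x, ENNReal.ofReal (-a₁ - u x) ∂(rayMarginal m u f q κ (slab u a₁ b₁) B)
      + ENNReal.ofReal (a₁ - b₀)) := by
  have hA₀ := measurableSet_slab hu a₀ b₀
  have hA₁ := measurableSet_slab hu a₁ b₁
  have hC := isCoupling_rayCoupling H hA₀ hA₁ hB hpos₀ hpos₁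
  have hm0 : Measurable fun x => ENNReal.ofReal (u x + b₀) := by fun_prop
  have hm1 : Measurable fun x => ENNReal.ofReal (-a₁ - u x) := by fun_prop
  have hP1 := rayMarginal_prob H hA₁ hB hpos₁ hqB
  refine le_trans (b := ∫⁻ z, edist z.1 z.2 ^ (1 : ℝ) ∂(rayCoupling f q κ (slab u a₀ b₀) (slab u a₁ b₁) B))
    (by rw [Wcost]; exact iInf₂_le (rayCoupling f q κ (slab u a₀ b₀) (slab u a₁ b₁) B) hC) (le_of_eq ?_)
  set P := rayCoupling f q κ (slab u a₀ b₀) (slab u a₁ b₁) B with hP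
  have hPp : P univ = 1 := by
    rw [← hP1.measure_univ, ← hC.2, Measure.map_apply measurable_snd MeasurableSet.univ]; rfl
  have e : ∫⁻ x, ENNReal.ofReal (u x + b₀) ∂(rayMarginal m u f q κ (slab u a₀ b₀) B)
      + (∫⁻ x, ENNReal.ofReal (-a₁ - u x) ∂(rayMarginal m u f q κ (slab u a₁ b₁) B)
      + ENNReal.ofReal (a₁ - b₀)) = ∫⁻ z, (ENNReal.ofReal (u z.1 + b₀) +
        (ENNReal.ofReal (-a₁ - u z.2) + ENNReal.ofReal (a₁ - b₀))) ∂P := by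
    rw [lintegral_add_left (by fun_prop), lintegral_add_left (by fun_prop), lintegral_const, hPp,
      mul_one]
    rw [← hC.1, ← hC.2, lintegral_map hm0 measurable_fst, lintegral_map hm1 measurable_snd]
  rw [e, lintegral_rayCoupling H hA₀ hA₁ hB (by fun_prop), lintegral_rayCoupling H hA₀ hA₁ hB
    (by fun_prop)]
  refine lintegral_congr_ae ?_
  filter_upwards [H.hae] with α hα
  congr 1
  refine lintegral_congr_ae ?_
  filter_upwards [ae_restrict_of_ae hα, ae_restrict_mem hA₀] with x hx hxA
  refine lintegral_congr_ae ?_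
  filter_upwards [ae_restrict_of_ae hα, ae_restrict_mem hA₁] with y hy hyA
  have hR : (x, y) ∈ Rub u := (H.hquot x hx.1 y hy.1).1 (hx.2.trans hy.2.symm)
  have hlt : 0 < u x - u y := by have := hxA.2; have := hyA.1; linarith
  have hd : dist x y = u x - u y := by
    rcases hR.1 with h | h
    · exact h.symm
    · have h' : u y - u x = dist y x := h
      have := dist_nonneg (x := y) (y := x)
      linarith
  rw [ENNReal.rpow_one, edist_dist, hd, ← ENNReal.ofReal_add, ← ENNReal.ofReal_add]
  · congr 1; ring
  · have := hxA.2; linarith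
  · have := hyA.1; linarith
  · have := hyA.1; linarith
  · linarith

end Coup

end

/-! ### The `CD₁` inequality along rays -/

section

open ProbabilityTheory

/-- Hölder's inequality with exponents `1 / (1 - a)` and `1 / a`. -/
theorem lintegral_rpow_le_of_prob {Y : Type*} [MeasurableSpace Y] (μ : Measure Y)
    {ρ : Y → ℝ≥0∞} (hρ : Measurable ρ) {A : Set Y} (hA : MeasurableSet A) {a : ℝ} (ha : 0 < a)
    (ha1 : a < 1) :
    ∫⁻ y, A.indicator (fun y => ρ y ^ (1 - a)) y ∂μ ≤ (∫⁻ y, ρ y ∂μ) ^ (1 - a) * (μ A) ^ a := by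
  have hp : 0 < 1 - a := by linarith
  have hpq : (1 / (1 - a)).HolderConjugate (1 / a) := by
    rw [Real.holderConjugate_iff]
    constructor
    · rw [lt_div_iff₀ hp]; linarith
    · simp
  have := ENNReal.lintegral_mul_le_Lp_mul_Lq μ hpq (f := fun y => ρ y ^ (1 - a))
    (g := A.indicator 1) (hρ.pow_const _).aemeasurable (measurable_one.indicator hA).aemeasurable
  refine le_trans (le_of_eq ?_) (this.trans (le_of_eq ?_))
  · refine lintegral_congr fun y => ?_
    by_cases hy : y ∈ A <;> simp [hy]
  · congr 1
    · rw [one_div_one_div]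
      congr 1
      refine lintegral_congr fun y => ?_
      rw [← ENNReal.rpow_mul, mul_one_div_cancel hp.ne', ENNReal.rpow_one]
    · rw [one_div_one_div, ← lintegral_indicator_one hA]
      congr 1
      refine lintegral_congr fun y => ?_
      by_cases hy : y ∈ A <;> simp [hy, ha]

section Main
variable {X : Type*} [MetricSpace X] [MeasurableSpace X]
  {m : Measure X} {u : X → ℝ} {f : X → X} {q : Measure X} {κ : Kernel X X}

theorem finiteMoment_rayMarginal (H : IsRayKernel m u f q κ) (hu : LipschitzWith 1 u)
    {a b : ℝ} {B : Set X} (hA : MeasurableSet (slab u a b)) (hB : MeasurableSet B)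
    {x₀ : X} {r : ℝ} (hBr : B ⊆ Metric.closedBall x₀ r)
    (hP : IsProbabilityMeasure (rayMarginal m u f q κ (slab u a b) B)) :
    FiniteMoment 1 (rayMarginal m u f q κ (slab u a b) B) := by
  refine ⟨x₀, ne_top_of_le_ne_top (b := ENNReal.ofReal (|a| + |b| + |u x₀| + 2 * r))
    ENNReal.ofReal_ne_top ?_⟩
  have : ∀ᵐ x ∂(rayMarginal m u f q κ (slab u a b) B), edist x x₀ ^ (1 : ℝ) ≤
      ENNReal.ofReal (|a| + |b| + |u x₀| + 2 * r) := by
    filter_upwards [ae_rayMarginal H hA hB] with x ⟨hx, hxB, hxA⟩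
    rw [ENNReal.rpow_one, edist_dist]
    refine ENNReal.ofReal_le_ofReal ?_
    have h1 : dist (f x) x₀ ≤ r := hBr hxB
    have h2 : dist x (f x) = |u x - u (f x)| := by
      rcases (H.hfid x hx).1 with h | h
      · have h' : u x - u (f x) = dist x (f x) := h
        rw [h', abs_of_nonneg dist_nonneg]
      · have h' : u (f x) - u x = dist (f x) x := h
        rw [abs_sub_comm, h', abs_of_nonneg dist_nonneg, dist_comm]
    have h3 := hu.dist_le_mul (f x) x₀
    rw [NNReal.coe_one, one_mul, Real.dist_eq] at h3
    have h4 := dist_triangle x (f x) x₀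
    have h5 : |u x - u (f x)| ≤ |u x| + |u (f x)| := abs_sub _ _
    have h6 : |u (f x)| ≤ |u (f x) - u x₀| + |u x₀| := by
      have := abs_add_le (u (f x) - u x₀) (u x₀); simpa using this
    have h7 : |u x| ≤ |a| + |b| := by
      rw [abs_le]
      have := hxA.1; have := hxA.2
      have := neg_abs_le a; have := le_abs_self b; have := abs_nonneg a; have := abs_nonneg b
      constructor <;> linarith
    linarith
  refine (lintegral_mono_ae this).trans ?_
  simp

variable [SecondCountableTopology X] [BorelSpace X]
  [MeasurableSpace C(unitInterval, X)] [BorelSpace C(unitInterval, X)]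

theorem measurable_eval (t : unitInterval) : Measurable (eval (X := X) t) :=
  (ContinuousEvalConst.continuous_eval_const t).measurable

/-- The `CD₁` inequality for the pair of marginals spread over the rays of `B`, evaluated ray by
ray: the geodesics of the dynamical plan stay inside the rays of `T_u^b`, and Hölder's inequality
bounds the entropy of the interpolant by the mass of the interpolated slab. -/
theorem transport_ineq [IsProbabilityMeasure m] {K N : ℝ} (hN : 1 < N) (hcd : CDone K N m)
    (hu : LipschitzWith 1 u) (H : IsRayKernel m u f q κ) {a₀ b₀ a₁ b₁ : ℝ} (h01 : b₀ ≤ a₁)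
    {t : unitInterval} (ht : 0 < (t : ℝ)) {N' : ℝ} (hN' : N ≤ N')
    {c₀ c₁ : ℝ≥0∞} (hc₀ : ∀ θ ∈ Icc (a₁ - b₀) (b₁ - a₀), c₀ ≤ tauCoef K N' (1 - t) θ)
    (hc₁ : ∀ θ ∈ Icc (a₁ - b₀) (b₁ - a₀), c₁ ≤ tauCoef K N' t θ)
    {B : Set X} (hB : MeasurableSet B) {x₀ : X} {r : ℝ} (hBr : B ⊆ Metric.closedBall x₀ r)
    (hpos₀ : ∀ α ∈ B, κ α (slab u a₀ b₀) ≠ 0) (hpos₁ : ∀ α ∈ B, κ α (slab u a₁ b₁) ≠ 0) :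
    ∫⁻ α in B, (c₀ * (κ α (slab u a₀ b₀)) ^ (1 / N') + c₁ * (κ α (slab u a₁ b₁)) ^ (1 / N')) ∂q ≤
      ∫⁻ α in B, (κ α (slab u ((1 - t) * a₀ + t * a₁) ((1 - t) * b₀ + t * b₁))) ^ (1 / N') ∂q := by
  rcases eq_or_ne (q B) 0 with hq0 | hq0
  · rw [Measure.restrict_zero_set hq0]; simp
  have hfin := H.finite
  have hmk := H.markov
  have hN'1 : 1 < N' := by linarith
  have ha : 0 < 1 / N' := by positivity
  have ha1 : 1 / N' < 1 := by rw [div_lt_one (by linarith)]; exact hN'1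
  set a := 1 / N' with hadef
  have huc := hu.continuous
  set A₀ := slab u a₀ b₀ with hA₀d
  set A₁ := slab u a₁ b₁ with hA₁d
  set At := slab u ((1 - t) * a₀ + t * a₁) ((1 - t) * b₀ + t * b₁) with hAtd
  have hA₀ : MeasurableSet A₀ := measurableSet_slab huc _ _
  have hA₁ : MeasurableSet A₁ := measurableSet_slab huc _ _
  have hAt : MeasurableSet At := measurableSet_slab huc _ _
  have hP₀ := rayMarginal_prob H hA₀ hB hpos₀ hq0
  have hP₁ := rayMarginal_prob H hA₁ hB hpos₁ hq0
  have hW := wcost_rayMarginal_le H huc h01 hB hpos₀ hpos₁ hq0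
  obtain ⟨π, hπ, hcsg, hcost, hπ0, hπ1, hac, hent⟩ := hcd _ _ hP₀ hP₁ (rayMarginal_ac A₀ B)
    (rayMarginal_ac A₁ B) (finiteMoment_rayMarginal H hu hA₀ hB hBr hP₀)
    (finiteMoment_rayMarginal H hu hA₁ hB hBr hP₁)
  have hM := measurable_eval (X := X)
  have ae0 : ∀ᵐ γ ∂π, γ 0 ∈ Tub u ∧ f (γ 0) ∈ B ∧ γ 0 ∈ A₀ := by
    have := ae_rayMarginal H hA₀ hB; rw [← hπ0] at this
    exact ae_of_ae_map (hM 0).aemeasurable this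
  have ae1 : ∀ᵐ γ ∂π, γ 1 ∈ Tub u ∧ f (γ 1) ∈ B ∧ γ 1 ∈ A₁ := by
    have := ae_rayMarginal H hA₁ hB; rw [← hπ1] at this
    exact ae_of_ae_map (hM 1).aemeasurable this
  have aecsg : ∀ᵐ γ ∂π, IsCSG γ := hcsg
  have hm0 : Measurable fun x => ENNReal.ofReal (u x + b₀) := by fun_prop
  have hm1 : Measurable fun x => ENNReal.ofReal (-a₁ - u x) := by fun_prop
  -- the cost of `π` is at most `∫ u(γ 0) - u(γ 1)`, split here into nonnegative parts, so almost
  -- every geodesic of `π` has its endpoints in `Γ_u`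
  let G : C(unitInterval, X) → ℝ≥0∞ := fun γ => ENNReal.ofReal (u (γ 0) + b₀) +
    (ENNReal.ofReal (-a₁ - u (γ 1)) + ENNReal.ofReal (a₁ - b₀))
  have hG : ∀ᵐ γ ∂π, G γ = ENNReal.ofReal (u (γ 0) - u (γ 1)) := by
    filter_upwards [ae0, ae1] with γ ⟨_, _, g0⟩ ⟨_, _, g1⟩
    have := g0.2; have := g1.1
    simp only [G]
    rw [← ENNReal.ofReal_add, ← ENNReal.ofReal_add]
    · congr 1; ring
    all_goals linarith
  have hGint : ∫⁻ γ, G γ ∂π = ∫⁻ x, ENNReal.ofReal (u x + b₀) ∂(rayMarginal m u f q κ A₀ B)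
      + (∫⁻ x, ENNReal.ofReal (-a₁ - u x) ∂(rayMarginal m u f q κ A₁ B)
      + ENNReal.ofReal (a₁ - b₀)) := by
    rw [← hπ0, ← hπ1, lintegral_map hm0 (hM 0), lintegral_map hm1 (hM 1)]
    have k0 : Measurable fun γ : C(unitInterval, X) => ENNReal.ofReal (u (γ 0) + b₀) :=
      hm0.comp (hM 0)
    have k1 : Measurable fun γ : C(unitInterval, X) => ENNReal.ofReal (-a₁ - u (γ 1)) :=
      hm1.comp (hM 1)
    simp only [G]
    rw [lintegral_add_left k0, lintegral_add_left k1, lintegral_const, measure_univ, mul_one]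
    rfl
  have hGtop : ∫⁻ γ, G γ ∂π ≠ ∞ := by
    rw [lintegral_congr_ae hG]
    refine ne_top_of_le_ne_top (b := ENNReal.ofReal (b₁ - a₀)) ENNReal.ofReal_ne_top ?_
    have : ∀ᵐ γ ∂π, ENNReal.ofReal (u (γ 0) - u (γ 1)) ≤ ENNReal.ofReal (b₁ - a₀) := by
      filter_upwards [ae0, ae1] with γ ⟨_, _, g0⟩ ⟨_, _, g1⟩
      have := g0.1; have := g1.2
      exact ENNReal.ofReal_le_ofReal (by linarith)
    refine (lintegral_mono_ae this).trans ?_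
    simp
  have hle : ∫⁻ γ, edist (γ 0) (γ 1) ∂π ≤ ∫⁻ γ, G γ ∂π := by
    rw [hcost, hGint, Wp]; simpa using hW
  have hGe : G ≤ᵐ[π] fun γ => edist (γ 0) (γ 1) := by
    filter_upwards [hG] with γ hγ
    rw [hγ, edist_dist]
    refine ENNReal.ofReal_le_ofReal ?_
    have := (le_abs_self _).trans (hu.dist_le_mul (γ 0) (γ 1))
    simpa using this
  have hme : Measurable fun γ : C(unitInterval, X) => edist (γ 0) (γ 1) :=
    Measurable.edist (hM 0) (hM 1)
  have hEq := ae_eq_of_ae_le_of_lintegral_le hGe hGtop hme.aemeasurable hle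
  have aeΓ : ∀ᵐ γ ∂π, (γ 0, γ 1) ∈ Gamma u ∧ u (γ 1) < u (γ 0) := by
    filter_upwards [hEq, hG, ae0, ae1] with γ e1 e2 ⟨_, _, g0⟩ ⟨_, _, g1⟩
    have := g0.2; have := g1.1
    have hlt : u (γ 1) < u (γ 0) := by linarith
    rw [e2, edist_dist, ENNReal.ofReal_eq_ofReal_iff (by linarith) dist_nonneg] at e1
    exact ⟨e1, hlt⟩
  have aet : ∀ᵐ γ ∂π, γ t ∈ Tub u ∧ f (γ t) = f (γ 0) ∧ γ t ∈ At := by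
    filter_upwards [aeΓ, ae0, ae1, aecsg] with γ ⟨e1, e2⟩ ⟨g0, _, g0'⟩ ⟨g1, _, g1'⟩ hγ
    obtain ⟨k1, k2, k3⟩ := geodesic_mem_Tub hu hγ e1 g0 g1 e2 ht
    refine ⟨k1, ((H.hquot _ g0 _ k1).2 ⟨Or.inl k2, g0, k1⟩).symm, ?_⟩
    have t1 : (t : ℝ) ≤ 1 := t.2.2
    have x1 := g0'.1; have x2 := g0'.2; have x3 := g1'.1; have x4 := g1'.2
    constructor
    · rw [k3]; nlinarith
    · rw [k3]; nlinarith
  set μt := π.map (eval t) with hμt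
  have hpt : IsProbabilityMeasure μt := Measure.isProbabilityMeasure_map (hM t).aemeasurable
  set ρ := μt.rnDeriv m with hρd
  have hρ : Measurable ρ := Measure.measurable_rnDeriv _ _
  set E : Set X := Tub u ∩ (f ⁻¹' B ∩ At) with hEd
  have hEm : NullMeasurableSet E m := H.hT.inter ((H.hf hB).inter hAt).nullMeasurableSet
  have hE0 : μt Eᶜ = 0 := by
    rw [hμt, Measure.map_apply₀ (hM t).aemeasurable (hEm.compl.mono_ac (hac t))]
    refine measure_eq_zero_iff_ae_notMem.2 ?_
    filter_upwards [aet, ae0] with γ ⟨x1, x2, x3⟩ ⟨_, y, _⟩ h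
    refine h ⟨x1, ?_, x3⟩
    change f (γ t) ∈ B
    rw [x2]; exact y
  have hρ0 : ∀ᵐ x ∂m, x ∉ E → ρ x = 0 := by
    have h1 : ∫⁻ x in Eᶜ, ρ x ∂m = 0 :=
      le_antisymm ((Measure.setLIntegral_rnDeriv_le _).trans hE0.le) bot_le
    rw [lintegral_eq_zero_iff hρ, Filter.EventuallyEq, ae_restrict_iff'₀ hEm.compl] at h1
    exact h1
  -- every geodesic keeps to one ray, so the interpolant has mass at most `(q B)⁻¹` on each ray
  have hr : ∀ᵐ α ∂q, ∫⁻ y, ρ y ∂(κ α) ≤ (q B)⁻¹ := by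
    refine ae_le_of_forall_setLIntegral_le_of_sigmaFinite₀ hρ.lintegral_kernel.aemeasurable ?_
    intro C hC _
    have e1 := H.lintegral_mul (ψ := C.indicator 1) (measurable_one.indicator hC) hρ
    have e2 : ∫⁻ α in C, ∫⁻ y, ρ y ∂(κ α) ∂q
        = ∫⁻ α, C.indicator 1 α * ∫⁻ y, ρ y ∂(κ α) ∂q := by
      rw [← lintegral_indicator hC]
      refine lintegral_congr fun α => ?_
      by_cases hα : α ∈ C <;> simp [hα]
    rw [e2, ← e1]
    calc ∫⁻ x in Tub u, C.indicator 1 (f x) * ρ x ∂m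
        ≤ ∫⁻ x, C.indicator 1 (f x) * ρ x ∂m := setLIntegral_le_lintegral _ _
      _ = ∫⁻ x in f ⁻¹' C, ρ x ∂m := by
          rw [← lintegral_indicator (H.hf hC)]
          refine lintegral_congr fun x => ?_
          by_cases hx : f x ∈ C <;> simp [hx]
      _ ≤ μt (f ⁻¹' C) := Measure.setLIntegral_rnDeriv_le _
      _ = π {γ | f (γ t) ∈ C} := by
          rw [hμt, Measure.map_apply (hM t) (H.hf hC)]; rfl
      _ = π {γ | f (γ 0) ∈ C} := by
          refine measure_congr ?_
          filter_upwards [aet] with γ hγ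
          change (f (γ t) ∈ C) = (f (γ 0) ∈ C)
          rw [hγ.2.1]
      _ = (q B)⁻¹ * q (B ∩ C) := by
          rw [← rayMarginal_preimage H hA₀ hB hC hpos₀, ← hπ0,
            Measure.map_apply (hM 0) (H.hf hC)]; rfl
      _ ≤ ∫⁻ _ in C, (q B)⁻¹ ∂q := by
          rw [setLIntegral_const]; gcongr; exact inter_subset_right
  have hRHS : ∫⁻ x, ρ x ^ (1 - a) ∂m ≤ (q B) ^ (a - 1) * ∫⁻ α in B, (κ α At) ^ a ∂q := by
    have hφ : Measurable (At.indicator fun x => ρ x ^ (1 - a)) := (hρ.pow_const _).indicator hAt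
    calc ∫⁻ x, ρ x ^ (1 - a) ∂m
        ≤ ∫⁻ x in Tub u, B.indicator 1 (f x) * At.indicator (fun x => ρ x ^ (1 - a)) x ∂m := by
          rw [← lintegral_indicator₀ H.hT]
          refine lintegral_mono_ae ?_
          filter_upwards [hρ0] with x hx
          by_cases hxE : x ∈ E
          · have : f x ∈ B := hxE.2.1
            rw [indicator_of_mem hxE.1, indicator_of_mem this, indicator_of_mem hxE.2.2]; simp
          · rw [hx hxE, ENNReal.zero_rpow_of_pos (by linarith)]; exact bot_le
      _ = ∫⁻ α, B.indicator 1 α * ∫⁻ y, At.indicator (fun x => ρ x ^ (1 - a)) y ∂(κ α) ∂q :=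
          H.lintegral_mul (measurable_one.indicator hB) hφ
      _ ≤ ∫⁻ α, (q B) ^ (a - 1) * B.indicator (fun α => (κ α At) ^ a) α ∂q := by
          refine lintegral_mono_ae ?_
          filter_upwards [hr] with α hα
          by_cases hb : α ∈ B
          · simp only [indicator_of_mem hb, Pi.one_apply, one_mul]
            refine (lintegral_rpow_le_of_prob _ hρ hAt ha ha1).trans ?_
            gcongr
            calc (∫⁻ y, ρ y ∂(κ α)) ^ (1 - a) ≤ ((q B)⁻¹) ^ (1 - a) :=
                  ENNReal.rpow_le_rpow hα (by linarith)
              _ = (q B) ^ (a - 1) := by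
                  rw [ENNReal.inv_rpow, ← ENNReal.rpow_neg]; congr 1; ring
          · simp [hb]
      _ = _ := by
          rw [lintegral_const_mul _ (((κ.measurable_coe hAt).pow_const _).indicator hB),
            lintegral_indicator hB]
  have hLHS : (q B) ^ (a - 1) * ∫⁻ α in B, (c₀ * (κ α A₀) ^ a + c₁ * (κ α A₁) ^ a) ∂q ≤
      ∫⁻ x, ρ x ^ (1 - a) ∂m := by
    refine le_trans ?_ (hent t N' hN')
    have n0 : Measurable fun x => ((rayMarginal m u f q κ A₀ B).rnDeriv m x) ^ (-a) :=
      (Measure.measurable_rnDeriv _ _).pow_const _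
    have n1 : Measurable fun x => ((rayMarginal m u f q κ A₁ B).rnDeriv m x) ^ (-a) :=
      (Measure.measurable_rnDeriv _ _).pow_const _
    have n0' : Measurable fun γ : C(unitInterval, X) =>
      ((rayMarginal m u f q κ A₀ B).rnDeriv m (γ 0)) ^ (-a) := n0.comp (hM 0)
    have n1' : Measurable fun γ : C(unitInterval, X) =>
      ((rayMarginal m u f q κ A₁ B).rnDeriv m (γ 1)) ^ (-a) := n1.comp (hM 1)
    have s0 := entropy_rayMarginal H hA₀ hB hpos₀ hq0 ha
    have s1 := entropy_rayMarginal H hA₁ hB hpos₁ hq0 ha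
    have s0' : ∫⁻ γ, ((rayMarginal m u f q κ A₀ B).rnDeriv m (γ 0)) ^ (-a) ∂π =
        (q B) ^ (a - 1) * ∫⁻ α in B, (κ α A₀) ^ a ∂q := by
      rw [← s0]
      calc _ = ∫⁻ x, ((rayMarginal m u f q κ A₀ B).rnDeriv m x) ^ (-a) ∂(π.map (eval 0)) :=
            (lintegral_map n0 (hM 0)).symm
        _ = _ := by rw [hπ0]
    have s1' : ∫⁻ γ, ((rayMarginal m u f q κ A₁ B).rnDeriv m (γ 1)) ^ (-a) ∂π =
        (q B) ^ (a - 1) * ∫⁻ α in B, (κ α A₁) ^ a ∂q := by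
      rw [← s1]
      calc _ = ∫⁻ x, ((rayMarginal m u f q κ A₁ B).rnDeriv m x) ^ (-a) ∂(π.map (eval 1)) :=
            (lintegral_map n1 (hM 1)).symm
        _ = _ := by rw [hπ1]
    calc _ = ∫⁻ γ, (c₀ * ((rayMarginal m u f q κ A₀ B).rnDeriv m (γ 0)) ^ (-a)
          + c₁ * ((rayMarginal m u f q κ A₁ B).rnDeriv m (γ 1)) ^ (-a)) ∂π := by
          rw [lintegral_add_left (n0'.const_mul _), lintegral_const_mul _ n0',
            lintegral_const_mul _ n1', s0', s1',
            lintegral_add_left (((κ.measurable_coe hA₀).pow_const _).const_mul _),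
            lintegral_const_mul _ ((κ.measurable_coe hA₀).pow_const _),
            lintegral_const_mul _ ((κ.measurable_coe hA₁).pow_const _)]
          ring
      _ ≤ _ := by
          refine lintegral_mono_ae ?_
          filter_upwards [aeΓ, ae0, ae1] with γ ⟨e1, _⟩ ⟨_, _, g0⟩ ⟨_, _, g1⟩
          have x1 := g0.1; have x2 := g0.2; have x3 := g1.1; have x4 := g1.2
          have hd : dist (γ 0) (γ 1) ∈ Icc (a₁ - b₀) (b₁ - a₀) := by
            rw [← show u (γ 0) - u (γ 1) = dist (γ 0) (γ 1) from e1]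
            constructor <;> linarith
          gcongr
          · exact hc₀ _ hd
          · exact hc₁ _ hd
  have hβ0 : (q B) ^ (a - 1) ≠ 0 := by
    simp [ENNReal.rpow_eq_zero_iff, hq0, measure_ne_top]
  have hβt : (q B) ^ (a - 1) ≠ ∞ := by
    simp [ENNReal.rpow_eq_top_iff, hq0, measure_ne_top]
  exact (ENNReal.mul_le_mul_iff_right hβ0 hβt).1 (hLHS.trans hRHS)

end Main

end

/-! ### The ray-wise Brunn–Minkowski inequality -/

section

open ProbabilityTheory

/-- The distorted Brunn–Minkowski inequality for a measure on the line, restricted to intervals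
with rational endpoints, rational times and rational dimensions. -/
def IntervalIneq (K N : ℝ) (ν : Measure ℝ) : Prop :=
  ∀ a₀ b₀ a₁ b₁ t N' : ℚ, b₀ ≤ a₁ → 0 < t → t < 1 → N ≤ N' →
    ν (Ioo (a₀ : ℝ) b₀) ≠ 0 → ν (Ioo (a₁ : ℝ) b₁) ≠ 0 →
    (⨅ θ ∈ Icc ((a₁ : ℝ) - b₀) (b₁ - a₀), tauCoef K N' (1 - t) θ)
        * ν (Ioo (a₀ : ℝ) b₀) ^ (1 / (N' : ℝ))
      + (⨅ θ ∈ Icc ((a₁ : ℝ) - b₀) (b₁ - a₀), tauCoef K N' t θ)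
        * ν (Ioo (a₁ : ℝ) b₁) ^ (1 / (N' : ℝ))
      ≤ ν (Ioo ((1 - t) * a₀ + t * a₁ : ℝ) ((1 - t) * b₀ + t * b₁)) ^ (1 / (N' : ℝ))

section
variable {X : Type*} [MetricSpace X] [MeasurableSpace X] [SecondCountableTopology X] [BorelSpace X]
  [MeasurableSpace C(unitInterval, X)] [BorelSpace C(unitInterval, X)]
  {m : Measure X} {u : X → ℝ} {f : X → X} {q : Measure X} {κ : Kernel X X}

/-- As the set `B` of rays in `transport_ineq` is arbitrary, its integrated inequality holds for
almost every ray; rational parameters allow a common exceptional set. -/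
theorem ae_intervalIneq [IsProbabilityMeasure m] {K N : ℝ} (hN : 1 < N) (hcd : CDone K N m)
    (hu : LipschitzWith 1 u) (H : IsRayKernel m u f q κ) :
    ∀ᵐ α ∂q, IntervalIneq K N ((κ α).map fun x => -u x) := by
  have hfin := H.finite
  have hum : Measurable fun x => -u x := hu.continuous.measurable.neg
  have hmap : ∀ α (a b : ℝ), (κ α).map (fun x => -u x) (Ioo a b) = κ α (slab u a b) := by
    intro α a b
    rw [Measure.map_apply hum measurableSet_Ioo]
    rfl
  have : Nonempty X := m.nonempty_of_neZero
  obtain ⟨x₀⟩ := this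
  simp only [IntervalIneq, hmap, ae_all_iff]
  intro a₀ b₀ a₁ b₁ t N' h01 ht0 ht1 hN'
  have ht0' : (0 : ℝ) < t := by exact_mod_cast ht0
  have ht1' : (t : ℝ) < 1 := by exact_mod_cast ht1
  have hκm : ∀ a b : ℝ, Measurable fun α => κ α (slab u a b) := fun a b =>
    κ.measurable_coe (measurableSet_slab hu.continuous a b)
  have hG : ∀ n : ℕ, ∀ᵐ α ∂q.restrict ({α | κ α (slab u a₀ b₀) ≠ 0} ∩ {α | κ α (slab u a₁ b₁) ≠ 0}
      ∩ Metric.closedBall x₀ n),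
      (⨅ θ ∈ Icc ((a₁ : ℝ) - b₀) (b₁ - a₀), tauCoef K N' (1 - t) θ)
          * κ α (slab u a₀ b₀) ^ (1 / (N' : ℝ))
        + (⨅ θ ∈ Icc ((a₁ : ℝ) - b₀) (b₁ - a₀), tauCoef K N' t θ)
          * κ α (slab u a₁ b₁) ^ (1 / (N' : ℝ))
        ≤ κ α (slab u ((1 - t) * a₀ + t * a₁ : ℝ) ((1 - t) * b₀ + t * b₁)) ^ (1 / (N' : ℝ)) := by
    intro n
    refine ae_le_of_forall_setLIntegral_le_of_sigmaFinite ?_ ?_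
    · exact (((hκm _ _).pow_const _).const_mul _).add (((hκm _ _).pow_const _).const_mul _)
    · intro s hs _
      rw [Measure.restrict_restrict hs]
      refine transport_ineq (x₀ := x₀) (r := n) hN hcd hu H (by exact_mod_cast h01)
        (t := ⟨t, ht0'.le, ht1'.le⟩) ht0' hN' (fun θ hθ => iInf₂_le θ hθ)
        (fun θ hθ => iInf₂_le θ hθ) (hs.inter ((((hκm _ _) (measurableSet_singleton 0).compl).inter
          ((hκm _ _) (measurableSet_singleton 0).compl)).inter measurableSet_closedBall)) ?_ ?_ ?_
      · exact fun α h => h.2.2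
      · exact fun α h => h.2.1.1
      · exact fun α h => h.2.1.2
  have hG' := fun n : ℕ => (ae_restrict_iff' ((((hκm _ _) (measurableSet_singleton 0).compl).inter
          ((hκm _ _) (measurableSet_singleton 0).compl)).inter measurableSet_closedBall)).1 (hG n)
  filter_upwards [ae_all_iff.2 hG'] with α hα h0 h1
  obtain ⟨n, hn⟩ := exists_nat_ge (dist α x₀)
  exact hα n ⟨⟨h0, h1⟩, hn⟩

end

end

/-! ### Distortion coefficients -/

section

open Filter Topology

/-- Below the diameter bound, `σ_{K,N}^{(t)}(θ)` is given near `(N, t, θ)` by a positive continuous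
real function. -/
theorem exists_sigmaCoef_eq {K N t θ : ℝ} (hN : 0 < N) (ht : 0 < t) (ht1 : t < 1) (hθ : 0 < θ)
    (hlt : K * θ ^ 2 < N * Real.pi ^ 2) :
    ∃ r : ℝ × ℝ × ℝ → ℝ, ContinuousAt r (N, t, θ) ∧ 0 < r (N, t, θ) ∧
      ∀ᶠ p in 𝓝 (N, t, θ), sigmaCoef K p.1 p.2.1 p.2.2 = ENNReal.ofReal (r p) := by
  have hev : ∀ᶠ p : ℝ × ℝ × ℝ in 𝓝 (N, t, θ), K * p.2.2 ^ 2 < p.1 * Real.pi ^ 2 ∧ 0 < p.2.2 := by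
    refine Filter.Eventually.and ?_ ?_
    · exact (ContinuousAt.eventually_lt (by fun_prop) (by fun_prop) hlt)
    · exact continuousAt_const.eventually_lt (by fun_prop) hθ
  rcases lt_trichotomy K 0 with hK | rfl | hK
  · have hs : 0 < Real.sqrt (-K / N) := Real.sqrt_pos.2 (div_pos (by linarith) hN)
    have hden : 0 < Real.sinh (θ * Real.sqrt (-K / N)) := Real.sinh_pos_iff.2 (by positivity)
    refine ⟨fun p => Real.sinh (p.2.1 * p.2.2 * Real.sqrt (-K / p.1)) /
      Real.sinh (p.2.2 * Real.sqrt (-K / p.1)), ?_, ?_, ?_⟩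
    · have h1 : ContinuousAt (fun p : ℝ × ℝ × ℝ => Real.sqrt (-K / p.1)) (N, t, θ) :=
        (continuousAt_const.div continuousAt_fst hN.ne').sqrt
      have h2 : ContinuousAt (fun p : ℝ × ℝ × ℝ => p.2.1 * p.2.2) (N, t, θ) := by fun_prop
      have h3 : ContinuousAt (fun p : ℝ × ℝ × ℝ => p.2.2) (N, t, θ) := by fun_prop
      exact ContinuousAt.div (Real.continuous_sinh.continuousAt.comp (h2.mul h1))
        (Real.continuous_sinh.continuousAt.comp (h3.mul h1)) hden.ne'
    · exact div_pos (Real.sinh_pos_iff.2 (by positivity)) hden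
    · filter_upwards [hev] with p hp
      have : K * p.2.2 ^ 2 < 0 := mul_neg_of_neg_of_pos hK (by have := hp.2; positivity)
      simp [sigmaCoef, not_le.2 hp.1, not_lt.2 this.le, this.ne]
  · refine ⟨fun p => p.2.1, by fun_prop, ht, ?_⟩
    filter_upwards [hev] with p hp
    have := hp.1
    rw [sigmaCoef, if_neg (not_le.2 this)]
    simp
  · have hs : 0 < Real.sqrt (K / N) := Real.sqrt_pos.2 (div_pos hK hN)
    have hpi : θ * Real.sqrt (K / N) < Real.pi := by
      refine lt_of_pow_lt_pow_left₀ 2 Real.pi_pos.le ?_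
      rw [mul_pow, Real.sq_sqrt (div_pos hK hN).le, ← mul_div_assoc, div_lt_iff₀ hN]
      linarith
    have hden : 0 < Real.sin (θ * Real.sqrt (K / N)) :=
      Real.sin_pos_of_pos_of_lt_pi (by positivity) hpi
    refine ⟨fun p => Real.sin (p.2.1 * p.2.2 * Real.sqrt (K / p.1)) /
      Real.sin (p.2.2 * Real.sqrt (K / p.1)), ?_, ?_, ?_⟩
    · have h1 : ContinuousAt (fun p : ℝ × ℝ × ℝ => Real.sqrt (K / p.1)) (N, t, θ) :=
        (continuousAt_const.div continuousAt_fst hN.ne').sqrt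
      have h2 : ContinuousAt (fun p : ℝ × ℝ × ℝ => p.2.1 * p.2.2) (N, t, θ) := by fun_prop
      have h3 : ContinuousAt (fun p : ℝ × ℝ × ℝ => p.2.2) (N, t, θ) := by fun_prop
      exact ContinuousAt.div (Real.continuous_sin.continuousAt.comp (h2.mul h1))
        (Real.continuous_sin.continuousAt.comp (h3.mul h1)) hden.ne'
    · refine div_pos (Real.sin_pos_of_pos_of_lt_pi (by positivity) ?_) hden
      refine lt_of_le_of_lt ?_ hpi
      rw [mul_assoc]
      exact mul_le_of_le_one_left (by positivity) ht1.le
    · filter_upwards [hev] with p hp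
      have : 0 < K * p.2.2 ^ 2 := by have := hp.2; positivity
      simp [sigmaCoef, not_le.2 hp.1, this]

/-- Lower semicontinuity of `τ_{K,N}^{(t)}(θ)` in `(N, t, θ)` off the critical distance. -/
theorem eventually_lt_tauCoef {K N t θ : ℝ} (hN : 1 < N) (ht : 0 < t) (ht1 : t < 1) (hθ : 0 < θ)
    (hne : K * θ ^ 2 ≠ (N - 1) * Real.pi ^ 2) {c : ℝ≥0∞} (hc : c < tauCoef K N t θ) :
    ∀ᶠ p : ℝ × ℝ × ℝ in 𝓝 (N, t, θ), c < tauCoef K p.1 p.2.1 p.2.2 := by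
  rcases lt_or_gt_of_ne hne with hlt | hgt
  · obtain ⟨r, hrc, hr0, hr⟩ := exists_sigmaCoef_eq (sub_pos.2 hN) ht ht1 hθ hlt
    have hsub : Tendsto (fun p : ℝ × ℝ × ℝ => ((p.1 - 1, p.2) : ℝ × ℝ × ℝ)) (𝓝 (N, t, θ))
        (𝓝 (N - 1, t, θ)) := by
      refine Continuous.tendsto' (by fun_prop) _ _ rfl
    have hrc' : ContinuousAt (fun p : ℝ × ℝ × ℝ => r (p.1 - 1, p.2)) (N, t, θ) :=
      Tendsto.comp hrc hsub
    have hform : ∀ᶠ p : ℝ × ℝ × ℝ in 𝓝 (N, t, θ), tauCoef K p.1 p.2.1 p.2.2 =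
        ENNReal.ofReal (p.2.1 ^ (1 / p.1) * r (p.1 - 1, p.2) ^ (1 - 1 / p.1)) := by
      have hN1 : ∀ᶠ p : ℝ × ℝ × ℝ in 𝓝 (N, t, θ), 1 < p.1 :=
        continuousAt_const.eventually_lt (by fun_prop) hN
      have ht0 : ∀ᶠ p : ℝ × ℝ × ℝ in 𝓝 (N, t, θ), 0 < p.2.1 :=
        continuousAt_const.eventually_lt (by fun_prop) ht
      have hrpos : ∀ᶠ p : ℝ × ℝ × ℝ in 𝓝 (N, t, θ), 0 < r (p.1 - 1, p.2) :=
        continuousAt_const.eventually_lt hrc' hr0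
      filter_upwards [hN1, ht0, hrpos, hsub.eventually hr] with p h1 h2 h3 h4
      rw [tauCoef, h4, ENNReal.ofReal_rpow_of_pos h3, ← ENNReal.ofReal_mul (by positivity)]
    have hcont : ContinuousAt (fun p : ℝ × ℝ × ℝ =>
        ENNReal.ofReal (p.2.1 ^ (1 / p.1) * r (p.1 - 1, p.2) ^ (1 - 1 / p.1))) (N, t, θ) := by
      have hinv : ContinuousAt (fun p : ℝ × ℝ × ℝ => 1 / p.1) (N, t, θ) :=
        continuousAt_const.div continuousAt_fst (by simp only; linarith)
      refine ENNReal.continuous_ofReal.continuousAt.comp (ContinuousAt.mul ?_ ?_)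
      · exact ContinuousAt.rpow (by fun_prop) hinv (Or.inl ht.ne')
      · exact ContinuousAt.rpow hrc' (continuousAt_const.sub hinv) (Or.inl hr0.ne')
    have h0 := hform.self_of_nhds
    simp only at h0
    rw [h0] at hc
    filter_upwards [hform, continuousAt_const.eventually_lt hcont hc] with p h1 h2
    rwa [h1]
  · have h1 : ∀ᶠ p : ℝ × ℝ × ℝ in 𝓝 (N, t, θ), (p.1 - 1) * Real.pi ^ 2 < K * p.2.2 ^ 2 :=
      ContinuousAt.eventually_lt (by fun_prop) (by fun_prop) hgt
    have hN1 : ∀ᶠ p : ℝ × ℝ × ℝ in 𝓝 (N, t, θ), 1 < p.1 :=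
      continuousAt_const.eventually_lt (by fun_prop) hN
    have ht0 : ∀ᶠ p : ℝ × ℝ × ℝ in 𝓝 (N, t, θ), 0 < p.2.1 :=
      continuousAt_const.eventually_lt (by fun_prop) ht
    filter_upwards [h1, hN1, ht0] with p h1 h2 h3
    have h4 : 0 < 1 - 1 / p.1 := by
      rw [sub_pos, div_lt_one (by linarith)]; exact h2
    rw [tauCoef, sigmaCoef, if_pos h1.le, ENNReal.top_rpow_of_pos h4, ENNReal.mul_top]
    · exact lt_of_lt_of_le hc le_top
    · simpa using Real.rpow_pos_of_pos h3 _

theorem exists_seq_approx (c : ℝ≥0∞) :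
    ∃ v : ℕ → ℝ≥0∞, Tendsto v atTop (𝓝 c) ∧ ∀ n, v n < c ∨ v n = 0 := by
  rcases eq_or_ne c 0 with rfl | hc
  · exact ⟨fun _ => 0, tendsto_const_nhds, fun _ => Or.inr rfl⟩
  · obtain ⟨v, _, hv, hvt⟩ := exists_seq_strictMono_tendsto' (pos_iff_ne_zero.2 hc)
    exact ⟨v, hvt, fun n => Or.inl (hv n).2⟩

theorem exists_seq_rat (x : ℝ) : ∃ v : ℕ → ℚ, Tendsto (fun n => (v n : ℝ)) atTop (𝓝 x) ∧
    ∀ n, x < v n := by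
  have : ∀ n : ℕ, ∃ r : ℚ, x < r ∧ (r : ℝ) < x + 1 / ((n : ℝ) + 1) := fun n =>
    exists_rat_btwn (by have : (0 : ℝ) < 1 / ((n : ℝ) + 1) := by positivity
                        linarith)
  choose v hv hv' using this
  refine ⟨v, ?_, hv⟩
  refine tendsto_of_tendsto_of_tendsto_of_le_of_le tendsto_const_nhds ?_ (fun n => (hv n).le)
    (fun n => (hv' n).le)
  simpa using (tendsto_const_nhds (x := x)).add (tendsto_one_div_add_atTop_nhds_zero_nat (𝕜 := ℝ))

end

/-! ### The infinitesimal inequality -/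

section

open Filter Topology

theorem tendsto_ofReal_rpow {y M : ℕ → ℝ} {y₀ N : ℝ} (hy : Tendsto y atTop (𝓝 y₀)) (hy₀ : 0 < y₀)
    (hM : Tendsto M atTop (𝓝 N)) (hN : N ≠ 0) :
    Tendsto (fun n => ENNReal.ofReal (y n) ^ (1 / M n)) atTop
      (𝓝 (ENNReal.ofReal y₀ ^ (1 / N))) := by
  rw [ENNReal.ofReal_rpow_of_pos hy₀]
  have h1 : Tendsto (fun n => y n ^ (1 / M n)) atTop (𝓝 (y₀ ^ (1 / N))) :=
    hy.rpow (tendsto_const_nhds.div hM hN) (Or.inl hy₀.ne')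
  refine (ENNReal.tendsto_ofReal h1).congr' ?_
  filter_upwards [hy.eventually_const_lt hy₀] with n hn
  rw [ENNReal.ofReal_rpow_of_pos hn]

/-- Shrinking intervals have mass asymptotic to the density times their length. -/
theorem exists_mean_seq {w : ℝ → ℝ≥0∞} {O : Set ℝ} (hO : IsOpen O) {h : ℝ → ℝ}
    (hh : ContinuousOn h O) (hpos : ∀ x ∈ O, 0 < h x) (hw : ∀ x ∈ O, w x = ENNReal.ofReal (h x))
    {x : ℝ} (hx : x ∈ O) {a e : ℕ → ℝ} (ha : Tendsto a atTop (𝓝 x)) (he : Tendsto e atTop (𝓝 0))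
    (he0 : ∀ n, 0 < e n) :
    ∃ H : ℕ → ℝ, Tendsto H atTop (𝓝 (h x)) ∧
      ∀ᶠ n in atTop, volume.withDensity w (Ioo (a n) (a n + e n)) =
        ENNReal.ofReal (H n * e n) := by
  obtain ⟨δ, hδ, hball⟩ := Metric.isOpen_iff.1 hO x hx
  have hb : Tendsto (fun n => a n + e n) atTop (𝓝 x) := by simpa using ha.add he
  have hsub : ∀ᶠ n in atTop, Icc (a n) (a n + e n) ⊆ O := by
    filter_upwards [ha.eventually (Metric.ball_mem_nhds x hδ),
      hb.eventually (Metric.ball_mem_nhds x hδ)] with n h1 h2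
    refine Subset.trans ?_ hball
    exact (convex_ball x δ).ordConnected.out h1 h2
  have hmv : ∀ᶠ n in atTop, ∃ ξ ∈ Ioo (a n) (a n + e n),
      volume.withDensity w (Ioo (a n) (a n + e n)) = ENNReal.ofReal (h ξ * e n) := by
    filter_upwards [hsub] with n hn
    have hn' : Ioo (a n) (a n + e n) ⊆ O := Ioo_subset_Icc_self.trans hn
    have hInt : IntegrableOn h (Ioo (a n) (a n + e n)) :=
      ((hh.mono hn).integrableOn_Icc).mono_set Ioo_subset_Icc_self
    obtain ⟨ξ, hξ, hξe⟩ := exists_eq_const_mul_setIntegral_of_nonneg (g := fun _ => (1 : ℝ))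
      (μ := volume) (isConnected_Ioo (lt_add_of_pos_right (a n) (he0 n))) measurableSet_Ioo
      (hh.mono hn') (by simp) (by simpa using hInt)
      (fun _ _ => zero_le_one)
    refine ⟨ξ, hξ, ?_⟩
    rw [withDensity_apply _ measurableSet_Ioo]
    have h1 : ∫⁻ y in Ioo (a n) (a n + e n), w y = 
        ∫⁻ y in Ioo (a n) (a n + e n), ENNReal.ofReal (h y) :=
      setLIntegral_congr_fun measurableSet_Ioo fun y hy => hw y (hn' hy)
    rw [h1, ← ofReal_integral_eq_lintegral_ofReal hInt]
    · congr 1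
      simpa [(he0 n).le] using hξe
    · rw [EventuallyLE, ae_restrict_iff' measurableSet_Ioo]
      exact ae_of_all _ fun y hy => (hpos y (hn' hy)).le
  have : ∀ n, ∃ ξ, (∃ ξ ∈ Ioo (a n) (a n + e n),
      volume.withDensity w (Ioo (a n) (a n + e n)) = ENNReal.ofReal (h ξ * e n)) →
      ξ ∈ Ioo (a n) (a n + e n) ∧
      volume.withDensity w (Ioo (a n) (a n + e n)) = ENNReal.ofReal (h ξ * e n) := by
    intro n
    by_cases hn : ∃ ξ ∈ Ioo (a n) (a n + e n),
      volume.withDensity w (Ioo (a n) (a n + e n)) = ENNReal.ofReal (h ξ * e n)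
    · obtain ⟨ξ, h1⟩ := hn
      exact ⟨ξ, fun _ => h1⟩
    · exact ⟨0, fun h => absurd h hn⟩
  choose ξ hξ using this
  refine ⟨fun n => h (ξ n), ?_, ?_⟩
  · have hξt : Tendsto ξ atTop (𝓝 x) := by
      refine tendsto_of_tendsto_of_tendsto_of_le_of_le' ha hb ?_ ?_
      · filter_upwards [hmv] with n hn using (hξ n hn).1.1.le
      · filter_upwards [hmv] with n hn using (hξ n hn).1.2.le
    exact ((hh.continuousAt (hO.mem_nhds hx)).tendsto).comp hξt
  · filter_upwards [hmv] with n hn using (hξ n hn).2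

/-- Infinitesimal form of the interval inequality, obtained by shrinking the two intervals to
points with prescribed ratio of lengths `d₀ : d₁`. -/
theorem key_of_intervalIneq {K N : ℝ} (hN : 1 < N) {w : ℝ → ℝ≥0∞}
    (hI : IntervalIneq K N (volume.withDensity w)) {O : Set ℝ} (hO : IsOpen O)
    (hOc : Convex ℝ O) {h : ℝ → ℝ} (hh : ContinuousOn h O) (hpos : ∀ x ∈ O, 0 < h x)
    (hw : ∀ x ∈ O, w x = ENNReal.ofReal (h x)) {x₀ x₁ : ℝ} (hx₀ : x₀ ∈ O) (hx₁ : x₁ ∈ O)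
    (h01 : x₀ < x₁) {t : ℝ} (ht : 0 < t) (ht1 : t < 1) {N' : ℝ} (hN' : N ≤ N') {d₀ d₁ : ℝ}
    (hd₀ : 0 < d₀) (hd₁ : 0 < d₁) (hne : K * (x₁ - x₀) ^ 2 ≠ (N' - 1) * Real.pi ^ 2) :
    tauCoef K N' (1 - t) (x₁ - x₀) * ENNReal.ofReal (h x₀ * d₀) ^ (1 / N')
      + tauCoef K N' t (x₁ - x₀) * ENNReal.ofReal (h x₁ * d₁) ^ (1 / N')
      ≤ ENNReal.ofReal (h ((1 - t) * x₀ + t * x₁) * ((1 - t) * d₀ + t * d₁)) ^ (1 / N') := by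
  have hxt : (1 - t) * x₀ + t * x₁ ∈ O :=
    hOc hx₀ hx₁ (by linarith) ht.le (by ring)
  have hN'1 : 1 < N' := hN.trans_le hN'
  have hθ : 0 < x₁ - x₀ := sub_pos.2 h01
  obtain ⟨A₀, hA₀, -⟩ := exists_seq_rat x₀
  obtain ⟨A₁, hA₁, -⟩ := exists_seq_rat x₁
  obtain ⟨D₀, hD₀, hD₀p⟩ := exists_seq_rat d₀
  obtain ⟨D₁, hD₁, hD₁p⟩ := exists_seq_rat d₁
  obtain ⟨T, hT, hTp⟩ := exists_seq_rat t
  obtain ⟨M, hM, hMp⟩ := exists_seq_rat N'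
  let ε : ℕ → ℚ := fun n => 1 / ((n : ℚ) + 1)
  have hε0 : ∀ n, (0 : ℝ) < ε n := fun n => by simp only [ε]; push_cast; positivity
  have hε : Tendsto (fun n => (ε n : ℝ)) atTop (𝓝 0) := by
    simpa [ε] using tendsto_one_div_add_atTop_nhds_zero_nat (𝕜 := ℝ)
  have hD₀0 : ∀ n, (0 : ℝ) < D₀ n := fun n => hd₀.trans (hD₀p n)
  have hD₁0 : ∀ n, (0 : ℝ) < D₁ n := fun n => hd₁.trans (hD₁p n)
  have hT0 : ∀ n, (0 : ℝ) < T n := fun n => ht.trans (hTp n)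
  have hTinf : ∀ᶠ n in atTop, (T n : ℝ) < 1 := hT.eventually_lt_const ht1
  -- the interpolated length; `L'` replaces it by `1` at the finitely many indices where it is not
  -- positive
  let L : ℕ → ℝ := fun n => (1 - T n) * D₀ n + T n * D₁ n
  have hL : Tendsto L atTop (𝓝 ((1 - t) * d₀ + t * d₁)) :=
    ((tendsto_const_nhds.sub hT).mul hD₀).add (hT.mul hD₁)
  have hL0 : 0 < (1 - t) * d₀ + t * d₁ := by
    have : 0 < 1 - t := by linarith
    positivity
  let L' : ℕ → ℝ := fun n => if 0 < L n then L n else 1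
  have hLL' : ∀ᶠ n in atTop, L' n = L n := by
    filter_upwards [hL.eventually_const_lt hL0] with n hn
    simp [L', hn]
  have hL' : Tendsto L' atTop (𝓝 ((1 - t) * d₀ + t * d₁)) :=
    hL.congr' (hLL'.mono fun n hn => hn.symm)
  have hLpos' : ∀ n, 0 < L' n := by
    intro n
    simp only [L']
    split_ifs with hn
    · exact hn
    · exact one_pos
  obtain ⟨H₀, hH₀, hν₀⟩ := exists_mean_seq hO hh hpos hw hx₀ hA₀
    (e := fun n => ε n * D₀ n) (by simpa using hε.mul hD₀)
    (fun n => mul_pos (hε0 n) (hD₀0 n))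
  obtain ⟨H₁, hH₁, hν₁⟩ := exists_mean_seq hO hh hpos hw hx₁ hA₁
    (e := fun n => ε n * D₁ n) (by simpa using hε.mul hD₁)
    (fun n => mul_pos (hε0 n) (hD₁0 n))
  obtain ⟨Ht, hHt, hνt⟩ := exists_mean_seq hO hh hpos hw hxt
    (a := fun n => (1 - T n) * A₀ n + T n * A₁ n) (e := fun n => ε n * L' n)
    (((tendsto_const_nhds.sub hT).mul hA₀).add (hT.mul hA₁)) (by simpa using hε.mul hL')
    (fun n => (mul_pos (hLpos' n) (hε0 n)).trans_eq (mul_comm _ _))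
  -- the inequality with constants below the coefficients
  have main : ∀ c₀ c₁ : ℝ≥0∞, (c₀ < tauCoef K N' (1 - t) (x₁ - x₀) ∨ c₀ = 0) →
      (c₁ < tauCoef K N' t (x₁ - x₀) ∨ c₁ = 0) → c₀ ≠ ∞ → c₁ ≠ ∞ →
      c₀ * ENNReal.ofReal (h x₀ * d₀) ^ (1 / N') + c₁ * ENNReal.ofReal (h x₁ * d₁) ^ (1 / N')
      ≤ ENNReal.ofReal (h ((1 - t) * x₀ + t * x₁) * ((1 - t) * d₀ + t * d₁)) ^ (1 / N') := by
    intro c₀ c₁ hc₀ hc₁ hc₀t hc₁t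
    have hlow : ∀ (s : ℝ) (c : ℝ≥0∞) (σ : ℕ → ℝ), 0 < s → s < 1 → Tendsto σ atTop (𝓝 s) →
        (c < tauCoef K N' s (x₁ - x₀) ∨ c = 0) →
        ∀ᶠ n in atTop, ∀ θ ∈ Icc ((A₁ n : ℝ) - (A₀ n + ε n * D₀ n))
          (A₁ n + ε n * D₁ n - A₀ n), c ≤ tauCoef K (M n) (σ n) θ := by
      intro s c σ hs hs1 hσ hc
      rcases hc with hc | rfl
      swap
      · exact Eventually.of_forall fun n θ _ => zero_le
      obtain ⟨δ, hδ, hb⟩ := Metric.eventually_nhds_iff.1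
        (eventually_lt_tauCoef hN'1 hs hs1 hθ hne hc)
      have hl : Tendsto (fun n => (A₁ n : ℝ) - (A₀ n + ε n * D₀ n)) atTop (𝓝 (x₁ - x₀)) := by
        simpa using hA₁.sub (hA₀.add (hε.mul hD₀))
      have hr : Tendsto (fun n => (A₁ n : ℝ) + ε n * D₁ n - A₀ n) atTop (𝓝 (x₁ - x₀)) := by
        simpa using (hA₁.add (hε.mul hD₁)).sub hA₀
      filter_upwards [hl.eventually (Metric.ball_mem_nhds _ hδ),
        hr.eventually (Metric.ball_mem_nhds _ hδ), hM.eventually (Metric.ball_mem_nhds _ hδ),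
        hσ.eventually (Metric.ball_mem_nhds _ hδ)] with n h1 h2 h3 h4 θ hθ
      refine (@hb (M n, σ n, θ) ?_).le
      rw [Prod.dist_eq, Prod.dist_eq]
      refine max_lt h3 (max_lt h4 ?_)
      exact (convex_ball (x₁ - x₀) δ).ordConnected.out h1 h2 hθ
    have hl₀ := hlow (1 - t) c₀ (fun n => 1 - T n) (by linarith) (by linarith)
      (tendsto_const_nhds.sub hT) hc₀
    have hl₁ := hlow t c₁ (fun n => T n) ht ht1 hT hc₁
    have hlim₀ := tendsto_ofReal_rpow (hH₀.mul hD₀) (mul_pos (hpos _ hx₀) hd₀) hM (by linarith)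
    have hlim₁ := tendsto_ofReal_rpow (hH₁.mul hD₁) (mul_pos (hpos _ hx₁) hd₁) hM (by linarith)
    have hlimt := tendsto_ofReal_rpow (hHt.mul hL') (mul_pos (hpos _ hxt) hL0) hM (by linarith)
    refine le_of_tendsto_of_tendsto
      ((ENNReal.Tendsto.const_mul hlim₀ (Or.inr hc₀t)).add
        (ENNReal.Tendsto.const_mul hlim₁ (Or.inr hc₁t))) hlimt ?_
    have hsep : ∀ᶠ n in atTop, A₀ n + ε n * D₀ n ≤ A₁ n := by
      have hl : Tendsto (fun n => (A₀ n : ℝ) + ε n * D₀ n) atTop (𝓝 x₀) := by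
        simpa using hA₀.add (hε.mul hD₀)
      filter_upwards [hl.eventually_lt hA₁ h01] with n hn
      exact_mod_cast hn.le
    filter_upwards [hl₀, hl₁, hsep, hν₀, hν₁, hνt, hTinf, hLL',
      hH₀.eventually_const_lt (hpos _ hx₀), hH₁.eventually_const_lt (hpos _ hx₁),
      hHt.eventually_const_lt (hpos _ hxt)] with n e1 e2 e3 e4 e5 e6 e7 e8 e9 e10 e11
    have hin := hI (A₀ n) (A₀ n + ε n * D₀ n) (A₁ n) (A₁ n + ε n * D₁ n) (T n) (M n) e3
      (by exact_mod_cast hT0 n) (by exact_mod_cast e7) (hN'.trans (hMp n).le)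
    push_cast at hin
    have hend : (1 - (T n : ℝ)) * (A₀ n + ε n * D₀ n) + T n * (A₁ n + ε n * D₁ n) =
        (1 - T n) * A₀ n + T n * A₁ n + ε n * L' n := by
      rw [e8]; simp only [L]; ring
    rw [e4, e5, hend, e6] at hin
    have q0 : 0 < H₀ n * (ε n * D₀ n) := mul_pos e9 (mul_pos (hε0 n) (hD₀0 n))
    have q1 : 0 < H₁ n * (ε n * D₁ n) := mul_pos e10 (mul_pos (hε0 n) (hD₁0 n))
    replace hin := hin (by simpa using q0) (by simpa using q1)
    have hM0 : 0 ≤ 1 / (M n : ℝ) := by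
      have : (0 : ℝ) < M n := by linarith [hMp n]
      positivity
    have hsplit : ∀ y z : ℝ, 0 ≤ y → ENNReal.ofReal (y * (ε n * z)) ^ (1 / (M n : ℝ)) =
        ENNReal.ofReal (ε n) ^ (1 / (M n : ℝ)) * ENNReal.ofReal (y * z) ^ (1 / (M n : ℝ)) := by
      intro y z hy
      rw [← ENNReal.mul_rpow_of_nonneg _ _ hM0, ← ENNReal.ofReal_mul (hε0 n).le]
      congr 2; ring
    rw [hsplit _ _ e9.le, hsplit _ _ e10.le, hsplit _ _ e11.le] at hin
    have hE0 : ENNReal.ofReal (ε n) ^ (1 / (M n : ℝ)) ≠ 0 :=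
      (ENNReal.rpow_pos (by simpa using hε0 n) ENNReal.ofReal_ne_top).ne'
    have hEt : ENNReal.ofReal (ε n) ^ (1 / (M n : ℝ)) ≠ ∞ :=
      ENNReal.rpow_ne_top_of_nonneg hM0 ENNReal.ofReal_ne_top
    rw [← ENNReal.mul_le_mul_iff_right hE0 hEt]
    refine le_trans ?_ hin
    rw [mul_add, mul_left_comm, mul_left_comm (ENNReal.ofReal (ε n) ^ (1 / (M n : ℝ)))]
    gcongr
    · exact le_iInf₂ e1
    · exact le_iInf₂ e2
  obtain ⟨v₀, hv₀, hv₀'⟩ := exists_seq_approx (tauCoef K N' (1 - t) (x₁ - x₀))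
  obtain ⟨v₁, hv₁, hv₁'⟩ := exists_seq_approx (tauCoef K N' t (x₁ - x₀))
  have hfin : ∀ y : ℝ, ENNReal.ofReal y ^ (1 / N') ≠ ∞ := fun y =>
    ENNReal.rpow_ne_top_of_nonneg (by positivity) ENNReal.ofReal_ne_top
  refine le_of_tendsto ((ENNReal.Tendsto.mul_const hv₀ (Or.inr (hfin _))).add
    (ENNReal.Tendsto.mul_const hv₁ (Or.inr (hfin _)))) (Eventually.of_forall fun n => ?_)
  refine main _ _ (hv₀' n) (hv₁' n) ?_ ?_
  · rcases hv₀' n with h | h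
    · exact h.ne_top
    · simp [h]
  · rcases hv₁' n with h | h
    · exact h.ne_top
    · simp [h]

end

/-! ### Concavity of the density in the interior -/

section

open Filter Topology

theorem sigmaCoef_zero_dist (K : ℝ) {N : ℝ} (hN : 0 < N) (t : ℝ) :
    sigmaCoef K N t 0 = ENNReal.ofReal t := by
  have : ¬ N * Real.pi ^ 2 ≤ 0 := not_le.2 (by positivity)
  simp [sigmaCoef, this]

theorem sigmaCoef_zero_time {K N θ : ℝ} (hlt : K * θ ^ 2 < N * Real.pi ^ 2) :
    sigmaCoef K N 0 θ = 0 := by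
  simp [sigmaCoef, not_le.2 hlt]

theorem sigmaCoef_one_time {K N θ : ℝ} (hN : 0 < N) (hθ : 0 ≤ θ)
    (hlt : K * θ ^ 2 < N * Real.pi ^ 2) :
    sigmaCoef K N 1 θ = 1 := by
  rw [sigmaCoef, if_neg (not_le.2 hlt)]
  split_ifs with h1 h2
  · have hθ' : 0 < θ := lt_of_le_of_ne hθ (by rintro rfl; simp at h1)
    have hK : 0 < K := pos_of_mul_pos_left h1 (by positivity)
    have hpi : θ * Real.sqrt (K / N) < Real.pi := by
      refine lt_of_pow_lt_pow_left₀ 2 Real.pi_pos.le ?_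
      rw [mul_pow, Real.sq_sqrt (div_pos hK hN).le, ← mul_div_assoc, div_lt_iff₀ hN]
      linarith
    have hs : 0 < Real.sqrt (K / N) := Real.sqrt_pos.2 (div_pos hK hN)
    have hden : 0 < Real.sin (θ * Real.sqrt (K / N)) :=
      Real.sin_pos_of_pos_of_lt_pi (by positivity) hpi
    rw [one_mul, div_self hden.ne', ENNReal.ofReal_one]
  · simp
  · have hθ' : 0 < θ := lt_of_le_of_ne hθ (by rintro rfl; simp at h2)
    have hK : K < 0 := by
      by_contra hK
      have : 0 ≤ K * θ ^ 2 := mul_nonneg (not_lt.1 hK) (by positivity)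
      exact h2 (le_antisymm (not_lt.1 h1) this)
    have hs : 0 < Real.sqrt (-K / N) := Real.sqrt_pos.2 (div_pos (by linarith) hN)
    have hden : 0 < Real.sinh (θ * Real.sqrt (-K / N)) := Real.sinh_pos_iff.2 (by positivity)
    rw [one_mul, div_self hden.ne', ENNReal.ofReal_one]

theorem tauCoef_zero_dist (K : ℝ) {N : ℝ} (hN : 1 < N) {t : ℝ} (ht : 0 ≤ t) :
    tauCoef K N t 0 = ENNReal.ofReal t := by
  have hN0 : 0 < N := by linarith
  have h1 : 0 < 1 - 1 / N := by rw [sub_pos, div_lt_one hN0]; exact hN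
  rw [tauCoef, sigmaCoef_zero_dist K (sub_pos.2 hN)]
  rcases ht.eq_or_lt with rfl | ht
  · rw [ENNReal.ofReal_zero, ENNReal.zero_rpow_of_pos h1, mul_zero]
  · rw [ENNReal.ofReal_rpow_of_pos ht, ← ENNReal.ofReal_mul (by positivity), ← Real.rpow_add ht]
    simp

theorem tauCoef_zero_time (K : ℝ) {N : ℝ} (hN : 1 < N) (θ : ℝ) : tauCoef K N 0 θ = 0 := by
  have hN0 : 0 < N := by linarith
  rw [tauCoef, Real.zero_rpow (by positivity)]
  simp

theorem tauCoef_one_time {K N θ : ℝ} (hN : 1 < N) (hθ : 0 ≤ θ)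
    (hlt : K * θ ^ 2 < (N - 1) * Real.pi ^ 2) : tauCoef K N 1 θ = 1 := by
  rw [tauCoef, sigmaCoef_one_time (sub_pos.2 hN) hθ hlt]
  simp

section OneD
variable {K N : ℝ} {w : ℝ → ℝ≥0∞} {O : Set ℝ} {h : ℝ → ℝ}

/-- Bonnet–Myers bound: for `K > 0`, any two points of an open interval on which the density is
positive are at distance less than `π √((N-1)/K)`. -/
theorem dist_lt_of_intervalIneq (hN : 1 < N)
    (hI : IntervalIneq K N (volume.withDensity w)) (hO : IsOpen O)
    (hOc : Convex ℝ O) (hh : ContinuousOn h O) (hpos : ∀ x ∈ O, 0 < h x)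
    (hw : ∀ x ∈ O, w x = ENNReal.ofReal (h x)) {x₀ x₁ : ℝ} (hx₀ : x₀ ∈ O) (hx₁ : x₁ ∈ O)
    (h01 : x₀ ≤ x₁) : K * (x₁ - x₀) ^ 2 < (N - 1) * Real.pi ^ 2 := by
  by_contra hcon
  rw [not_lt] at hcon
  have hpi := Real.pi_pos
  have hn : 0 < N - 1 := sub_pos.2 hN
  have hK : 0 < K := by
    refine pos_of_mul_pos_left (b := (x₁ - x₀) ^ 2) ?_ (by positivity)
    exact lt_of_lt_of_le (by positivity) hcon
  -- moving `x₁` slightly to the right makes the distance supercritical, so the coefficient is `∞`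
  obtain ⟨δ, hδ, hb⟩ := Metric.isOpen_iff.1 hO x₁ hx₁
  have hx₁' : x₁ + δ / 2 ∈ O := hb (by
    rw [Metric.mem_ball, Real.dist_eq, add_sub_cancel_left, abs_of_pos (by positivity)]
    linarith)
  have hgt : (N - 1) * Real.pi ^ 2 < K * (x₁ + δ / 2 - x₀) ^ 2 := by
    refine hcon.trans_lt (mul_lt_mul_of_pos_left ?_ hK)
    exact pow_lt_pow_left₀ (by linarith) (by linarith) two_ne_zero
  have := key_of_intervalIneq hN hI hO hOc hh hpos hw hx₀ hx₁' (by linarith) (t := 1 / 2)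
    (by norm_num) (by norm_num) le_rfl one_pos one_pos hgt.ne'
  have h4 : 0 < 1 - 1 / N := by
    rw [sub_pos, div_lt_one (by linarith)]; exact hN
  have htop : tauCoef K N (1 / 2) (x₁ + δ / 2 - x₀) = ∞ := by
    rw [tauCoef, sigmaCoef, if_pos hgt.le, ENNReal.top_rpow_of_pos h4, ENNReal.mul_top]
    simpa using Real.rpow_pos_of_pos (by norm_num : (0 : ℝ) < 2⁻¹) _
  rw [htop, ENNReal.top_mul, add_top, top_le_iff] at this
  · exact ENNReal.rpow_ne_top_of_nonneg (by positivity) ENNReal.ofReal_ne_top this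
  · exact (ENNReal.rpow_pos (by simpa using hpos _ hx₁') ENNReal.ofReal_ne_top).ne'

/-- The infinitesimal inequality without the restrictions of `key_of_intervalIneq` that
`x₀ < x₁`, `0 < t < 1` and that the distance be non-critical. -/
theorem key_full (hN : 1 < N)
    (hI : IntervalIneq K N (volume.withDensity w)) (hO : IsOpen O)
    (hOc : Convex ℝ O) (hh : ContinuousOn h O) (hpos : ∀ x ∈ O, 0 < h x)
    (hw : ∀ x ∈ O, w x = ENNReal.ofReal (h x)) {x₀ x₁ : ℝ} (hx₀ : x₀ ∈ O) (hx₁ : x₁ ∈ O)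
    {t : ℝ} (ht : t ∈ Icc (0 : ℝ) 1) {N' : ℝ} (hN' : N ≤ N') {d₀ d₁ : ℝ}
    (hd₀ : 0 < d₀) (hd₁ : 0 < d₁) :
    tauCoef K N' (1 - t) |x₀ - x₁| * ENNReal.ofReal (h x₀ * d₀) ^ (1 / N')
      + tauCoef K N' t |x₀ - x₁| * ENNReal.ofReal (h x₁ * d₁) ^ (1 / N')
      ≤ ENNReal.ofReal (h ((1 - t) * x₀ + t * x₁) * ((1 - t) * d₀ + t * d₁)) ^ (1 / N') := by
  have hN'1 : 1 < N' := hN.trans_le hN'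
  have hlt : ∀ {x y}, x ∈ O → y ∈ O → x ≤ y → K * (y - x) ^ 2 < (N' - 1) * Real.pi ^ 2 := by
    intro x y hx hy hxy
    refine (dist_lt_of_intervalIneq hN hI hO hOc hh hpos hw hx hy hxy).trans_le ?_
    gcongr
  have hlt' : K * |x₀ - x₁| ^ 2 < (N' - 1) * Real.pi ^ 2 := by
    rw [sq_abs]
    rcases le_total x₀ x₁ with h01 | h01
    · rw [← neg_sub, neg_sq]; exact hlt hx₀ hx₁ h01
    · exact hlt hx₁ hx₀ h01
  rcases ht.1.eq_or_lt with rfl | ht0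
  · rw [tauCoef_zero_time K hN'1, sub_zero, tauCoef_one_time hN'1 (abs_nonneg _) hlt']
    simp
  rcases ht.2.eq_or_lt with rfl | ht1
  · rw [sub_self, tauCoef_zero_time K hN'1, tauCoef_one_time hN'1 (abs_nonneg _) hlt']
    simp
  rcases lt_trichotomy x₀ x₁ with h01 | rfl | h01
  · have := key_of_intervalIneq hN hI hO hOc hh hpos hw hx₀ hx₁ h01 ht0 ht1 hN' hd₀ hd₁
      (hlt hx₀ hx₁ h01.le).ne
    rwa [abs_sub_comm, abs_of_pos (sub_pos.2 h01)]
  · have hx : (1 - t) * x₀ + t * x₀ = x₀ := by ring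
    have h1t : 0 < 1 - t := by linarith
    have hp0 := mul_pos (hpos _ hx₀) hd₀
    have hp1 := mul_pos (hpos _ hx₀) hd₁
    rw [hx, sub_self, abs_zero, tauCoef_zero_dist K hN'1 h1t.le, tauCoef_zero_dist K hN'1 ht0.le,
      ENNReal.ofReal_rpow_of_pos hp0, ENNReal.ofReal_rpow_of_pos hp1, ← ENNReal.ofReal_mul h1t.le,
      ← ENNReal.ofReal_mul ht0.le, ← ENNReal.ofReal_add (by positivity) (by positivity),
      ENNReal.ofReal_rpow_of_pos (mul_pos (hpos _ hx₀) (by positivity))]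
    refine ENNReal.ofReal_le_ofReal ?_
    have hc := (Real.concaveOn_rpow (p := 1 / N') (by positivity)
      (by rw [div_le_one (by linarith)]; exact hN'1.le)).2 (mem_Ici.2 hp0.le) (mem_Ici.2 hp1.le)
      h1t.le ht0.le (by ring)
    simp only [smul_eq_mul] at hc
    refine hc.trans (le_of_eq ?_)
    congr 1; ring
  · have := key_of_intervalIneq hN hI hO hOc hh hpos hw hx₁ hx₀ h01 (t := 1 - t) (by linarith)
      (by linarith) hN' hd₁ hd₀ (hlt hx₁ hx₀ h01.le).ne
    rw [abs_of_pos (sub_pos.2 h01), add_comm]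
    rw [show 1 - (1 - t) = t by ring] at this
    rwa [add_comm ((1 - t) * x₀), add_comm ((1 - t) * d₀)]

/-- With length `d = s y^{1/(N-1)} / t`, where `s` is the `σ`-coefficient and `y` the density, the
term `τ (y d)^{1/N}` of the infinitesimal inequality becomes `s y^{1/(N-1)}`. -/
theorem tau_optimal {N t s y : ℝ} (hN : 1 < N) (ht : 0 < t) (hs : 0 < s) (hy : 0 < y) :
    t ^ (1 / N) * s ^ (1 - 1 / N) * (y * (s * y ^ (1 / (N - 1)) / t)) ^ (1 / N) =
      s * y ^ (1 / (N - 1)) := by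
  have hn : 0 < N - 1 := sub_pos.2 hN
  have hN0 : 0 < N := by linarith
  have e1 : (y * (s * y ^ (1 / (N - 1)) / t)) ^ (1 / N) =
      y ^ (1 / (N - 1)) * s ^ (1 / N) * (t ^ (1 / N))⁻¹ := by
    have : y * (s * y ^ (1 / (N - 1)) / t) = y ^ (1 + 1 / (N - 1)) * s * t⁻¹ := by
      rw [Real.rpow_add hy, Real.rpow_one]; ring
    rw [this, Real.mul_rpow (by positivity) (by positivity), Real.mul_rpow (by positivity) hs.le,
      ← Real.rpow_mul hy.le, Real.inv_rpow ht.le]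
    rw [show (1 + 1 / (N - 1)) * (1 / N) = 1 / (N - 1) by field_simp; ring]
  have e2 : s ^ (1 - 1 / N) * s ^ (1 / N) = s := by
    rw [← Real.rpow_add hs]; simp
  have e3 : t ^ (1 / N) ≠ 0 := (Real.rpow_pos_of_pos ht _).ne'
  rw [e1]
  calc _ = (t ^ (1 / N) * (t ^ (1 / N))⁻¹) * (s ^ (1 - 1 / N) * s ^ (1 / N)) *
        y ^ (1 / (N - 1)) := by ring
    _ = _ := by rw [mul_inv_cancel₀ e3, e2, one_mul]

/-- `σ`-concavity of `h^{1/(N-1)}` in the interior. The lengths `d₀ = A / (1 - t)` and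
`d₁ = B / t`, with `A`, `B` the two summands on the left, turn the infinitesimal inequality into
`A + B ≤ (h_t (A + B))^{1/N}`. -/
theorem density_interior (hN : 1 < N)
    (hI : IntervalIneq K N (volume.withDensity w)) (hO : IsOpen O)
    (hOc : Convex ℝ O) (hh : ContinuousOn h O) (hpos : ∀ x ∈ O, 0 < h x)
    (hw : ∀ x ∈ O, w x = ENNReal.ofReal (h x)) {x₀ x₁ : ℝ} (hx₀ : x₀ ∈ O) (hx₁ : x₁ ∈ O)
    (h01 : x₀ < x₁) {t : ℝ} (ht : 0 < t) (ht1 : t < 1) :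
    sigmaCoef K (N - 1) (1 - t) (x₁ - x₀) * ENNReal.ofReal (h x₀ ^ (1 / (N - 1)))
      + sigmaCoef K (N - 1) t (x₁ - x₀) * ENNReal.ofReal (h x₁ ^ (1 / (N - 1)))
      ≤ ENNReal.ofReal (h ((1 - t) * x₀ + t * x₁) ^ (1 / (N - 1))) := by
  have hlt := dist_lt_of_intervalIneq hN hI hO hOc hh hpos hw hx₀ hx₁ h01.le
  have hn : 0 < N - 1 := sub_pos.2 hN
  have h1t : 0 < 1 - t := by linarith
  obtain ⟨r₀, -, hr₀, he₀⟩ := exists_sigmaCoef_eq hn h1t (by linarith) (sub_pos.2 h01) hlt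
  obtain ⟨r₁, -, hr₁, he₁⟩ := exists_sigmaCoef_eq hn ht ht1 (sub_pos.2 h01) hlt
  have he₀ := he₀.self_of_nhds
  have he₁ := he₁.self_of_nhds
  simp only at he₀ he₁
  set s₀ := r₀ (N - 1, 1 - t, x₁ - x₀)
  set s₁ := r₁ (N - 1, t, x₁ - x₀)
  have hy₀ := hpos _ hx₀
  have hy₁ := hpos _ hx₁
  have hyt := hpos _ (hOc hx₀ hx₁ h1t.le ht.le (by ring))
  simp only [smul_eq_mul] at hyt
  set A := s₀ * h x₀ ^ (1 / (N - 1)) with hA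
  set B := s₁ * h x₁ ^ (1 / (N - 1)) with hB
  have hA0 : 0 < A := by positivity
  have hB0 : 0 < B := by positivity
  have key := key_of_intervalIneq hN hI hO hOc hh hpos hw hx₀ hx₁ h01 ht ht1 le_rfl
    (d₀ := A / (1 - t)) (d₁ := B / t) (by positivity) (by positivity) hlt.ne
  have hsum : (1 - t) * (A / (1 - t)) + t * (B / t) = A + B := by field_simp
  have hN1 : 0 ≤ 1 - 1 / N := by
    rw [sub_nonneg, div_le_one (by linarith)]; exact hN.le
  rw [hsum, tauCoef, tauCoef, he₀, he₁, ENNReal.ofReal_rpow_of_pos hr₀,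
    ENNReal.ofReal_rpow_of_pos hr₁, ENNReal.ofReal_rpow_of_pos (by positivity),
    ENNReal.ofReal_rpow_of_pos (by positivity), ENNReal.ofReal_rpow_of_pos (by positivity),
    ← ENNReal.ofReal_mul (by positivity), ← ENNReal.ofReal_mul (by positivity),
    ← ENNReal.ofReal_mul (by positivity), ← ENNReal.ofReal_mul (by positivity),
    hA, hB, tau_optimal hN h1t hr₀ hy₀, tau_optimal hN ht hr₁ hy₁, ← hA, ← hB,
    ← ENNReal.ofReal_add hA0.le hB0.le, ENNReal.ofReal_le_ofReal_iff (by positivity)] at key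
  rw [he₀, he₁, ← ENNReal.ofReal_mul hr₀.le, ← ENNReal.ofReal_mul hr₁.le, ← hA, ← hB,
    ← ENNReal.ofReal_add hA0.le hB0.le]
  refine ENNReal.ofReal_le_ofReal ?_
  have hN0 : 0 < N := by linarith
  have hC : 0 < A + B := by positivity
  rw [one_div, Real.le_rpow_inv_iff_of_pos hC.le (by positivity) hN0] at key
  rw [one_div, Real.le_rpow_inv_iff_of_pos hC.le hyt.le hn]
  refine le_of_mul_le_mul_right (le_trans (le_of_eq ?_) key) hC
  rw [← Real.rpow_add_one hC.ne', sub_add_cancel]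

end OneD

end

/-! ### Concavity of the density up to the endpoints -/

section

open Filter Topology

section OneD
variable {K N : ℝ} {w : ℝ → ℝ≥0∞} {J : Set ℝ} {h : ℝ → ℝ}

/-- `σ`-concavity of `h^{1/(N-1)}` up to the endpoints, by continuity. At the critical distance
`K (R₁ - R₀)² = (N - 1) π²`, where `σ = ∞`, the density vanishes at both endpoints. -/
theorem density_full (hN : 1 < N)
    (hI : IntervalIneq K N (volume.withDensity w)) (hJ : Convex ℝ J) (hh : ContinuousOn h J)
    (hpos : ∀ x ∈ interior J, 0 < h x)
    (hw : ∀ x ∈ interior J, w x = ENNReal.ofReal (h x)) {R₀ R₁ : ℝ} (hR₀ : R₀ ∈ J) (hR₁ : R₁ ∈ J)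
    (h01 : R₀ ≤ R₁) {t : ℝ} (ht : t ∈ Icc (0 : ℝ) 1) :
    sigmaCoef K (N - 1) (1 - t) (R₁ - R₀) * ENNReal.ofReal (h R₀ ^ (1 / (N - 1)))
      + sigmaCoef K (N - 1) t (R₁ - R₀) * ENNReal.ofReal (h R₁ ^ (1 / (N - 1)))
      ≤ ENNReal.ofReal (h ((1 - t) * R₀ + t * R₁) ^ (1 / (N - 1))) := by
  have hn : 0 < N - 1 := sub_pos.2 hN
  have hp : 0 < 1 / (N - 1) := by positivity
  rcases h01.eq_or_lt with rfl | h01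
  · rw [sub_self, sigmaCoef_zero_dist K hn, sigmaCoef_zero_dist K hn, ← add_mul,
      ← ENNReal.ofReal_add (by linarith [ht.2]) ht.1, ← add_mul]
    simp
  have hO : IsOpen (interior J) := isOpen_interior
  have hOc : Convex ℝ (interior J) := hJ.interior
  have hhO := hh.mono interior_subset
  have hIoo : Ioo R₀ R₁ ⊆ interior J :=
    interior_maximal (Ioo_subset_Icc_self.trans (hJ.ordConnected.out hR₀ hR₁)) isOpen_Ioo
  let δ : ℕ → ℝ := fun n => (R₁ - R₀) / 3 * (1 / ((n : ℝ) + 1))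
  have hθ : 0 < R₁ - R₀ := sub_pos.2 h01
  have hδ0 : ∀ n, 0 < δ n := fun n => by simp only [δ]; positivity
  have hδ3 : ∀ n, δ n ≤ (R₁ - R₀) / 3 := fun n =>
    mul_le_of_le_one_right (by positivity) (by rw [div_le_one (by positivity)]; simp)
  have hδ : Tendsto δ atTop (𝓝 0) := by
    simpa [δ] using (tendsto_one_div_add_atTop_nhds_zero_nat (𝕜 := ℝ)).const_mul ((R₁ - R₀) / 3)
  have hx : ∀ n, R₀ + δ n ∈ interior J := fun n =>
    hIoo ⟨by linarith [hδ0 n], by linarith [hδ3 n]⟩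
  have hy : ∀ n, R₁ - δ n ∈ interior J := fun n =>
    hIoo ⟨by linarith [hδ3 n], by linarith [hδ0 n]⟩
  have hxy : ∀ n, R₀ + δ n < R₁ - δ n := fun n => by linarith [hδ3 n]
  have hxt : Tendsto (fun n => R₀ + δ n) atTop (𝓝 R₀) := by simpa using hδ.const_add R₀
  have hyt : Tendsto (fun n => R₁ - δ n) atTop (𝓝 R₁) := by simpa using hδ.const_sub R₁
  have hdt : Tendsto (fun n => R₁ - δ n - (R₀ + δ n)) atTop (𝓝 (R₁ - R₀)) := hyt.sub hxt
  have hpow : ∀ {z : ℕ → ℝ} {z₀ : ℝ}, Tendsto z atTop (𝓝 z₀) → (∀ n, z n ∈ interior J) → z₀ ∈ J →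
      Tendsto (fun n => h (z n) ^ (1 / (N - 1))) atTop (𝓝 (h z₀ ^ (1 / (N - 1)))) := by
    intro z z₀ hz hzJ hz₀
    have h1 : Tendsto (fun n => h (z n)) atTop (𝓝 (h z₀)) :=
      (hh z₀ hz₀).tendsto.comp
        (tendsto_nhdsWithin_iff.2 ⟨hz, Eventually.of_forall fun n => interior_subset (hzJ n)⟩)
    exact (Real.continuousAt_rpow_const _ _ (Or.inr hp.le)).tendsto.comp h1
  have hlt : ∀ n, K * (R₁ - δ n - (R₀ + δ n)) ^ 2 < (N - 1) * Real.pi ^ 2 := fun n =>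
    dist_lt_of_intervalIneq hN hI hO hOc hhO hpos hw (hx n) (hy n) (hxy n).le
  have hle : K * (R₁ - R₀) ^ 2 ≤ (N - 1) * Real.pi ^ 2 :=
    le_of_tendsto ((hdt.pow 2).const_mul K) (Eventually.of_forall fun n => (hlt n).le)
  rcases hle.eq_or_lt with heq | hlt'
  · have hK : 0 < K := by
      refine pos_of_mul_pos_left (b := (R₁ - R₀) ^ 2) ?_ (by positivity)
      rw [heq]; have := Real.pi_pos; positivity
    have hs : 0 < Real.sqrt (K / (N - 1)) := Real.sqrt_pos.2 (div_pos hK hn)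
    have hpi : (R₁ - R₀) * Real.sqrt (K / (N - 1)) = Real.pi := by
      refine (pow_left_inj₀ (by positivity) Real.pi_pos.le two_ne_zero).1 ?_
      rw [mul_pow, Real.sq_sqrt (div_pos hK hn).le, ← mul_div_assoc, div_eq_iff hn.ne']
      linarith
    -- at time `1/2` the interior inequality reads `sin(φ/2) (h^p + h^p) ≤ sin φ · h_{1/2}^p`
    have hmid : ∀ n, Real.sin (1 / 2 * (R₁ - δ n - (R₀ + δ n)) * Real.sqrt (K / (N - 1)))
          * (h (R₀ + δ n) ^ (1 / (N - 1)) + h (R₁ - δ n) ^ (1 / (N - 1)))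
        ≤ Real.sin ((R₁ - δ n - (R₀ + δ n)) * Real.sqrt (K / (N - 1)))
          * h (1 / 2 * R₀ + 1 / 2 * R₁) ^ (1 / (N - 1)) := by
      intro n
      have hd := density_interior hN hI hO hOc hhO hpos hw (hx n) (hy n) (hxy n) (t := 1 / 2)
        (by norm_num) (by norm_num)
      have hd0 : 0 < R₁ - δ n - (R₀ + δ n) := sub_pos.2 (hxy n)
      have hphi : (R₁ - δ n - (R₀ + δ n)) * Real.sqrt (K / (N - 1)) < Real.pi := by
        rw [← hpi]
        exact mul_lt_mul_of_pos_right (by linarith [hδ0 n]) hs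
      have hsin : 0 < Real.sin ((R₁ - δ n - (R₀ + δ n)) * Real.sqrt (K / (N - 1))) :=
        Real.sin_pos_of_pos_of_lt_pi (by positivity) hphi
      have hsin2 : 0 ≤ Real.sin (1 / 2 * (R₁ - δ n - (R₀ + δ n)) * Real.sqrt (K / (N - 1))) :=
        Real.sin_nonneg_of_nonneg_of_le_pi (by positivity) (by nlinarith)
      have hKd : 0 < K * (R₁ - δ n - (R₀ + δ n)) ^ 2 := by positivity
      have h0 := hpos _ (hx n)
      have h1 := hpos _ (hy n)
      have hm : 0 < h (1 / 2 * R₀ + 1 / 2 * R₁) := hpos _ (hIoo ⟨by linarith, by linarith⟩)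
      rw [show (1 - 1 / 2 : ℝ) = 1 / 2 by norm_num,
        show 1 / 2 * (R₀ + δ n) + 1 / 2 * (R₁ - δ n) = 1 / 2 * R₀ + 1 / 2 * R₁ by ring,
        sigmaCoef, if_neg (not_le.2 (hlt n)), if_pos hKd, ← mul_add,
        ← ENNReal.ofReal_add (by positivity) (by positivity),
        ← ENNReal.ofReal_mul (div_nonneg hsin2 hsin.le),
        ENNReal.ofReal_le_ofReal_iff (by positivity), div_mul_eq_mul_div, div_le_iff₀ hsin] at hd
      linarith
    have hlim : Real.sin (1 / 2 * (R₁ - R₀) * Real.sqrt (K / (N - 1)))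
          * (h R₀ ^ (1 / (N - 1)) + h R₁ ^ (1 / (N - 1)))
        ≤ Real.sin ((R₁ - R₀) * Real.sqrt (K / (N - 1)))
          * h (1 / 2 * R₀ + 1 / 2 * R₁) ^ (1 / (N - 1)) := by
      exact le_of_tendsto_of_tendsto'
        (((Real.continuous_sin.tendsto _).comp ((hdt.const_mul _).mul_const _)).mul
          ((hpow hxt hx hR₀).add (hpow hyt hy hR₁)))
        (((Real.continuous_sin.tendsto _).comp (hdt.mul_const _)).mul_const _) hmid
    rw [mul_assoc, hpi, Real.sin_pi, zero_mul, show 1 / 2 * Real.pi = Real.pi / 2 by ring,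
      Real.sin_pi_div_two, one_mul] at hlim
    have hnn : ∀ {z : ℕ → ℝ} {z₀ : ℝ}, Tendsto z atTop (𝓝 z₀) → (∀ n, z n ∈ interior J) → z₀ ∈ J →
        0 ≤ h z₀ ^ (1 / (N - 1)) := fun hz hzJ hz₀ =>
      ge_of_tendsto' (hpow hz hzJ hz₀) fun n => (Real.rpow_pos_of_pos (hpos _ (hzJ n)) _).le
    have hz0 := hnn hxt hx hR₀
    have hz1 := hnn hyt hy hR₁
    rw [ENNReal.ofReal_of_nonpos (by linarith), ENNReal.ofReal_of_nonpos (by linarith)]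
    simp
  · rcases ht.1.eq_or_lt with rfl | ht0
    · rw [sub_zero, sigmaCoef_zero_time hlt', sigmaCoef_one_time hn hθ.le hlt']
      simp
    rcases ht.2.eq_or_lt with rfl | ht1
    · rw [sub_self, sigmaCoef_zero_time hlt', sigmaCoef_one_time hn hθ.le hlt']
      simp
    have hσ : ∀ {s : ℝ}, 0 < s → s < 1 →
        Tendsto (fun n => sigmaCoef K (N - 1) s (R₁ - δ n - (R₀ + δ n))) atTop
          (𝓝 (sigmaCoef K (N - 1) s (R₁ - R₀))) ∧ sigmaCoef K (N - 1) s (R₁ - R₀) ≠ ∞ := by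
      intro s hs hs1
      obtain ⟨r, hrc, -, hr⟩ := exists_sigmaCoef_eq hn hs hs1 hθ hlt'
      have hpt : Tendsto (fun n => ((N - 1, s, R₁ - δ n - (R₀ + δ n)) : ℝ × ℝ × ℝ)) atTop
          (𝓝 (N - 1, s, R₁ - R₀)) :=
        tendsto_const_nhds.prodMk_nhds (tendsto_const_nhds.prodMk_nhds hdt)
      have h0 := hr.self_of_nhds
      simp only at h0
      rw [h0]
      refine ⟨(ENNReal.tendsto_ofReal (hrc.tendsto.comp hpt)).congr' ?_, ENNReal.ofReal_ne_top⟩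
      filter_upwards [hpt.eventually hr] with n hn using hn.symm
    have hσ₀ := hσ (s := 1 - t) (by linarith) (by linarith)
    have hσ₁ := hσ ht0 ht1
    have hmem : (1 - t) * R₀ + t * R₁ ∈ J := hJ hR₀ hR₁ (by linarith) ht0.le (by ring)
    refine le_of_tendsto_of_tendsto'
      ((ENNReal.Tendsto.mul hσ₀.1 (Or.inr ENNReal.ofReal_ne_top)
        (ENNReal.tendsto_ofReal (hpow hxt hx hR₀)) (Or.inr hσ₀.2)).add
      (ENNReal.Tendsto.mul hσ₁.1 (Or.inr ENNReal.ofReal_ne_top)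
        (ENNReal.tendsto_ofReal (hpow hyt hy hR₁)) (Or.inr hσ₁.2)))
      (ENNReal.tendsto_ofReal (hpow (z := fun n => (1 - t) * (R₀ + δ n) + t * (R₁ - δ n))
        ((hxt.const_mul _).add (hyt.const_mul _)) (fun n => ?_) hmem))
      (fun n => density_interior hN hI hO hOc hhO hpos hw (hx n) (hy n) (hxy n) ht0 ht1)
    exact hOc (hx n) (hy n) (by linarith) ht0.le (by ring)

end OneD

end

/-! ### Conclusion on a ray -/

section

open ProbabilityTheory

section Ray
variable {X : Type*} [MetricSpace X] [MeasurableSpace X]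
  [SecondCountableTopology X] [BorelSpace X] {m : Measure X} {u : X → ℝ}

/-- Along the ray through `α`, the function `-u` is the arclength parameter up to a constant. -/
theorem RaySetting.exists_shift (S : RaySetting m u) {α : X} (hα : α ∈ S.Q) :
    ∃ c : ℝ, ∀ s ∈ S.dom α, -u (S.g α s) = s + c := by
  rcases (S.dom α).eq_empty_or_nonempty with he | ⟨s₀, hs₀⟩
  · exact ⟨0, by simp [he]⟩
  refine ⟨-u (S.g α s₀) - s₀, fun s hs => ?_⟩
  rcases le_total s s₀ with hle | hle
  · have h1 : u (S.g α s) - u (S.g α s₀) = dist (S.g α s) (S.g α s₀) :=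
      S.hggamma α hα s hs s₀ hs₀ hle
    rw [S.hgisom α hα s hs s₀ hs₀, abs_of_nonpos (by linarith)] at h1
    linarith
  · have h1 : u (S.g α s₀) - u (S.g α s) = dist (S.g α s₀) (S.g α s) :=
      S.hggamma α hα s₀ hs₀ s hs hle
    rw [S.hgisom α hα s₀ hs₀ s hs, abs_of_nonpos (by linarith)] at h1
    linarith

/-- The domain interval of a ray, translated so that its parameter is `-u`. -/
def shiftDom (J : Set ℝ) (c : ℝ) : Set ℝ := {x | x - c ∈ J}

/-- The density of the image of a conditional measure under `-u`. -/
def shiftDensity (J : Set ℝ) (c : ℝ) (h : ℝ → ℝ) : ℝ → ℝ≥0∞ :=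
  (shiftDom J c).indicator fun x => ENNReal.ofReal (h (x - c))

theorem map_add_withDensity (J : Set ℝ) (hJ : MeasurableSet J) (c : ℝ) (h : ℝ → ℝ) :
    ((volume.restrict J).withDensity fun r => ENNReal.ofReal (h r)).map (fun s => s + c) =
      volume.withDensity (shiftDensity J c h) := by
  ext A hA
  have hm : Measurable fun s : ℝ => s + c := by fun_prop
  rw [Measure.map_apply hm hA, withDensity_apply _ (hm hA), withDensity_apply _ hA,
    Measure.restrict_restrict (hm hA), ← lintegral_indicator ((hm hA).inter hJ),
    ← lintegral_indicator hA]
  refine Eq.trans ?_ (lintegral_add_right_eq_self (A.indicator (shiftDensity J c h)) c)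
  refine lintegral_congr fun x => ?_
  by_cases h1 : x + c ∈ A <;> by_cases h2 : x ∈ J <;>
    simp [indicator, shiftDensity, shiftDom, h1, h2]

theorem measurable_shiftDensity {J : Set ℝ} (hJ : Convex ℝ J) (c : ℝ) {h : ℝ → ℝ}
    (hh : ContinuousOn h J) : Measurable (shiftDensity J c h) := by
  classical
  have hJm : MeasurableSet (shiftDom J c) :=
    (show Measurable fun x : ℝ => x - c by fun_prop) hJ.ordConnected.measurableSet
  rw [shiftDensity, ← piecewise_eq_indicator]
  refine ContinuousOn.measurable_piecewise ?_ continuousOn_const hJm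
  exact ENNReal.continuous_ofReal.comp_continuousOn
    (hh.comp (by fun_prop) fun x hx => hx)

theorem RaySetting.map_neg_u (S : RaySetting m u) (hu : Continuous u) {α : X} (hα : α ∈ S.Q)
    {c : ℝ} (hc : ∀ s ∈ S.dom α, -u (S.g α s) = s + c) :
    (S.mα α).map (fun x => -u x) = volume.withDensity (shiftDensity (S.dom α) c (S.h α)) := by
  have hJm : MeasurableSet (S.dom α) := (S.hdomconn α hα).measurableSet
  rw [S.hmα α hα, Measure.map_map (show Measurable fun x => -u x from hu.measurable.neg) (S.hgmeas α hα),
    ← map_add_withDensity _ hJm]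
  refine Measure.map_congr ?_
  refine (withDensity_absolutelyContinuous _ _).ae_le ?_
  exact (ae_restrict_iff' hJm).2 (ae_of_all _ fun s hs => hc s hs)

variable [CompleteSpace X]

/-- The conclusion on a single ray. -/
theorem RaySetting.ray_cd [IsProbabilityMeasure m] {K N : ℝ} (hN : 1 < N) (S : RaySetting m u)
    (hu : LipschitzWith 1 u) {α : X} (hα : α ∈ S.Q) (hprob : IsProbabilityMeasure (S.mα α))
    (hI : IntervalIneq K N ((S.mα α).map fun x => -u x))
    (hcont : ContinuousOn (S.h α) (S.dom α)) (hpos : ∀ r ∈ interior (S.dom α), 0 < S.h α r) :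
    CD K N ((S.mα α).comap (Subtype.val : {y | (α, y) ∈ Rub u} → X)) ∧
      ∀ R0 ∈ S.dom α, ∀ R1 ∈ S.dom α, R0 ≤ R1 → ∀ t ∈ Icc (0:ℝ) 1,
        sigmaCoef K (N - 1) (1 - t) (R1 - R0) * ENNReal.ofReal (S.h α R0 ^ (1 / (N - 1)))
          + sigmaCoef K (N - 1) t (R1 - R0) * ENNReal.ofReal (S.h α R1 ^ (1 / (N - 1)))
          ≤ ENNReal.ofReal (S.h α ((1 - t) * R0 + t * R1) ^ (1 / (N - 1))) := by
  obtain ⟨c, hc⟩ := S.exists_shift hα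
  have hmapu := S.map_neg_u hu.continuous hα hc
  rw [hmapu] at hI
  set J := S.dom α with hJdef
  set h' : ℝ → ℝ := fun x => S.h α (x - c) with hh'
  have hJc : Convex ℝ J := (S.hdomconn α hα).convex
  have hJ'c : Convex ℝ (shiftDom J c) := by
    intro x hx y hy a b ha hb hab
    have := hJc hx hy ha hb hab
    simp only [shiftDom, mem_ofPred_eq, smul_eq_mul] at *
    convert this using 1
    linear_combination c * hab
  have hJ'm : MeasurableSet (shiftDom J c) := hJ'c.ordConnected.measurableSet
  have hcont' : ContinuousOn h' (shiftDom J c) := hcont.comp (by fun_prop) fun x hx => hx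
  have hInt : ∀ x ∈ interior (shiftDom J c), x - c ∈ interior J := by
    intro x hx
    have : interior (shiftDom J c) = (fun x => x - c) ⁻¹' interior J :=
      ((Homeomorph.subRight c).preimage_interior J).symm
    rw [this] at hx
    exact hx
  have hpos' : ∀ x ∈ interior (shiftDom J c), 0 < h' x := fun x hx => hpos _ (hInt x hx)
  have hw' : ∀ x ∈ interior (shiftDom J c), shiftDensity J c (S.h α) x = ENNReal.ofReal (h' x) :=
    fun x hx => indicator_of_mem (interior_subset hx) _
  refine ⟨?_, ?_⟩
  · have hray : MeasurableSet {y | (α, y) ∈ Rub u} := S.measurableSet_ray hα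
    have hrepr : ∀ y : {y | (α, y) ∈ Rub u}, ∃ s ∈ J, S.g α s = y := by
      intro y
      have : (y : X) ∈ S.g α '' S.dom α := by rw [S.hgonto α hα]; exact y.2
      exact this
    have hiso : Isometry fun y : {y | (α, y) ∈ Rub u} => -u y := by
      refine Isometry.of_dist_eq fun y y' => ?_
      obtain ⟨s, hs, hsy⟩ := hrepr y
      obtain ⟨s', hs', hsy'⟩ := hrepr y'
      rw [Subtype.dist_eq, ← hsy, ← hsy', hc s hs, hc s' hs', S.hgisom α hα s hs s' hs',
        Real.dist_eq]
      congr 1; ring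
    have hrange : range (fun y : {y | (α, y) ∈ Rub u} => -u y) = shiftDom J c := by
      ext x
      constructor
      · rintro ⟨y, rfl⟩
        obtain ⟨s, hs, hsy⟩ := hrepr y
        simp only [shiftDom, mem_ofPred_eq, ← hsy, hc s hs, add_sub_cancel_right]
        exact hs
      · intro hx
        have hy : S.g α (x - c) ∈ {y | (α, y) ∈ Rub u} := by
          rw [← S.hgonto α hα]; exact ⟨_, hx, rfl⟩
        exact ⟨⟨_, hy⟩, by simp [hc _ hx]⟩
    have hfin : IsFiniteMeasure
        ((S.mα α).comap (Subtype.val : {y | (α, y) ∈ Rub u} → X)) := by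
      refine ⟨?_⟩
      rw [(MeasurableEmbedding.subtype_coe hray).comap_apply]
      exact measure_lt_top _ _
    have hmap : ((S.mα α).comap (Subtype.val : {y | (α, y) ∈ Rub u} → X)).map
        (fun y : {y | (α, y) ∈ Rub u} => -u y) =
        volume.withDensity (shiftDensity J c (S.h α)) := by
      rw [← hmapu]
      have : (fun y : {y | (α, y) ∈ Rub u} => -u y) = (fun x => -u x) ∘ Subtype.val := rfl
      have hum : Measurable fun x => -u x := hu.continuous.measurable.neg
      rw [this, ← Measure.map_map hum measurable_subtype_coe,
        map_comap_subtype_coe hray, Measure.restrict_eq_self_of_ae_mem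
          (s := {y | (α, y) ∈ Rub u}) (S.ae_mem_ray hα)]
    refine cd_of_key hN hiso (hrange ▸ hJ'm) (measurable_shiftDensity hJc c hcont) hmap
      hJ'c.interior isOpen_interior.measurableSet (hrange ▸ interior_subset) ?_ hw' hpos' ?_
    · rw [withDensity_apply _ isOpen_interior.measurableSet.compl, shiftDensity,
        lintegral_indicator hJ'm, Measure.restrict_restrict hJ'm]
      refine setLIntegral_measure_zero _ _ (measure_mono_null ?_ (hJ'c.addHaar_frontier volume))
      exact fun x hx => ⟨subset_closure hx.1, hx.2⟩
    · exact fun x₀ hx₀ x₁ hx₁ t ht N' hN' d₀ d₁ hd₀ hd₁ =>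
        key_full hN hI isOpen_interior hJ'c.interior (hcont'.mono interior_subset) hpos' hw' hx₀ hx₁
          ht hN' hd₀ hd₁
  · intro R₀ hR₀ R₁ hR₁ h01 t ht
    have := density_full hN hI hJ'c hcont' hpos' hw' (R₀ := R₀ + c) (R₁ := R₁ + c)
      (by simpa [shiftDom] using hR₀) (by simpa [shiftDom] using hR₁) (by linarith) ht
    simp only [hh', add_sub_cancel_right, add_sub_add_right_eq_sub] at this
    rwa [show (1 - t) * (R₀ + c) + t * (R₁ + c) - c = (1 - t) * R₀ + t * R₁ by ring] at this

end Ray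

end

/-- **Proposition 3.5.** In the ray-map setting for a `CD₁(K,N)` essentially non-branching
space, for `q`-a.e. `α` the one-dimensional metric measure space `(X_α, d, m_α)` satisfies
`CD(K,N)`; equivalently, the density `h_α` satisfies the `σ`-concavity inequality
`h_α((1-t)R₀ + tR₁)^{1/(N-1)} ≥ σ^{(1-t)}_{K,N-1}(R₁-R₀) h_α(R₀)^{1/(N-1)}
 + σ^{(t)}_{K,N-1}(R₁-R₀) h_α(R₁)^{1/(N-1)}` on its domain interval. -/
theorem conditional_measures_cd
    {X : Type*} [MetricSpace X] [CompleteSpace X] [SecondCountableTopology X]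
    [MeasurableSpace X] [BorelSpace X]
    [MeasurableSpace C(unitInterval, X)] [BorelSpace C(unitInterval, X)]
    (m : Measure X) [IsProbabilityMeasure m] [m.IsOpenPosMeasure]
    (K N : ℝ) (hN : 1 < N)
    (henb : EssentiallyNonBranching m)
    (hcd : CDone K N m)
    (u : X → ℝ) (hu : LipschitzWith 1 u)
    (S : RaySetting m u)
    (hcont : ∀ᵐ α ∂S.q, ContinuousOn (S.h α) (S.dom α) ∧
      ∀ r ∈ interior (S.dom α), 0 < S.h α r) :
    ∀ᵐ α ∂S.q,
      CD K N ((S.mα α).comap (Subtype.val : {y | (α, y) ∈ Rub u} → X)) ∧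
      ∀ R0 ∈ S.dom α, ∀ R1 ∈ S.dom α, R0 ≤ R1 → ∀ t ∈ Icc (0:ℝ) 1,
        sigmaCoef K (N - 1) (1 - t) (R1 - R0) * ENNReal.ofReal (S.h α R0 ^ (1 / (N - 1)))
          + sigmaCoef K (N - 1) t (R1 - R0) * ENNReal.ofReal (S.h α R1 ^ (1 / (N - 1)))
          ≤ ENNReal.ofReal (S.h α ((1 - t) * R0 + t * R1) ^ (1 / (N - 1))) := by
  obtain ⟨κ, hκ, hκα, hdis, hae⟩ := S.exists_kernel hu.continuous
  have H : IsRayKernel m u S.f S.q κ :=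
    { markov := hκ
      finite := by rw [S.hq]; infer_instance
      hT := nullMeasurableSet_Tub m hu.continuous
      hf := S.hfmeas
      hquot := S.hfquot
      hfid := fun x hx => by
        have hfx := S.hfQ x hx
        exact (S.hfquot x hx _ (S.hQsub hfx)).1 (S.hfid _ hfx).symm
      hdis := hdis
      hae := hae }
  filter_upwards [ae_intervalIneq hN hcd hu H, hκα, S.ae_mem_Q hu.continuous, S.hprob, hcont]
    with α hI hκe hα hp hc
  rw [← hκe] at hI
  exact S.ray_cd hN hu hα hp hI hc.1 hc.2

end CDNote
end
end

section
/- Let K ∈ ℝ, N > 1, L > 0 and let h : [0,L] → (0,∞) be continuous. Suppose that for all R0, R1 ∈ [0,L] with R0 < R1 and (if K > 0) K(R1−R0)² < (N−1)π², all L0, L1 > 0 and all t ∈ [0,1], one has ((1−t)L0 + tL1)^{1/N} · h((1−t)R0 + tR1)^{1/N} ≥ L0^{1/N} · τ^{(1−t)}_{K,N}(R1−R0) · h(R0)^{1/N} + L1^{1/N} · τ^{(t)}_{K,N}(R1−R0) · h(R1)^{1/N}. Then for all R0, R1 ∈ [0,L] with R0 ≤ R1 and (if K > 0) K(R1−R0)²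 < (N−1)π², and all t ∈ [0,1], one has h((1−t)R0 + tR1)^{1/(N−1)} ≥ σ^{(1−t)}_{K,N−1}(R1−R0) · h(R0)^{1/(N−1)} + σ^{(t)}_{K,N−1}(R1−R0) · h(R1)^{1/(N−1)}. -/
/-!
The weights `L₀`, `L₁` are free in the `τ`-inequality, so they can be chosen optimally. For
`0 < t < 1` and `R₀ < R₁` put `A = σ^{(1-t)} h(R₀)^{1/(N-1)}`, `B = σ^{(t)} h(R₁)^{1/(N-1)}` and
take `L₀ = A / (1 - t)`, `L₁ = B / t`. The two terms on the left become exactly `A` and `B`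
(`weighted_tau_term`), and the inequality reads `A + B ≤ (A + B)^{1/N} h(R_t)^{1/N}`, where
`R_t = (1 - t) R₀ + t R₁`; this rearranges to `A + B ≤ h(R_t)^{1/(N-1)}`
(`le_rpow_of_le_rpow_mul`). The choice is admissible because the `σ`-coefficients are finite and
positive for `0 < t < 1` (`exists_real_sigmaCoef`). For `t ∈ {0, 1}` or `R₀ = R₁` the conclusion
is an equality.
-/

open MeasureTheory Set ENNReal

noncomputable section

namespace CDNote

/-- For `0 < θ` below the critical length, `σ` is given by a real function of `t` which joins
`0` to `1` and is positive in between. -/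
lemma exists_real_sigmaCoef (K M θ : ℝ) (hM : 0 < M) (hθ : 0 < θ)
    (hK : K * θ ^ 2 < M * Real.pi ^ 2) :
    ∃ s : ℝ → ℝ, s 0 = 0 ∧ s 1 = 1 ∧ (∀ t, 0 < t → t < 1 → 0 < s t) ∧
      ∀ t, sigmaCoef K M t θ = ENNReal.ofReal (s t) := by
  have hθ2 : 0 < θ ^ 2 := by positivity
  rcases lt_trichotomy K 0 with hneg | rfl | hKpos
  · have hω : 0 < Real.sqrt (-K / M) := Real.sqrt_pos.2 (div_pos (by linarith) hM)
    have h1 : 0 < Real.sinh (θ * Real.sqrt (-K / M)) := Real.sinh_pos_iff.2 (by positivity)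
    have hK2 : K * θ ^ 2 < 0 := mul_neg_of_neg_of_pos hneg hθ2
    refine ⟨fun t => Real.sinh (t * θ * Real.sqrt (-K / M)) / Real.sinh (θ * Real.sqrt (-K / M)),
      by simp, by simp [h1.ne'], fun t ht _ => ?_, fun t => ?_⟩
    · exact div_pos (Real.sinh_pos_iff.2 (by positivity)) h1
    · rw [sigmaCoef, if_neg (not_le.2 hK), if_neg hK2.not_gt, if_neg hK2.ne]
  · refine ⟨fun t => t, rfl, rfl, fun t ht _ => ht, fun t => ?_⟩
    rw [sigmaCoef, if_neg (not_le.2 hK), if_neg (by simp), if_pos (by simp)]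
  · have hω : 0 < Real.sqrt (K / M) := Real.sqrt_pos.2 (div_pos hKpos hM)
    have hlt : θ * Real.sqrt (K / M) < Real.pi := by
      refine lt_of_pow_lt_pow_left₀ 2 Real.pi_pos.le ?_
      rw [mul_pow, Real.sq_sqrt (div_pos hKpos hM).le, ← mul_div_assoc, div_lt_iff₀ hM]
      linarith
    have hp : 0 < θ * Real.sqrt (K / M) := by positivity
    have h1 : 0 < Real.sin (θ * Real.sqrt (K / M)) := Real.sin_pos_of_pos_of_lt_pi hp hlt
    refine ⟨fun t => Real.sin (t * θ * Real.sqrt (K / M)) / Real.sin (θ * Real.sqrt (K / M)),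
      by simp, by simp [h1.ne'], fun t ht ht1 => ?_, fun t => ?_⟩
    · refine div_pos (Real.sin_pos_of_pos_of_lt_pi (by positivity) ?_) h1
      rw [mul_assoc]
      nlinarith
    · rw [sigmaCoef, if_neg (not_le.2 hK), if_pos (mul_pos hKpos hθ2)]

/-- With the weight `a * y ^ (1 / (N - 1)) / x` in place of `L₀` or `L₁`, each term of the
`τ`-inequality is the corresponding term of the `σ`-inequality. -/
lemma weighted_tau_term (N x a y : ℝ) (hN : 1 < N) (hx : 0 < x) (ha : 0 < a) (hy : 0 < y) :
    (a * y ^ (1 / (N - 1)) / x) ^ (1 / N) * (x ^ (1 / N) * a ^ (1 - 1 / N)) * y ^ (1 / N)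
      = a * y ^ (1 / (N - 1)) := by
  have hN0 : N ≠ 0 := by linarith
  have hN1 : N - 1 ≠ 0 := by linarith
  have hyp : 0 < y ^ (1 / (N - 1)) := Real.rpow_pos_of_pos hy _
  rw [Real.div_rpow (by positivity) hx.le, Real.mul_rpow ha.le hyp.le, ← Real.rpow_mul hy.le]
  have e1 : a ^ (1 / N) * a ^ (1 - 1 / N) = a := by
    rw [← Real.rpow_add ha]; simp
  have e2 : y ^ (1 / (N - 1) * (1 / N)) * y ^ (1 / N) = y ^ (1 / (N - 1)) := by
    rw [← Real.rpow_add hy]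
    congr 1
    field_simp
    ring
  have hxp : x ^ (1 / N) ≠ 0 := (Real.rpow_pos_of_pos hx _).ne'
  calc _ = (a ^ (1 / N) * a ^ (1 - 1 / N)) * (y ^ (1 / (N - 1) * (1 / N)) * y ^ (1 / N)) := by
        field_simp
    _ = _ := by rw [e1, e2]

lemma le_rpow_of_le_rpow_mul (N S z : ℝ) (hN : 1 < N) (hS : 0 < S) (hz : 0 < z)
    (hle : S ≤ S ^ (1 / N) * z ^ (1 / N)) : S ≤ z ^ (1 / (N - 1)) := by
  have hN0 : 0 < N := by linarith
  have hN1 : 0 < N - 1 := by linarith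
  have h1 : S ^ N ≤ S * z := by
    have := Real.rpow_le_rpow hS.le hle hN0.le
    rwa [← Real.mul_rpow hS.le hz.le, ← Real.rpow_mul (by positivity),
      one_div_mul_cancel hN0.ne', Real.rpow_one] at this
  have h2 : S ^ (N - 1) ≤ z := by
    rw [Real.rpow_sub_one hS.ne', div_le_iff₀ hS]
    linarith
  have h3 := Real.rpow_le_rpow (by positivity) h2 (one_div_pos.2 hN1).le
  rwa [← Real.rpow_mul hS.le, mul_one_div_cancel hN1.ne', Real.rpow_one] at h3

/-- From the `(L₀, L₁)`-family of `τ`-inequalities for a continuous positive density `h` one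
deduces the `σ`-concavity inequality for `h^{1/(N-1)}`. -/
theorem sigma_concavity_of_tau_inequalities
    (K N L : ℝ) (hN : 1 < N) (hL : 0 < L)
    (h : ℝ → ℝ) (hcont : ContinuousOn h (Icc 0 L)) (hpos : ∀ x ∈ Icc (0:ℝ) L, 0 < h x)
    (H : ∀ R0 R1 : ℝ, R0 ∈ Icc (0:ℝ) L → R1 ∈ Icc (0:ℝ) L → R0 < R1 →
      (0 < K → K * (R1 - R0) ^ 2 < (N - 1) * Real.pi ^ 2) →
      ∀ L0 L1 : ℝ, 0 < L0 → 0 < L1 → ∀ t ∈ Icc (0:ℝ) 1,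
        ENNReal.ofReal (L0 ^ (1 / N)) * tauCoef K N (1 - t) (R1 - R0)
            * ENNReal.ofReal (h R0 ^ (1 / N))
          + ENNReal.ofReal (L1 ^ (1 / N)) * tauCoef K N t (R1 - R0)
            * ENNReal.ofReal (h R1 ^ (1 / N))
          ≤ ENNReal.ofReal ((((1 - t) * L0 + t * L1) ^ (1 / N))
              * (h ((1 - t) * R0 + t * R1) ^ (1 / N)))) :
    ∀ R0 R1 : ℝ, R0 ∈ Icc (0:ℝ) L → R1 ∈ Icc (0:ℝ) L → R0 ≤ R1 →
      (0 < K → K * (R1 - R0) ^ 2 < (N - 1) * Real.pi ^ 2) →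
      ∀ t ∈ Icc (0:ℝ) 1,
        sigmaCoef K (N - 1) (1 - t) (R1 - R0) * ENNReal.ofReal (h R0 ^ (1 / (N - 1)))
          + sigmaCoef K (N - 1) t (R1 - R0) * ENNReal.ofReal (h R1 ^ (1 / (N - 1)))
          ≤ ENNReal.ofReal (h ((1 - t) * R0 + t * R1) ^ (1 / (N - 1))) := by
  intro R0 R1 hR0 hR1 hle hK t ht
  have hM : 0 < N - 1 := by linarith
  have hN0 : 0 < N := by linarith
  obtain ⟨ht0, ht1⟩ := ht
  have h0 := hpos R0 hR0
  have h1 := hpos R1 hR1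
  rcases hle.eq_or_lt with rfl | hlt
  · have hR : (1 - t) * R0 + t * R0 = R0 := by ring
    have hσ : ∀ u, sigmaCoef K (N - 1) u (R0 - R0) = ENNReal.ofReal u := by
      intro u
      have hπ : 0 < (N - 1) * Real.pi ^ 2 := by positivity
      simp [sigmaCoef, not_le.2 hπ]
    rw [hR, hσ, hσ, ← add_mul, ← ENNReal.ofReal_add (by linarith) ht0]
    simp
  have hK' : K * (R1 - R0) ^ 2 < (N - 1) * Real.pi ^ 2 := by
    rcases le_or_gt K 0 with hK0 | hK0
    · have : 0 < (N - 1) * Real.pi ^ 2 := by positivity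
      nlinarith [sq_nonneg (R1 - R0)]
    · exact hK hK0
  obtain ⟨s, s0, s1, spos, hs⟩ := exists_real_sigmaCoef K (N - 1) (R1 - R0) hM (by linarith) hK'
  rcases ht0.eq_or_lt with rfl | ht0'
  · simp [hs, s0, s1]
  rcases ht1.eq_or_lt with rfl | ht1'
  · simp [hs, s0, s1]
  have hu : 0 < 1 - t := by linarith
  have hz : 0 < h ((1 - t) * R0 + t * R1) := by
    refine hpos _ ⟨?_, ?_⟩
    · have := mul_nonneg hu.le hR0.1
      have := mul_nonneg ht0 hR1.1
      linarith
    · have := mul_le_mul_of_nonneg_left hR0.2 hu.le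
      have := mul_le_mul_of_nonneg_left hR1.2 ht0
      linarith
  have ha := spos (1 - t) hu (by linarith)
  have hb := spos t ht0' ht1'
  have hA : 0 < s (1 - t) * h R0 ^ (1 / (N - 1)) := by positivity
  have hB : 0 < s t * h R1 ^ (1 / (N - 1)) := by positivity
  have key := H R0 R1 hR0 hR1 hlt hK (s (1 - t) * h R0 ^ (1 / (N - 1)) / (1 - t))
    (s t * h R1 ^ (1 / (N - 1)) / t) (by positivity) (by positivity) t ⟨ht0, ht1⟩
  have he : 0 ≤ 1 - 1 / N := by
    rw [sub_nonneg, div_le_one hN0]; exact hN.le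
  simp only [tauCoef, hs] at key ⊢
  rw [ENNReal.ofReal_rpow_of_nonneg ha.le he, ENNReal.ofReal_rpow_of_nonneg hb.le he,
    ← ENNReal.ofReal_mul (by positivity), ← ENNReal.ofReal_mul (by positivity),
    ← ENNReal.ofReal_mul (by positivity), ← ENNReal.ofReal_mul (by positivity),
    ← ENNReal.ofReal_mul (by positivity), ← ENNReal.ofReal_mul (by positivity),
    weighted_tau_term N _ _ _ hN hu ha h0, weighted_tau_term N _ _ _ hN ht0' hb h1,
    ← ENNReal.ofReal_add hA.le hB.le, mul_div_cancel₀ _ hu.ne', mul_div_cancel₀ _ ht0'.ne',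
    ENNReal.ofReal_le_ofReal_iff (by positivity)] at key
  rw [← ENNReal.ofReal_mul ha.le, ← ENNReal.ofReal_mul hb.le, ← ENNReal.ofReal_add hA.le hB.le]
  exact ENNReal.ofReal_le_ofReal (le_rpow_of_le_rpow_mul N _ _ hN (add_pos hA hB) hz key)

end CDNote
end
end
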